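/- arXiv:2605.22553 — 3 statements merged into one kernel-verified Lean document; each statement's English description precedes it below -/
import Mathlib

section
/- (Kühn–Osthus–Treglown.) For every graph H containing at least one edge and every η > 0, there exists an integer n₀ = n₀(H, η) such that if G is a graph on n ≥ n₀ vertices and d(x) + d(y) ≥ 2(1 − 1/χ_cr(H))·n for all distinct nonadjacent x, y ∈ V(G), then G has an H-tiling covering all but at most ηn vertices. -/
/-- `𝒯` is an `H`-tiling in `G`: a collection of pairwise vertex-disjoint
subgraphs of `G`, each isomorphic to `H`. -/
def IsTiling {W V : Type*} (H : SimpleGraph W) (G : SimpleGraph V)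
    (𝒯 : Finset (W → V)) : Prop :=
  (∀ f ∈ 𝒯, Function.Injective f ∧ ∀ a b : W, H.Adj a b → G.Adj (f a) (f b)) ∧
  ((𝒯 : Set (W → V)).Pairwise fun f g => Disjoint (Set.range f) (Set.range g))

/-- The set of vertices of `G` not covered by the tiling `𝒯`. -/
def untiled {W V : Type*} (𝒯 : Finset (W → V)) : Set V :=
  {v : V | ∀ f ∈ 𝒯, v ∉ Set.range f}

/-- `σ` is the minimum possible size of a colour class in a proper colouring
of `H` with `k` colours. -/
def IsMinColorClassSize {W : Type*} [Fintype W] (H : SimpleGraph W) (k σ : ℕ) : Prop :=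
  (∃ (c : H.Coloring (Fin k)) (i : Fin k),
      (Finset.univ.filter fun v => c v = i).card = σ) ∧
  ∀ (c : H.Coloring (Fin k)) (i : Fin k),
      σ ≤ (Finset.univ.filter fun v => c v = i).card

/-!
Fix a colouring of `H` with `k = r + 1` colours, and call one colour class the neck. The bottle with
neck weight `α` is an `(r + 1)`-clique in which `r` vertices have weight `1` and the last one has
weight `α`, the ratio of the neck to the average of the other classes. By Szemerédi's regularity
lemma the Ore-type condition passes, up to a small loss, to the reduced graph. By LP duality, an
almost perfect fractional tiling of the reduced graph by homomorphic images of `H` exists unless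
some weighting of its vertices makes every such image too heavy. Averaging over the colour classes,
it suffices to find a light bottle in every weighted graph with an Ore-type condition; this is an
induction on `r` inside the neighbourhood of a suitable light vertex. The fractional tiling is then
rounded, and each homomorphic image in the reduced graph is greedily embedded into regular pairs.
-/

section Bottle

open Finset

variable {ι : Type*} {R : SimpleGraph ι}

lemma exists_isNClique_of_card_filter_not_adj_le [DecidableRel R.Adj] {E : ℝ} (hE : 0 ≤ E)
    {q : ℕ} {X : Finset ι} (hX : ∀ x ∈ X, (#{z ∈ X | ¬R.Adj x z} : ℝ) ≤ E)
    (hq : q * E < #X) :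
    ∃ K ⊆ X, R.IsNClique (q + 1) K := by
  classical
  induction q generalizing X with
  | zero =>
    obtain ⟨x, hx⟩ : X.Nonempty := by simpa [card_pos] using hq
    exact ⟨{x}, by simpa using hx, by simp⟩
  | succ q ih =>
    push_cast at hq
    obtain ⟨x, hx⟩ : X.Nonempty := by
      rw [← card_pos, ← Nat.cast_pos (α := ℝ)]
      exact lt_of_le_of_lt (by positivity) hq
    have hsplit : (#{z ∈ X | R.Adj x z} : ℝ) + #{z ∈ X | ¬R.Adj x z} = #X := by
      exact_mod_cast card_filter_add_card_filter_not (s := X) (R.Adj x)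
    obtain ⟨K, hKX, hK⟩ := ih (X := {z ∈ X | R.Adj x z})
      (fun z hz ↦ le_trans
        (mod_cast card_le_card (filter_subset_filter _ (filter_subset _ _)))
        (hX z (mem_filter.mp hz).1))
      (by linarith [hX x hx])
    exact ⟨insert x K, insert_subset hx (hKX.trans (filter_subset _ _)),
      hK.insert fun z hz ↦ (mem_filter.mp (hKX hz)).2⟩

/-- Every bottle in `R[S]`, that is an `r`-clique `K` (its body) together with a vertex `u` (its
neck) adjacent to all of `K`, has weight at least `c` when the neck is weighted by `α`.
With `α = r σ / (h - σ)` this is the shape of `H` with its colour class of size `σ` on the neck. -/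
def HeavyBottles (R : SimpleGraph ι) (y : ι → ℝ) (α : ℝ) (r : ℕ) (c : ℝ) (S : Finset ι) : Prop :=
  ∀ K ⊆ S, ∀ u ∈ S, R.IsNClique r K → (∀ z ∈ K, R.Adj u z) → c ≤ ∑ z ∈ K, y z + α * y u

/-- The constant of the error term in `HeavyBottles.mul_sub_le_sum`. -/
noncomputable def bottleConst (α : ℝ) : ℕ → ℝ
  | 0 => 1 / α
  | r + 1 => (r + 2) * (1 + bottleConst α r)

variable {L S T : Finset ι} {D r : ℕ} {α c e χ : ℝ} {y : ι → ℝ}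

lemma HeavyBottles.mono (h : HeavyBottles R y α r c S) (hTS : T ⊆ S) : HeavyBottles R y α r c T :=
  fun K hK u hu ↦ h K (hK.trans hTS) u (hTS hu)

lemma HeavyBottles.link (h : HeavyBottles R y α (r + 1) c S) {v : ι} (hv : v ∈ S) (hTS : T ⊆ S)
    (hadj : ∀ z ∈ T, R.Adj v z) : HeavyBottles R y α r (c - y v) T := by
  classical
  intro K hK u hu hKr hKu
  have hvK : v ∉ K := fun hvK ↦ R.irrefl (hadj v (hK hvK))
  have := h (insert v K) (insert_subset hv (hK.trans hTS)) u (hTS hu)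
    (hKr.insert fun z hz ↦ hadj z (hK hz))
    (forall_mem_insert _ _ _ |>.mpr ⟨(hadj u hu).symm, hKu⟩)
  rw [sum_insert hvK] at this
  linarith

lemma mul_sub_div_le_sum (hχ : 0 < χ) (hc : 0 ≤ c) (hS : χ * D - e ≤ #S)
    (hy : ∀ z ∈ S, c / χ ≤ y z) : c * (D - e / χ) ≤ ∑ z ∈ S, y z :=
  calc c * (D - e / χ) = (χ * D - e) * (c / χ) := by field_simp
    _ ≤ #S * (c / χ) := by gcongr
    _ ≤ ∑ z ∈ S, y z := by simpa [nsmul_eq_mul] using card_nsmul_le_sum _ _ _ hy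

lemma bottleConst_pos (hα : 0 < α) (r : ℕ) : 0 < bottleConst α r := by
  induction r with
  | zero => rw [bottleConst]; positivity
  | succ r ih => rw [bottleConst]; positivity

variable [DecidableEq ι] [DecidableRel R.Adj]

/-- A robust, one-sided form of Ore's degree condition on `R[S]`, where `L` is the set of vertices
of low degree: a vertex outside `L` has at most `D` non-neighbours, and a vertex of `L` is adjacent
to all but at most `e` vertices of `L`. Every vertex counts as a non-neighbour of itself. -/
structure IsNearlyOre (R : SimpleGraph ι) [DecidableRel R.Adj] (L S : Finset ι) (D : ℕ) (e : ℝ) :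
    Prop where
  card_not_adj_le : ∀ x ∈ S, x ∉ L → #{z ∈ S | ¬R.Adj x z} ≤ D
  card_low_not_adj_le : ∀ x ∈ S, x ∈ L → (#{z ∈ S | z ∈ L ∧ ¬R.Adj x z} : ℝ) ≤ e

lemma IsNearlyOre.mono (h : IsNearlyOre R L S D e) (hTS : T ⊆ S) {e' : ℝ} (he : e ≤ e') :
    IsNearlyOre R L T D e' where
  card_not_adj_le x hx hxL :=
    (card_le_card (filter_subset_filter _ hTS)).trans (h.card_not_adj_le x (hTS hx) hxL)
  card_low_not_adj_le x hx hxL :=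
    le_trans (mod_cast card_le_card (filter_subset_filter _ hTS))
      ((h.card_low_not_adj_le x (hTS hx) hxL).trans he)

lemma IsNearlyOre.exists_subset_link (h : IsNearlyOre R L S D e) {v : ι} (hv : v ∈ S)
    (hvL : v ∉ L) : ∃ N ⊆ S, (∀ z ∈ N, R.Adj v z) ∧ #N = #S - D := by
  have hsplit := card_filter_add_card_filter_not (s := S) (R.Adj v)
  have hD := h.card_not_adj_le v hv hvL
  obtain ⟨N, hN, hcard⟩ := exists_subset_card_eq (s := {z ∈ S | R.Adj v z}) (n := #S - D) (by lia)
  exact ⟨N, hN.trans (filter_subset _ _), fun z hz ↦ (mem_filter.mp (hN hz)).2, hcard⟩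

-- Otherwise the light vertices of `L`, almost a clique, would contain a bottle of weight below `c`.
lemma HeavyBottles.card_light_le (h : HeavyBottles R y α r c S) (hα : 0 < α) (he : 0 ≤ e)
    (hO : IsNearlyOre R L S D e) : (#{z ∈ S | z ∈ L ∧ y z < c / (r + α)} : ℝ) ≤ r * e := by
  by_contra! hlt
  set X := {z ∈ S | z ∈ L ∧ y z < c / (r + α)}
  have hXnon (x) (hx : x ∈ X) : (#{z ∈ X | ¬R.Adj x z} : ℝ) ≤ e := by
    obtain ⟨hxS, hxL, -⟩ := mem_filter.mp hx
    refine le_trans ?_ (hO.card_low_not_adj_le x hxS hxL)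
    gcongr
    grind
  obtain ⟨K, hKX, hK⟩ := exists_isNClique_of_card_filter_not_adj_le he hXnon hlt
  have hlight (z) (hz : z ∈ K) : y z < c / (r + α) := (mem_filter.mp (hKX hz)).2.2
  have hKS : K ⊆ S := hKX.trans (filter_subset _ _)
  obtain ⟨u, hu⟩ : K.Nonempty := card_pos.mp (by rw [hK.card_eq]; lia)
  have hcard : #(K.erase u) = r := by rw [card_erase_of_mem hu, hK.card_eq, Nat.add_sub_cancel]
  have hbottle := h (K.erase u) ((erase_subset _ _).trans hKS) u (hKS hu)
    ⟨hK.isClique.subset (by simp), hcard⟩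
    fun z hz ↦ hK.isClique hu (mem_of_mem_erase hz) (ne_of_mem_erase hz).symm
  have hbody : ∑ z ∈ K.erase u, y z ≤ r * (c / (r + α)) := by
    simpa [hcard] using
      sum_le_card_nsmul (K.erase u) y _ fun z hz ↦ (hlight z (mem_of_mem_erase hz)).le
  have hneck : α * y u < α * (c / (r + α)) := by gcongr; exact hlight u hu
  have : r * (c / (r + α)) + α * (c / (r + α)) = c := by field_simp
  linarith

lemma HeavyBottles.exists_subset_low_heavy (h : HeavyBottles R y α r c S) (hα : 0 < α)
    (he : 0 ≤ e) (hO : IsNearlyOre R L S D e) :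
    ∃ S' ⊆ S, (∀ z ∈ S', z ∈ L → c / (r + α) ≤ y z) ∧ #S ≤ #S' + r * e := by
  refine ⟨{z ∈ S | ¬(z ∈ L ∧ y z < c / (r + α))}, filter_subset _ _, by grind, ?_⟩
  rw [← card_filter_add_card_filter_not (s := S) fun z ↦ z ∈ L ∧ y z < c / (r + α), Nat.cast_add]
  linarith [h.card_light_le hα he hO]

lemma IsNearlyOre.exists_link_le_sum (hO : IsNearlyOre R L S D e) (he : 0 ≤ e)
    (hS : D - e ≤ #S) {v : ι} (hv : v ∈ S) (hvL : v ∉ L) (hv0 : 0 ≤ y v)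
    (hmin : ∀ z ∈ S, y v ≤ y z) :
    ∃ N ⊆ S, (∀ z ∈ N, R.Adj v z) ∧ #S ≤ #N + D ∧
      (D - e) * y v + ∑ z ∈ N, y z ≤ ∑ z ∈ S, y z := by
  obtain ⟨N, hNS, hadj, hN⟩ := hO.exists_subset_link hv hvL
  refine ⟨N, hNS, hadj, by lia, ?_⟩
  have hcard : D - e ≤ #(S \ N) := by
    have := card_sdiff_add_card_eq_card hNS
    obtain hD | hD := le_total D #S
    · rw [show #(S \ N) = D by lia]
      linarith
    · rwa [show #(S \ N) = #S by lia]
  have hrest : (D - e) * y v ≤ ∑ z ∈ S \ N, y z :=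
    calc (D - e) * y v ≤ #(S \ N) * y v := by gcongr
      _ ≤ ∑ z ∈ S \ N, y z := by
        simpa [nsmul_eq_mul] using
          card_nsmul_le_sum _ _ _ fun z hz ↦ hmin z (sdiff_subset hz)
  linarith [sum_sdiff (f := y) hNS]

theorem HeavyBottles.mul_sub_le_sum (hα : 0 < α) (hy : ∀ z, 0 ≤ y z) (he : 0 ≤ e) (hc : 0 ≤ c)
    (hO : IsNearlyOre R L S D e) (hS : (r + α) * D - e ≤ #S) (hB : HeavyBottles R y α r c S) :
    c * (D - bottleConst α r * e) ≤ ∑ z ∈ S, y z := by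
  induction r generalizing S c e with
  | zero =>
    refine le_of_eq_of_le ?_ (mul_sub_div_le_sum (χ := α) hα hc (by simpa using hS) fun u hu ↦ ?_)
    · rw [bottleConst]; ring
    · rw [div_le_iff₀' hα]
      simpa using hB ∅ (empty_subset _) u hu (by simp) (by simp)
  | succ r ih =>
    obtain ⟨S', hS'S, hlow, hpurged⟩ := hB.exists_subset_low_heavy hα he hO
    push_cast at hS hlow hpurged
    have hS' : (r + 1 + α) * D - (r + 2) * e ≤ #S' := by linarith
    have hA := bottleConst_pos hα r
    have hχ : 1 ≤ r + 1 + α := by linarith [r.cast_nonneg (α := ℝ)]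
    refine le_trans ?_ (sum_le_sum_of_subset_of_nonneg hS'S fun z _ _ ↦ hy z)
    by_cases! hheavy : ∀ z ∈ S', c / (r + 1 + α) ≤ y z
    · refine le_trans ?_ (mul_sub_div_le_sum (by linarith) hc hS' hheavy)
      gcongr
      calc (r + 2) * e / (r + 1 + α) ≤ (r + 2) * e := div_le_self (by positivity) hχ
        _ ≤ (r + 2) * e * (1 + bottleConst α r) :=
          le_mul_of_one_le_right (by positivity) (by linarith)
        _ = bottleConst α (r + 1) * e := by rw [bottleConst]; ring
    · obtain ⟨z, hz, hzc⟩ := hheavy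
      obtain ⟨v, hv, hmin⟩ := exists_min_image S' y ⟨z, hz⟩
      have hvc : y v < c / (r + 1 + α) := (hmin z hz).trans_lt hzc
      have hvL : v ∉ L := fun hvL ↦ hvc.not_ge (hlow v hv hvL)
      have hO' : IsNearlyOre R L S' D ((r + 2) * e) :=
        hO.mono hS'S (le_mul_of_one_le_left he (by linarith [r.cast_nonneg (α := ℝ)]))
      have hD : (D : ℝ) ≤ (r + 1 + α) * D := le_mul_of_one_le_left D.cast_nonneg hχ
      obtain ⟨N, hNS', hadj, hN, hsum⟩ :=
        hO'.exists_link_le_sum (by positivity) (by linarith) hv hvL (hy v) hmin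
      have hN : (#S' : ℝ) ≤ #N + D := mod_cast hN
      have hyc : y v ≤ c := hvc.le.trans (div_le_self hc hχ)
      have key := ih (e := (r + 2) * e) (by positivity) (sub_nonneg.mpr hyc)
        (hO'.mono hNS' le_rfl) (by linarith) (hB.link (hS'S hv) (hNS'.trans hS'S) hadj)
      rw [bottleConst]
      nlinarith [mul_le_mul_of_nonneg_left hyc (show 0 ≤ (r + 2) * e by positivity),
        mul_nonneg (hy v) (mul_nonneg hA.le (show 0 ≤ (r + 2) * e by positivity))]

theorem IsNearlyOre.exists_light_bottle [Fintype ι] {δ η : ℝ} (hα : 0 < α) (hδ : 0 < δ) (hη : 0 < η)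
    (hδη : (1 + η) * (r + α) * bottleConst α r * (2 * (r + α) + 1) * δ ≤ η)
    (hm : 1 ≤ δ * Fintype.card ι)
    (hO : IsNearlyOre R L S ⌈(1 / (r + α) + δ) * Fintype.card ι⌉₊ (δ * Fintype.card ι))
    (hS : (1 - δ) * Fintype.card ι ≤ #S) (hy : y ∈ stdSimplex ℝ ι) :
    ∃ K u, R.IsNClique r K ∧ (∀ z ∈ K, R.Adj u z) ∧
      ∑ z ∈ K, y z + α * y u ≤ (1 + η) * (r + α) / Fintype.card ι := by
  by_contra! hcon
  set m : ℝ := (Fintype.card ι : ℝ)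
  set χ : ℝ := r + α
  set D : ℕ := ⌈(1 / χ + δ) * m⌉₊
  set A : ℝ := bottleConst α r
  have hm0 : 0 < m := pos_of_mul_pos_right (one_pos.trans_le hm) hδ.le
  have hχ : 0 < χ := by positivity
  have hDlow : (1 / χ + δ) * m ≤ D := Nat.le_ceil _
  have hDup : D ≤ (1 / χ + δ) * m + 1 := (Nat.ceil_lt_add_one (by positivity)).le
  have hcard : χ * D - (2 * χ + 1) * (δ * m) ≤ #S :=
    calc χ * D - (2 * χ + 1) * (δ * m)
        ≤ χ * ((1 / χ + δ) * m + δ * m) - (2 * χ + 1) * (δ * m) := by gcongr; linarith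
      _ = (1 - δ) * m := by field_simp; ring
      _ ≤ #S := hS
  have hheavy : HeavyBottles R y α r ((1 + η) * χ / m) S :=
    fun K _ u _ hK hu ↦ (hcon K u hK hu).le
  have hweight := hheavy.mul_sub_le_sum hα hy.1 (by positivity) (by positivity)
    (hO.mono Subset.rfl (le_mul_of_one_le_left (by positivity) (by linarith))) hcard
  have hle : ∑ z ∈ S, y z ≤ 1 :=
    (sum_le_univ_sum_of_nonneg hy.1).trans_eq hy.2
  refine (hweight.trans hle).not_gt ?_
  calc (1 : ℝ) < 1 + η + (1 + η) * χ * δ - (1 + η) * χ * A * (2 * χ + 1) * δ := by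
        have : 0 < (1 + η) * χ * δ := by positivity
        linarith
    _ = (1 + η) * χ / m * ((1 / χ + δ) * m - A * ((2 * χ + 1) * (δ * m))) := by
        field_simp
    _ ≤ (1 + η) * χ / m * (D - A * ((2 * χ + 1) * (δ * m))) := by gcongr

end Bottle

section FractionalTiling

open Finset

lemma exists_mem_stdSimplex_forall_sum_mul_le {ι Ψ : Type*} [Fintype ι] [Fintype Ψ] [Nonempty ι]
    {T : Ψ → ι → ℝ} {t : ℝ} (hT : ∀ y ∈ stdSimplex ℝ ι, ∃ ψ, ∑ i, y i * T ψ i ≤ t) :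
    ∃ lam ∈ stdSimplex ℝ Ψ, ∀ i, ∑ ψ, lam ψ * T ψ i ≤ t := by
  classical
  let B : (Ψ → ℝ) →ₗ[ℝ] (ι → ℝ) →ₗ[ℝ] ℝ := Matrix.toLinearMap₂' ℝ (Matrix.of T)
  obtain ⟨i₀⟩ := ‹Nonempty ι›
  obtain ⟨ψ₀, -⟩ := hT _ (single_mem_stdSimplex ℝ i₀)
  have hlower (y) : LowerSemicontinuous (B · y) :=
    (B.flip y).continuous_of_finiteDimensional.lowerSemicontinuous
  have hupper (lam) : UpperSemicontinuous (B lam) :=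
    (B lam).continuous_of_finiteDimensional.upperSemicontinuous
  obtain ⟨lam, hlam, y, hy, hsaddle⟩ := Sion.exists_isSaddlePointOn (f := fun lam y ↦ B lam y)
    ⟨_, single_mem_stdSimplex ℝ ψ₀⟩ (convex_stdSimplex ℝ Ψ) (isCompact_stdSimplex ℝ Ψ)
    (fun y _ ↦ (hlower y).lowerSemicontinuousOn _)
    (fun y _ ↦ ((B.flip y).convexOn (convex_stdSimplex ℝ Ψ)).quasiconvexOn)
    (convex_stdSimplex ℝ ι) ⟨_, single_mem_stdSimplex ℝ i₀⟩ (isCompact_stdSimplex ℝ ι)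
    (fun lam _ ↦ (hupper lam).upperSemicontinuousOn _)
    (fun lam _ ↦ ((B lam).concaveOn (convex_stdSimplex ℝ ι)).quasiconcaveOn)
  obtain ⟨ψ, hψ⟩ := hT y hy
  refine ⟨lam, hlam, fun i ↦ ?_⟩
  calc ∑ ψ, lam ψ * T ψ i = B lam (Pi.single i 1) := by
        simp [B, Matrix.toLinearMap₂'_apply, Pi.single_apply]
    _ ≤ B (Pi.single ψ 1) y :=
        hsaddle _ (single_mem_stdSimplex ℝ ψ) _ (single_mem_stdSimplex ℝ i)
    _ = ∑ i, y i * T ψ i := by simp [B, Matrix.toLinearMap₂'_apply, Pi.single_apply]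
    _ ≤ t := hψ

variable {W ι : Type*} {H : SimpleGraph W} {R : SimpleGraph ι} {r : ℕ}

/-- The homomorphism from the complete graph on `Option (Fin r)` onto a bottle that sends `none` to
the neck `u` and `some j` to the body vertex `κ j`. -/
def bottleHom (κ : (⊤ : SimpleGraph (Fin r)) →g R) (u : ι) (hu : ∀ j, R.Adj u (κ j)) :
    (⊤ : SimpleGraph (Option (Fin r))) →g R where
  toFun o := o.elim u κ
  map_rel' {a b} hab := by
    cases a <;> cases b
    · exact absurd rfl hab
    · exact hu _
    · exact (hu _).symm
    · exact κ.map_rel fun h ↦ hab (congrArg some h)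

-- Cyclic shifts of the body of the bottle spread the large colour classes evenly over it.
lemma exists_hom_mul_sum_le [Fintype W] (hr : r ≠ 0) (g : H.Coloring (Option (Fin r)))
    {K : Finset ι} {u : ι} (hK : R.IsNClique r K) (hu : ∀ z ∈ K, R.Adj u z) (y : ι → ℝ) :
    ∃ ψ : H →g R, r * ∑ w, y (ψ w) ≤
      #{w | g w ≠ none} * ∑ z ∈ K, y z + r * #{w | g w = none} * y u := by
  have : NeZero r := ⟨hr⟩
  let κ : Fin r ≃ K := (Fintype.equivFinOfCardEq (by simpa using hK.card_eq)).symm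
  let body (s : Fin r) : (⊤ : SimpleGraph (Fin r)) →g R :=
    { toFun j := κ (j + s)
      map_rel' {i j} hij := hK.isClique (κ _).2 (κ _).2 fun h ↦
        hij (add_right_cancel (κ.injective (Subtype.ext h))) }
  let ψ (s : Fin r) : H →g R := (bottleHom (body s) u fun _ ↦ hu _ (κ _).2).comp g
  have hsum (w) : ∑ s, y (ψ s w) = if g w = none then r * y u else ∑ z ∈ K, y z := by
    have hψ (s) : ψ s w = (g w).elim u fun j ↦ (κ (j + s) : ι) := rfl
    obtain hw | ⟨j, hw⟩ := (g w).eq_none_or_eq_some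
    · simp [hψ, hw]
    · simp only [hψ, hw, Option.elim_some, reduceCtorEq, if_false]
      rw [← sum_coe_sort K y, ← Equiv.sum_comp κ]
      exact Equiv.sum_comp (Equiv.addLeft j) fun i ↦ y (κ i)
  have htotal : ∑ s, ∑ w, y (ψ s w) =
      #{w | g w ≠ none} * ∑ z ∈ K, y z + r * #{w | g w = none} * y u := by
    rw [sum_comm, sum_congr rfl fun w _ ↦ hsum w, sum_ite, sum_const, sum_const]
    simp only [nsmul_eq_mul]
    ring
  obtain ⟨s, -, hs⟩ := exists_le_of_sum_le (s := univ) (univ_nonempty (α := Fin r))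
    (f := fun s ↦ r * ∑ w, y (ψ s w)) (g := fun _ ↦ ∑ s, ∑ w, y (ψ s w))
    (by rw [← mul_sum, sum_const, card_fin, nsmul_eq_mul])
  exact ⟨ψ s, hs.trans_eq htotal⟩

lemma exists_hom_sum_mul_card_le [Fintype W] [Fintype ι] [DecidableEq ι] (hr : r ≠ 0)
    (g : H.Coloring (Option (Fin r))) (hg : #{w | g w ≠ none} ≠ 0) {K : Finset ι} {u : ι}
    (hK : R.IsNClique r K) (hu : ∀ z ∈ K, R.Adj u z) (y : ι → ℝ) :
    ∃ ψ : H →g R, ∑ i, y i * #{w | ψ w = i} ≤ #{w | g w ≠ none} / r *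
      (∑ z ∈ K, y z + r * #{w | g w = none} / #{w | g w ≠ none} * y u) := by
  obtain ⟨ψ, hψ⟩ := exists_hom_mul_sum_le hr g hK hu y
  refine ⟨ψ, le_of_mul_le_mul_left ?_ (show 0 < (r : ℝ) by positivity)⟩
  calc r * ∑ i, y i * #{w | ψ w = i} = r * ∑ w, y (ψ w) := by
        rw [← sum_fiberwise' univ ψ y]
        simp [mul_comm]
    _ ≤ _ := hψ
    _ = _ := by field_simp

lemma card_filter_none_add_card_filter_ne_none [Fintype W] (g : W → Option (Fin r)) :
    (#{w | g w = none} : ℝ) + #{w | g w ≠ none} = Fintype.card W :=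
  mod_cast card_filter_add_card_filter_not (s := (univ : Finset W)) (g · = none)

theorem exists_fractional_tiling [Fintype W] (g : H.Coloring (Option (Fin r)))
    (hg : ∃ w, g w = none) (hg' : ∃ w, g w ≠ none) {η : ℝ} (hη : 0 < η) :
    ∃ δ₀ > (0 : ℝ), ∀ δ, 0 < δ → δ ≤ δ₀ → ∀ {ι : Type*} [Fintype ι] [DecidableEq ι]
      (R : SimpleGraph ι) [DecidableRel R.Adj] [Fintype (H →g R)] (L S : Finset ι),
      1 ≤ δ * Fintype.card ι → (1 - δ) * Fintype.card ι ≤ #S →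
      IsNearlyOre R L S
        ⌈(#{w | g w ≠ none} / (r * Fintype.card W) + δ) * Fintype.card ι⌉₊ (δ * Fintype.card ι) →
      ∃ lam ∈ stdSimplex ℝ (H →g R),
        ∀ i, ∑ ψ, lam ψ * #{w | ψ w = i} ≤ (1 + η) * Fintype.card W / Fintype.card ι := by
  obtain ⟨w₁, hw₁⟩ := hg'
  obtain ⟨j, -⟩ := Option.ne_none_iff_exists'.mp hw₁
  have hr : r ≠ 0 := j.pos.ne'
  set h : ℝ := (Fintype.card W : ℝ)
  set σ : ℝ := (#{w | g w = none} : ℝ)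
  set τ : ℝ := (#{w | g w ≠ none} : ℝ)
  have hσ : 0 < σ := by
    obtain ⟨w, hw⟩ := hg
    exact Nat.cast_pos.mpr (card_pos.mpr ⟨w, by simpa using hw⟩)
  have hτ : 0 < τ := Nat.cast_pos.mpr (card_pos.mpr ⟨w₁, by simpa using hw₁⟩)
  set α : ℝ := r * σ / τ
  have hα : 0 < α := by positivity
  have hχ : r + α = r * h / τ := by
    simp only [α, h, ← card_filter_none_add_card_filter_ne_none g]
    field_simp
    ring
  have hA := bottleConst_pos hα r
  set C : ℝ := (1 + η) * (r + α) * bottleConst α r * (2 * (r + α) + 1)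
  have hC : 0 < C := by positivity
  refine ⟨η / C, by positivity, fun δ hδ hδ₀ ι _ _ R _ _ L S hm hS hO ↦ ?_⟩
  have : Nonempty ι := by
    by_contra! hempty
    norm_num at hm
  refine exists_mem_stdSimplex_forall_sum_mul_le fun y hy ↦ ?_
  obtain ⟨K, u, hK, hu, hlight⟩ := IsNearlyOre.exists_light_bottle hα hδ hη
    (by rwa [le_div_iff₀' hC] at hδ₀) hm (by rwa [hχ, one_div_div]) hS hy
  obtain ⟨ψ, hψ⟩ := exists_hom_sum_mul_card_le hr g (Nat.cast_pos.mp hτ).ne' hK hu y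
  refine ⟨ψ, hψ.trans ?_⟩
  calc τ / r * (∑ z ∈ K, y z + α * y u) ≤ τ / r * ((1 + η) * (r + α) / Fintype.card ι) := by gcongr
    _ = (1 + η) * h / Fintype.card ι := by rw [hχ]; field_simp

end FractionalTiling

section Embedding

open Finset

variable {V W : Type*} {G : SimpleGraph V} [DecidableRel G.Adj] {H : SimpleGraph W} {ε d τ μ : ℝ}

/-- `(A, B)` is an `ε`-regular pair of density at least `d` in `G`. -/
def IsRegularPair (G : SimpleGraph V) [DecidableRel G.Adj] (ε d : ℝ) (A B : Finset V) : Prop :=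
  G.IsUniform ε A B ∧ d ≤ G.edgeDensity A B

lemma IsRegularPair.symm {A B : Finset V} (h : IsRegularPair G ε d A B) :
    IsRegularPair G ε d B A :=
  ⟨h.1.symm, by rw [G.edgeDensity_comm]; exact h.2⟩

lemma card_interedges_eq_sum (G : SimpleGraph V) [DecidableRel G.Adj] (A B : Finset V) :
    #(G.interedges A B) = ∑ x ∈ A, #{z ∈ B | G.Adj x z} := by
  simp only [SimpleGraph.interedges_def, card_filter, sum_product]

lemma IsRegularPair.card_filter_card_adj_lt {A B X Y : Finset V} (h : IsRegularPair G ε d A B)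
    (hτ : τ + ε ≤ d) (hX : X ⊆ A) (hY : Y ⊆ B) (hA : A.Nonempty) (hY0 : Y.Nonempty)
    (hcard : #B * ε ≤ #Y) :
    (#{x ∈ X | (#{z ∈ Y | G.Adj x z} : ℝ) < τ * #Y} : ℝ) < #A * ε := by
  by_contra! hcon
  set X' := {x ∈ X | (#{z ∈ Y | G.Adj x z} : ℝ) < τ * #Y}
  have hA' : (0 : ℝ) < #A := mod_cast hA.card_pos
  have hX' : (0 : ℝ) < #X' := (mul_pos hA' h.1.pos).trans_le hcon
  have hclose := abs_lt.mp (h.1 ((filter_subset _ _).trans hX) hY hcon hcard)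
  have hedges : (#(G.interedges X' Y) : ℝ) ≤ #X' * (τ * #Y) := by
    rw [card_interedges_eq_sum, Nat.cast_sum, ← nsmul_eq_mul]
    exact sum_le_card_nsmul _ _ _ fun x hx ↦ (mem_filter.mp hx).2.le
  have hdensity : (G.edgeDensity X' Y : ℝ) ≤ τ := by
    have hY' : (0 : ℝ) < #Y := mod_cast hY0.card_pos
    rw [SimpleGraph.edgeDensity_def]
    push_cast
    rw [div_le_iff₀ (by positivity)]
    linarith
  linarith [h.2]

lemma exists_forall_mul_card_le_card_adj {A X : Finset V} {B Y : W → Finset V} {N : Finset W}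
    (hreg : ∀ b ∈ N, IsRegularPair G ε d A (B b)) (hτ : τ + ε ≤ d) (hXA : X ⊆ A)
    (hX : X.Nonempty) (hYB : ∀ b ∈ N, Y b ⊆ B b) (hY : ∀ b ∈ N, (Y b).Nonempty)
    (hcard : ∀ b ∈ N, #(B b) * ε ≤ #(Y b)) (hN : #N * (#A * ε) ≤ #X) :
    ∃ x ∈ X, ∀ b ∈ N, τ * #(Y b) ≤ #{z ∈ Y b | G.Adj x z} := by
  classical
  by_contra! hcon
  obtain ⟨x, hx⟩ := id hX
  obtain ⟨b₀, hb₀, -⟩ := hcon x hx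
  let bad (b : W) : Finset V := {x ∈ X | (#{z ∈ Y b | G.Adj x z} : ℝ) < τ * #(Y b)}
  have hcover : X ⊆ N.biUnion bad := fun x hx ↦ by
    obtain ⟨b, hb, hlt⟩ := hcon x hx
    exact mem_biUnion.mpr ⟨b, hb, mem_filter.mpr ⟨hx, hlt⟩⟩
  refine hN.not_gt ?_
  calc (#X : ℝ) ≤ ∑ b ∈ N, (#(bad b) : ℝ) := mod_cast (card_le_card hcover).trans card_biUnion_le
    _ < ∑ _b ∈ N, #A * ε := sum_lt_sum_of_nonempty ⟨b₀, hb₀⟩ fun b hb ↦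
        (hreg b hb).card_filter_card_adj_lt hτ hXA (hYB b hb) (hX.mono hXA) (hY b hb) (hcard b hb)
    _ = #N * (#A * ε) := by rw [sum_const, nsmul_eq_mul]

variable [Fintype W] {P C : W → Finset V}

lemma exists_vertex_and_candidates {w : W} {A : Finset W} (hε : 0 ≤ ε)
    (hτ : τ ≤ 1 / 2) (hτd : τ + ε ≤ d) (hμ : Fintype.card W * ε ≤ μ)
    (hP : ∀ w, 2 ≤ μ * #(P w))
    (hreg : ∀ a b, H.Adj a b → IsRegularPair G ε d (P a) (P b)) (hCP : ∀ w, C w ⊆ P w)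
    (hCw : μ * #(P w) ≤ #(C w)) (hC : ∀ a ∈ A, μ * #(P a) ≤ #(C a)) :
    ∃ x ∈ C w, ∃ C' : W → Finset V, (∀ b, C' b ⊆ C b) ∧
      (∀ b ∈ A, τ * #(C b) ≤ #(C' b)) ∧
      ∀ b, ∀ z ∈ C' b, x ≠ z ∧ (H.Adj w b → G.Adj x z) := by
  classical
  have hnonempty {a} (ha : μ * #(P a) ≤ #(C a)) : (C a).Nonempty :=
    card_pos.mp <| by exact_mod_cast two_pos.trans_le ((hP a).trans ha)
  have hεμ : ε ≤ μ := by
    have : Nonempty W := ⟨w⟩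
    exact (le_mul_of_one_le_left hε (mod_cast Fintype.card_pos)).trans hμ
  obtain ⟨x, hx, hdeg⟩ := exists_forall_mul_card_le_card_adj (A := P w) (X := C w) (B := P) (Y := C)
    (N := {b ∈ A | H.Adj w b}) (fun b hb ↦ hreg w b (mem_filter.mp hb).2) hτd (hCP w)
    (hnonempty hCw) (fun b _ ↦ hCP b) (fun b hb ↦ hnonempty (hC b (mem_filter.mp hb).1))
    (fun b hb ↦ (by rw [mul_comm]; gcongr : #(P b) * ε ≤ μ * #(P b)).trans
      (hC b (mem_filter.mp hb).1)) <|
    calc (#{b ∈ A | H.Adj w b} : ℝ) * (#(P w) * ε) ≤ Fintype.card W * (#(P w) * ε) := by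
          gcongr
          exact card_le_univ _
      _ = Fintype.card W * ε * #(P w) := by ring
      _ ≤ μ * #(P w) := by gcongr
      _ ≤ #(C w) := hCw
  refine ⟨x, hx, fun b ↦ {z ∈ C b | x ≠ z ∧ (H.Adj w b → G.Adj x z)},
    fun b ↦ filter_subset _ _, fun b hb ↦ ?_, fun b z hz ↦ (mem_filter.mp hz).2⟩
  by_cases hwb : H.Adj w b
  · refine (hdeg b (mem_filter.mpr ⟨hb, hwb⟩)).trans (mod_cast card_le_card fun z hz ↦ ?_)
    obtain ⟨hz, hxz⟩ := mem_filter.mp hz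
    exact mem_filter.mpr ⟨hz, hxz.ne, fun _ ↦ hxz⟩
  · have hcard : #(C b) ≤ #{z ∈ C b | x ≠ z ∧ (H.Adj w b → G.Adj x z)} + 1 := by
      simp only [hwb, false_imp_iff, and_true, filter_ne]
      have := pred_card_le_card_erase (s := C b) (a := x)
      lia
    have hcard : (#(C b) : ℝ) ≤ #{z ∈ C b | x ≠ z ∧ (H.Adj w b → G.Adj x z)} + 1 :=
      mod_cast hcard
    nlinarith [(hP b).trans (hC b hb)]

lemma exists_embedding_on (hε : 0 ≤ ε) (hτ₀ : 0 < τ) (hτ : τ ≤ 1 / 2) (hτd : τ + ε ≤ d)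
    (hμ : Fintype.card W * ε ≤ μ) (hP : ∀ w, 2 ≤ μ * #(P w))
    (hreg : ∀ a b, H.Adj a b → IsRegularPair G ε d (P a) (P b)) (A : Finset W)
    (hCP : ∀ w, C w ⊆ P w) (hC : ∀ w ∈ A, μ * #(P w) ≤ #(C w) * τ ^ #A) :
    ∃ f : W → V, (∀ w ∈ A, f w ∈ C w) ∧
      (A : Set W).Pairwise fun a b ↦ f a ≠ f b ∧ (H.Adj a b → G.Adj (f a) (f b)) := by
  classical
  induction A using Finset.induction_on generalizing C with
  | empty =>
    have hne (w) : (P w).Nonempty := by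
      rw [nonempty_iff_ne_empty]
      intro h
      simpa [h] using (hP w).trans_lt' two_pos
    choose f _ using hne
    exact ⟨f, by simp, by simp⟩
  | insert w A hwA ih =>
    have hpow : τ ^ #(insert w A) ≤ 1 := pow_le_one₀ hτ₀.le (by linarith)
    have hC' (a) (ha : a ∈ insert w A) : μ * #(P a) ≤ #(C a) :=
      (hC a ha).trans (mul_le_of_le_one_right (Nat.cast_nonneg _) hpow)
    obtain ⟨x, hx, C', hC'C, hcard, hadj⟩ := exists_vertex_and_candidates hε hτ hτd hμ hP hreg
      hCP (hC' w (mem_insert_self _ _)) fun a ha ↦ hC' a (mem_insert_of_mem ha)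
    obtain ⟨f, hf, hpair⟩ := ih (fun b ↦ (hC'C b).trans (hCP b)) fun b hb ↦
      calc μ * #(P b) ≤ #(C b) * τ ^ #(insert w A) := hC b (mem_insert_of_mem hb)
        _ = τ * #(C b) * τ ^ #A := by rw [card_insert_of_notMem hwA]; ring
        _ ≤ #(C' b) * τ ^ #A := by gcongr; exact hcard b hb
    have hne (a) (ha : a ∈ A) : a ≠ w := ne_of_mem_of_not_mem ha hwA
    refine ⟨Function.update f w x, ?_, ?_⟩
    · rw [forall_mem_insert]
      refine ⟨by simpa using hx, fun a ha ↦ ?_⟩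
      rw [Function.update_of_ne (hne a ha)]
      exact hC'C a (hf a ha)
    · have (f : W → V) : Std.Symm fun a b ↦ f a ≠ f b ∧ (H.Adj a b → G.Adj (f a) (f b)) :=
        ⟨fun a b h ↦ ⟨h.1.symm, fun hab ↦ (h.2 hab.symm).symm⟩⟩
      rw [coe_insert, Set.pairwise_insert_of_symm]
      refine ⟨fun a ha b hb hab ↦ ?_, fun b hb _ ↦ ?_⟩
      · simpa only [Function.update_of_ne (hne a ha), Function.update_of_ne (hne b hb)]
          using hpair ha hb hab
      · simpa only [Function.update_of_ne (hne b hb), Function.update_self]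
          using hadj b _ (hf b hb)

theorem exists_injective_adj_of_isRegularPair (hε : 0 ≤ ε) (hτ₀ : 0 < τ) (hτ : τ ≤ 1 / 2)
    (hτd : τ + ε ≤ d) (hμ : Fintype.card W * ε ≤ μ) (hP : ∀ w, 2 ≤ μ * #(P w))
    (hreg : ∀ a b, H.Adj a b → IsRegularPair G ε d (P a) (P b))
    (hCP : ∀ w, C w ⊆ P w) (hC : ∀ w, μ * #(P w) ≤ #(C w) * τ ^ Fintype.card W) :
    ∃ f : W → V, (∀ w, f w ∈ C w) ∧ f.Injective ∧ ∀ a b, H.Adj a b → G.Adj (f a) (f b) := by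
  obtain ⟨f, hf, hpair⟩ := exists_embedding_on hε hτ₀ hτ hτd hμ hP hreg univ hCP fun w _ ↦ hC w
  exact ⟨f, fun w ↦ hf w (mem_univ w),
    fun a b ↦ not_imp_not.mp fun hab ↦ (hpair (mem_univ a) (mem_univ b) hab).1,
    fun a b hab ↦ (hpair (mem_univ a) (mem_univ b) hab.ne).2 hab⟩

end Embedding

section Tiling

open Finset

variable {V W ι : Type*} {H : SimpleGraph W} {G : SimpleGraph V} {R : SimpleGraph ι}
  {𝒯 : Finset (W → V)} {f : W → V}

lemma untiled_insert [DecidableEq (W → V)] :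
    untiled (insert f 𝒯) = untiled 𝒯 \ Set.range f := by
  ext v
  simp only [untiled, forall_mem_insert, Set.mem_ofPred_eq, Set.mem_sdiff]
  exact and_comm

lemma IsTiling.insert [DecidableEq (W → V)] (h𝒯 : IsTiling H G 𝒯) (hf : f.Injective)
    (hadj : ∀ a b, H.Adj a b → G.Adj (f a) (f b)) (huntiled : ∀ w, f w ∈ untiled 𝒯) :
    IsTiling H G (insert f 𝒯) := by
  have hdisj (g) (hg : g ∈ 𝒯) : Disjoint (Set.range f) (Set.range g) :=
    Set.disjoint_left.mpr <| Set.forall_mem_range.mpr fun w ↦ huntiled w g hg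
  refine ⟨forall_mem_insert _ _ _ |>.mpr ⟨⟨hf, hadj⟩, h𝒯.1⟩, ?_⟩
  rw [coe_insert]
  exact h𝒯.2.insert fun g hg _ ↦ ⟨hdisj g hg, (hdisj g hg).symm⟩

variable [Fintype W] [DecidableEq ι] {P : ι → Finset V} {ε : ℝ}

lemma card_inter_le_card_inter_sdiff_image_add [DecidableEq V]
    (hP : Pairwise fun i j ↦ Disjoint (P i) (P j))
    {φ : W → ι} (hf : ∀ w, f w ∈ P (φ w)) (U : Finset V) (i : ι) :
    #(P i ∩ U) ≤ #(P i ∩ (U \ univ.image f)) + #{w | φ w = i} := by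
  have hcover : P i ∩ U ⊆ P i ∩ (U \ univ.image f) ∪ ({w | φ w = i} : Finset W).image f := by
    intro v hv
    obtain ⟨hvP, hvU⟩ := mem_inter.mp hv
    by_cases hvf : v ∈ univ.image f
    · obtain ⟨w, -, rfl⟩ := mem_image.mp hvf
      refine mem_union_right _ (mem_image_of_mem f (mem_filter.mpr ⟨mem_univ w, ?_⟩))
      by_contra hne
      exact disjoint_left.mp (hP hne) (hf w) hvP
    · exact mem_union_left _ (mem_inter.mpr ⟨hvP, mem_sdiff.mpr ⟨hvU, hvf⟩⟩)
  exact (card_le_card hcover).trans <| (card_union_le _ _).trans <|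
    Nat.add_le_add_left card_image_le _

lemma exists_isTiling_of_multiset [Fintype V] [DecidableEq V]
    (hP : Pairwise fun i j ↦ Disjoint (P i) (P j))
    (hembed : ∀ (ψ : H →g R) (A : ι → Finset V), (∀ i, A i ⊆ P i) → (∀ i, ε * #(P i) ≤ #(A i)) →
      ∃ f : W → V, (∀ w, f w ∈ A (ψ w)) ∧ f.Injective ∧ ∀ a b, H.Adj a b → G.Adj (f a) (f b))
    (s : Multiset (H →g R))
    (hs : ∀ i, (((s.map fun ψ ↦ #{w | ψ w = i}).sum : ℕ) : ℝ) ≤ (1 - ε) * #(P i)) :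
    ∃ (𝒯 : Finset (W → V)) (U : Finset V), IsTiling H G 𝒯 ∧ untiled 𝒯 = U ∧
      #U + Fintype.card W * s.card = Fintype.card V ∧
      ∀ i, #(P i) ≤ #(P i ∩ U) + (s.map fun ψ ↦ #{w | ψ w = i}).sum := by
  classical
  induction s using Multiset.induction_on with
  | empty => exact ⟨∅, univ, ⟨by simp, by simp⟩, by simp [untiled], by simp, by simp⟩
  | cons ψ s ih =>
    simp only [Multiset.map_cons, Multiset.sum_cons, Nat.cast_add] at hs
    obtain ⟨𝒯, U, h𝒯, hU, hcard, hload⟩ := ih fun i ↦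
      (le_add_of_nonneg_left (Nat.cast_nonneg _)).trans (hs i)
    obtain ⟨f, hfA, hf, hadj⟩ := hembed ψ (fun i ↦ P i ∩ U) (fun i ↦ inter_subset_left) fun i ↦ by
      have hload' : (#(P i) : ℝ) ≤ #(P i ∩ U) + (s.map fun ψ ↦ #{w | ψ w = i}).sum :=
        mod_cast hload i
      linarith [hs i, Nat.cast_nonneg (α := ℝ) #{w | ψ w = i}]
    simp only [mem_inter] at hfA
    have himage : univ.image f ⊆ U := image_subset_iff.mpr fun w _ ↦ (hfA w).2
    refine ⟨insert f 𝒯, U \ univ.image f, h𝒯.insert hf hadj fun w ↦ ?_, ?_, ?_, fun i ↦ ?_⟩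
    · rw [hU]
      exact (hfA w).2
    · rw [untiled_insert, hU, coe_sdiff, coe_image, coe_univ, Set.image_univ]
    · have := card_sdiff_add_card_eq_card himage
      rw [card_image_of_injective _ hf, card_univ] at this
      rw [Multiset.card_cons, mul_add, mul_one]
      lia
    · have := card_inter_le_card_inter_sdiff_image_add hP (fun w ↦ (hfA w).1) U i
      have := hload i
      rw [Multiset.map_cons, Multiset.sum_cons]
      lia

theorem exists_isTiling_of_fractional [Fintype V] [Fintype (H →g R)]
    (hP : Pairwise fun i j ↦ Disjoint (P i) (P j))
    (hembed : ∀ (ψ : H →g R) (A : ι → Finset V), (∀ i, A i ⊆ P i) → (∀ i, ε * #(P i) ≤ #(A i)) →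
      ∃ f : W → V, (∀ w, f w ∈ A (ψ w)) ∧ f.Injective ∧ ∀ a b, H.Adj a b → G.Adj (f a) (f b))
    (hε : ε ≤ 1) {p t : ℝ} (hp : 0 ≤ p) (hpP : ∀ i, p ≤ #(P i)) (ht : 0 < t)
    {lam : (H →g R) → ℝ} (hlam : lam ∈ stdSimplex ℝ (H →g R))
    (hload : ∀ i, ∑ ψ, lam ψ * #{w | ψ w = i} ≤ t) :
    ∃ 𝒯 : Finset (W → V), IsTiling H G 𝒯 ∧ ((untiled 𝒯).ncard : ℝ) ≤
      Fintype.card V - Fintype.card W * ((1 - ε) * p / t - Fintype.card (H →g R)) := by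
  classical
  set M : ℝ := (1 - ε) * p / t
  have hM : 0 ≤ M := div_nonneg (mul_nonneg (by linarith) hp) ht.le
  obtain ⟨𝒯, U, h𝒯, hU, hcard, -⟩ := exists_isTiling_of_multiset hP hembed
    (∑ ψ, Multiset.replicate ⌊M * lam ψ⌋₊ ψ) fun i ↦ by
      rw [← Multiset.coe_mapAddMonoidHom, map_sum, Multiset.sum_sum]
      simp only [Multiset.coe_mapAddMonoidHom, Multiset.map_replicate, Multiset.sum_replicate,
        smul_eq_mul, Nat.cast_sum, Nat.cast_mul]
      calc ∑ ψ, (⌊M * lam ψ⌋₊ : ℝ) * #{w | ψ w = i}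
        _ ≤ ∑ ψ, M * lam ψ * #{w | ψ w = i} := by
          gcongr with ψ
          exact Nat.floor_le (mul_nonneg hM (hlam.1 ψ))
        _ = M * ∑ ψ, lam ψ * #{w | ψ w = i} := by simp only [mul_sum, mul_assoc]
        _ ≤ M * t := by gcongr; exact hload i
        _ = (1 - ε) * p := div_mul_cancel₀ _ ht.ne'
        _ ≤ (1 - ε) * #(P i) := by gcongr; exact hpP i
  refine ⟨𝒯, h𝒯, ?_⟩
  have hsum : M - Fintype.card (H →g R) ≤ ∑ ψ, (⌊M * lam ψ⌋₊ : ℝ) := by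
    calc M - Fintype.card (H →g R) = ∑ ψ, (M * lam ψ - 1) := by
          rw [sum_sub_distrib, ← mul_sum, hlam.2]
          simp
      _ ≤ ∑ ψ, (⌊M * lam ψ⌋₊ : ℝ) := sum_le_sum fun ψ _ ↦ (Nat.sub_one_lt_floor _).le
  have hcard' : (#U : ℝ) + Fintype.card W * ∑ ψ, (⌊M * lam ψ⌋₊ : ℝ) = Fintype.card V := by
    rw [← hcard]
    simp [Multiset.card_sum]
  rw [hU, Set.ncard_coe_finset]
  linarith [mul_le_mul_of_nonneg_left hsum (Nat.cast_nonneg (α := ℝ) (Fintype.card W))]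

end Tiling

section ReducedGraph

open Finset

variable {V : Type*} {G : SimpleGraph V} [DecidableRel G.Adj] {ε d θ : ℝ}

lemma card_interedges_eq_edgeDensity_mul (G : SimpleGraph V) [DecidableRel G.Adj]
    (A B : Finset V) : (#(G.interedges A B) : ℝ) = G.edgeDensity A B * (#A * #B) := by
  rw [SimpleGraph.edgeDensity_def]
  push_cast
  refine (div_mul_cancel_of_imp fun h ↦ ?_).symm
  exact_mod_cast Nat.eq_zero_of_le_zero ((G.card_interedges_le_mul A B).trans_eq (mod_cast h))

variable [Fintype V]

lemma le_edgeDensity_of_sum_degree_lt (hθ₁ : θ ≤ 1)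
    (hOre : ∀ x y, x ≠ y → ¬G.Adj x y → 2 * θ * Fintype.card V ≤ (G.degree x : ℝ) + G.degree y)
    {A B : Finset V} (hAB : Disjoint A B)
    (hA : ∑ v ∈ A, (G.degree v : ℝ) < (θ - d) * Fintype.card V * #A)
    (hB : ∑ v ∈ B, (G.degree v : ℝ) < (θ - d) * Fintype.card V * #B) :
    d ≤ G.edgeDensity A B := by
  set n : ℝ := (Fintype.card V : ℝ)
  have hpair (a) (ha : a ∈ A) (b) (hb : b ∈ B) :
      2 * θ * n ≤ (G.degree a : ℝ) + G.degree b + 2 * n * if G.Adj a b then 1 else 0 := by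
    split_ifs with hab
    · have : θ * n ≤ n := mul_le_of_le_one_left (Nat.cast_nonneg _) hθ₁
      linarith [Nat.cast_nonneg (α := ℝ) (G.degree a), Nat.cast_nonneg (α := ℝ) (G.degree b)]
    · simpa using hOre a b (fun h ↦ disjoint_left.mp hAB ha (h ▸ hb)) hab
  have hsum := sum_le_sum fun a ha ↦ sum_le_sum (hpair a ha)
  have hedges : ∑ a ∈ A, ∑ b ∈ B, (if G.Adj a b then 1 else 0 : ℝ) =
      G.edgeDensity A B * (#A * #B) := by
    rw [← card_interedges_eq_edgeDensity_mul, card_interedges_eq_sum]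
    simp
  simp only [sum_add_distrib, sum_const, nsmul_eq_mul, ← mul_sum, hedges] at hsum
  have hB₀ : 0 < (#B : ℝ) := by
    rw [Nat.cast_pos, card_pos, nonempty_iff_ne_empty]
    rintro rfl
    simp at hB
  have hnAB : 0 ≤ n * (#A * #B) := by positivity
  by_contra! hd
  linarith [mul_lt_mul_of_pos_left hA hB₀,
    mul_le_mul_of_nonneg_left hB.le (Nat.cast_nonneg (α := ℝ) #A),
    mul_le_mul_of_nonneg_left hd.le hnAB]

variable [DecidableEq V] {P : Finpartition (univ : Finset V)}

lemma card_part_le_div_add_one (hP : P.IsEquipartition) {A : Finset V} (hA : A ∈ P.parts) :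
    (#A : ℝ) ≤ Fintype.card V / #P.parts + 1 := by
  have h : (#A : ℝ) ≤ ((Fintype.card V / #P.parts : ℕ) : ℝ) + 1 :=
    mod_cast hP.card_part_le_average_add_one hA
  linarith [Nat.cast_div_le (α := ℝ) (m := Fintype.card V) (n := #P.parts)]

lemma div_sub_one_le_card_part (hP : P.IsEquipartition) {A : Finset V} (hA : A ∈ P.parts) :
    Fintype.card V / #P.parts - 1 ≤ (#A : ℝ) := by
  have h : ((Fintype.card V / #P.parts : ℕ) : ℝ) ≤ #A := mod_cast hP.average_le_card_part hA
  rw [← Nat.floor_div_eq_div (K := ℝ)] at h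
  linarith [Nat.lt_floor_add_one ((Fintype.card V : ℝ) / #P.parts)]

lemma sum_degree_eq_sum_card_interedges (P : Finpartition (univ : Finset V)) (A : Finset V) :
    ∑ v ∈ A, G.degree v = ∑ z : P.parts, #(G.interedges A z) := by
  rw [sum_coe_sort P.parts fun z ↦ #(G.interedges A z)]
  refine Eq.trans ?_ (Rel.card_interedges_finpartition_right G.Adj A P)
  rw [← SimpleGraph.interedges, card_interedges_eq_sum]
  simp only [← SimpleGraph.card_neighborFinset_eq_degree, SimpleGraph.neighborFinset_eq_filter]

/-- The reduced graph of the partition `P`: its vertices are the parts of `P`, its edges the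
`ε`-regular pairs of distinct parts of density at least `d`. -/
def reducedGraph (G : SimpleGraph V) [DecidableRel G.Adj] (P : Finpartition (univ : Finset V))
    (ε d : ℝ) : SimpleGraph P.parts where
  Adj x z := x ≠ z ∧ IsRegularPair G ε d x z
  symm := ⟨fun _ _ h ↦ ⟨h.1.symm, h.2.symm⟩⟩
  loopless := ⟨fun _ h ↦ h.1 rfl⟩

open scoped Classical in
/-- The parts of `P` other than `x` that form an irregular pair with `x`. -/
noncomputable def irregularParts (G : SimpleGraph V) [DecidableRel G.Adj]
    (P : Finpartition (univ : Finset V)) (ε : ℝ) (x : P.parts) : Finset P.parts :=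
  {z | x ≠ z ∧ ¬G.IsUniform ε (x : Finset V) z}

/-- The parts of `P` that lie in few irregular pairs. -/
noncomputable def typicalParts (G : SimpleGraph V) [DecidableRel G.Adj]
    (P : Finpartition (univ : Finset V)) (ε d : ℝ) : Finset P.parts :=
  {x | (#(irregularParts G P ε x) : ℝ) ≤ d * #P.parts}

/-- The parts of `P` whose vertices have average degree less than `t`. -/
noncomputable def lowDegreeParts (G : SimpleGraph V) [DecidableRel G.Adj]
    (P : Finpartition (univ : Finset V)) (t : ℝ) : Finset P.parts :=
  {x | ∑ v ∈ (x : Finset V), (G.degree v : ℝ) < t * #(x : Finset V)}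

lemma sum_card_irregularParts_le :
    ∑ x, #(irregularParts G P ε x) ≤ #(P.nonUniforms G ε) := by
  classical
  calc ∑ x, #(irregularParts G P ε x)
      = #(univ.sigma fun x ↦ irregularParts G P ε x) := (card_sigma _ _).symm
    _ ≤ #(P.nonUniforms G ε) := by
      refine card_le_card_of_injOn (fun p ↦ (p.1.1, p.2.1)) (fun p hp ↦ ?_) ?_
      · have hp := mem_filter.mp (mem_sigma.mp hp).2
        exact (P.mk_mem_nonUniforms G).mpr
          ⟨p.1.2, p.2.2, fun h ↦ hp.2.1 (Subtype.ext h), hp.2.2⟩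
      · rintro ⟨p, p'⟩ - ⟨q, q'⟩ - h
        obtain ⟨h, h'⟩ := Prod.mk.inj h
        obtain rfl := Subtype.ext h
        obtain rfl := Subtype.ext h'
        rfl

lemma one_sub_mul_card_le_card_typicalParts (hd : 0 < d) (hεd : ε ≤ d ^ 2)
    (hP : P.IsUniform G ε) : (1 - d) * #P.parts ≤ #(typicalParts G P ε d) := by
  obtain hm | hm := (#P.parts).eq_zero_or_pos
  · simp [hm]
  have hsplit := card_filter_add_card_filter_not (s := (univ : Finset P.parts))
    fun x ↦ (#(irregularParts G P ε x) : ℝ) ≤ d * #P.parts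
  rw [card_univ, Fintype.card_coe] at hsplit
  set B : Finset P.parts := {x | ¬(#(irregularParts G P ε x) : ℝ) ≤ d * #P.parts}
  have hB : #B * (d * #P.parts) ≤ d * #P.parts * (d * #P.parts) := by
    calc #B * (d * #P.parts) ≤ ∑ x ∈ B, (#(irregularParts G P ε x) : ℝ) := by
          rw [← nsmul_eq_mul]
          exact card_nsmul_le_sum _ _ _ fun x hx ↦ (not_le.mp (mem_filter.mp hx).2).le
      _ ≤ ∑ x, (#(irregularParts G P ε x) : ℝ) :=
          sum_le_univ_sum_of_nonneg fun _ ↦ Nat.cast_nonneg _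
      _ ≤ #(P.nonUniforms G ε) := mod_cast sum_card_irregularParts_le
      _ ≤ (#P.parts * (#P.parts - 1) : ℕ) * ε := hP
      _ ≤ (#P.parts * (#P.parts - 1) : ℕ) * d ^ 2 := by gcongr
      _ ≤ (#P.parts * #P.parts : ℕ) * d ^ 2 := by gcongr; exact Nat.sub_le _ _
      _ = d * #P.parts * (d * #P.parts) := by push_cast; ring
  have hB' : (#B : ℝ) ≤ d * #P.parts := le_of_mul_le_mul_right hB (by positivity)
  have hsplit' : (#(typicalParts G P ε d) : ℝ) + #B = #P.parts := mod_cast hsplit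
  linarith

lemma edgeDensity_lt_of_not_adj {x z : P.parts} (hxz : x ≠ z) (hz : z ∉ irregularParts G P ε x)
    (hadj : ¬(reducedGraph G P ε d).Adj x z) :
    (G.edgeDensity (x : Finset V) z : ℝ) < d := by
  by_contra! hd
  refine hadj ⟨hxz, ?_, hd⟩
  simpa [irregularParts, hxz] using hz

lemma card_insert_irregularParts_le {x : P.parts} (hx : x ∈ typicalParts G P ε d)
    (hm : 1 ≤ d * #P.parts) :
    (#(insert x (irregularParts G P ε x)) : ℝ) ≤ 2 * d * #P.parts := by
  have h : (#(insert x (irregularParts G P ε x)) : ℝ) ≤ #(irregularParts G P ε x) + 1 :=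
    mod_cast card_insert_le _ _
  linarith [(mem_filter.mp hx).2]

lemma sum_degree_le_mul_card_part (hP : P.IsEquipartition) (hd : 0 ≤ d)
    (hm : 1 ≤ d * #P.parts) [DecidableRel (reducedGraph G P ε d).Adj] {x : P.parts}
    (hx : x ∈ typicalParts G P ε d) :
    ∑ v ∈ (x : Finset V), (G.degree v : ℝ) ≤
      ((#{z | (reducedGraph G P ε d).Adj x z} + 2 * d * #P.parts) *
        (Fintype.card V / #P.parts + 1) + d * Fintype.card V) * #(x : Finset V) := by
  classical
  set n : ℝ := (Fintype.card V : ℝ)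
  set m : ℝ := (#P.parts : ℝ)
  set N : Finset P.parts := {z | (reducedGraph G P ε d).Adj x z}
  set I := insert x (irregularParts G P ε x)
  have hcard_parts : ∑ z : P.parts, (#(z : Finset V) : ℝ) = n := by
    rw [sum_coe_sort P.parts fun z ↦ (#z : ℝ), ← Nat.cast_sum, P.sum_card_parts, card_univ]
  have hedges (z : P.parts) : (#(G.interedges (x : Finset V) z) : ℝ) ≤
      #(x : Finset V) * ((if z ∈ N ∪ I then n / m + 1 else 0) + d * #(z : Finset V)) := by
    rw [card_interedges_eq_edgeDensity_mul, mul_left_comm]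
    gcongr
    split_ifs with hz
    · have hle : (G.edgeDensity (x : Finset V) z : ℝ) ≤ 1 := mod_cast G.edgeDensity_le_one _ _
      exact (mul_le_of_le_one_left (Nat.cast_nonneg _) hle).trans <|
        (card_part_le_div_add_one hP z.2).trans (le_add_of_nonneg_right (by positivity))
    · simp only [mem_union, mem_insert, not_or, N, I, mem_filter_univ] at hz
      rw [zero_add]
      gcongr
      exact (edgeDensity_lt_of_not_adj (Ne.symm hz.2.1) hz.2.2 hz.1).le
  calc ∑ v ∈ (x : Finset V), (G.degree v : ℝ)
      = ∑ z : P.parts, (#(G.interedges (x : Finset V) z) : ℝ) :=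
        mod_cast sum_degree_eq_sum_card_interedges P x
    _ ≤ _ := sum_le_sum fun z _ ↦ hedges z
    _ = (#(N ∪ I) * (n / m + 1) + d * n) * #(x : Finset V) := by
      rw [← mul_sum, sum_add_distrib, ← mul_sum, hcard_parts, ← sum_filter, filter_univ_mem,
        sum_const, nsmul_eq_mul, mul_comm]
    _ ≤ ((#N + 2 * d * m) * (n / m + 1) + d * n) * #(x : Finset V) := by
      gcongr
      have : (#(N ∪ I) : ℝ) ≤ #N + #I := mod_cast card_union_le N I
      linarith [card_insert_irregularParts_le hx hm]

lemma card_not_adj_le_of_le_sum_degree (hP : P.IsEquipartition) (hd : 0 < d) (hd' : d ≤ 1 / 2)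
    (hm : 1 ≤ d * #P.parts) (hmn : #P.parts ≤ d * Fintype.card V)
    [DecidableRel (reducedGraph G P ε d).Adj] {x : P.parts} (hx : x ∈ typicalParts G P ε d)
    (hdeg : (θ - d) * Fintype.card V * #(x : Finset V) ≤
      ∑ v ∈ (x : Finset V), (G.degree v : ℝ)) :
    (#{z | ¬(reducedGraph G P ε d).Adj x z} : ℝ) ≤ (1 - θ + 6 * d) * #P.parts := by
  have hx₀ : 0 < (#(x : Finset V) : ℝ) := mod_cast card_pos.mpr (P.nonempty_of_mem_parts x.2)
  have hle := le_of_mul_le_mul_right (hdeg.trans (sum_degree_le_mul_card_part hP hd.le hm hx)) hx₀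
  have hsplit : (#{z | (reducedGraph G P ε d).Adj x z} : ℝ) +
      #{z | ¬(reducedGraph G P ε d).Adj x z} = #P.parts := by
    rw [← Fintype.card_coe P.parts, ← card_univ]
    exact_mod_cast card_filter_add_card_filter_not _
  set n : ℝ := (Fintype.card V : ℝ)
  set m : ℝ := (#P.parts : ℝ)
  set a : ℝ := (#{z | (reducedGraph G P ε d).Adj x z} : ℝ)
  have hm₀ : 0 < m := pos_of_mul_pos_right (one_pos.trans_le hm) hd.le
  have hn₀ : 0 < n := pos_of_mul_pos_right (hm₀.trans_le hmn) hd.le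
  have hscaled : (θ - 2 * d) * m * n ≤ (a + 2 * d * m) * (1 + d) * n := by
    calc (θ - 2 * d) * m * n ≤ (a + 2 * d * m) * (n / m + 1) * m := by nlinarith
      _ = (a + 2 * d * m) * (n + m) := by field_simp
      _ ≤ (a + 2 * d * m) * (n + d * n) := by gcongr
      _ = (a + 2 * d * m) * (1 + d) * n := by ring
  have hle' := le_of_mul_le_mul_right hscaled hn₀
  have : a ≤ m := by linarith [Nat.cast_nonneg (α := ℝ) #{z | ¬(reducedGraph G P ε d).Adj x z}]
  nlinarith

theorem isNearlyOre_reducedGraph (hP : P.IsEquipartition) (hd : 0 < d) (hd' : d ≤ 1 / 2)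
    (hm : 1 ≤ d * #P.parts) (hmn : #P.parts ≤ d * Fintype.card V) (hθ₁ : θ ≤ 1)
    (hOre : ∀ x y, x ≠ y → ¬G.Adj x y → 2 * θ * Fintype.card V ≤ (G.degree x : ℝ) + G.degree y)
    [DecidableRel (reducedGraph G P ε d).Adj] :
    IsNearlyOre (reducedGraph G P ε d) (lowDegreeParts G P ((θ - d) * Fintype.card V))
      (typicalParts G P ε d) ⌈(1 - θ + 6 * d) * #P.parts⌉₊ (2 * d * #P.parts) where
  card_not_adj_le x hx hxL := by
    rw [← Nat.cast_le (α := ℝ)]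
    refine le_trans (mod_cast card_le_card (filter_subset_filter _ (subset_univ _))) <|
      (card_not_adj_le_of_le_sum_degree hP hd hd' hm hmn hx ?_).trans (Nat.le_ceil _)
    simpa [lowDegreeParts] using hxL
  card_low_not_adj_le x hx hxL := by
    refine le_trans (mod_cast card_le_card fun z hz ↦ ?_) (card_insert_irregularParts_le hx hm)
    obtain ⟨-, hzL, hadj⟩ := mem_filter.mp hz
    by_contra hzI
    obtain ⟨hzx, hzirr⟩ := not_or.mp (mem_insert.not.mp hzI)
    refine (edgeDensity_lt_of_not_adj (Ne.symm hzx) hzirr hadj).not_ge <|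
      le_edgeDensity_of_sum_degree_lt hθ₁ hOre ?_ (mem_filter.mp hxL).2 (mem_filter.mp hzL).2
    exact P.disjoint x.2 z.2 fun h ↦ hzx (Subtype.ext h.symm)

end ReducedGraph

section AlmostPerfectTiling

open Finset

variable {V W : Type*} [Fintype V] [Fintype W] {H : SimpleGraph W} {G : SimpleGraph V}
  [DecidableRel G.Adj] {ε d τ η : ℝ}

lemma card_hom_le_card_pow {ι : Type*} [Fintype ι] (R : SimpleGraph ι) [Fintype (H →g R)] :
    Fintype.card (H →g R) ≤ Fintype.card ι ^ Fintype.card W := by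
  classical
  rw [← Fintype.card_fun]
  exact Fintype.card_le_of_injective _ DFunLike.coe_injective

lemma exists_injective_adj_of_hom_reducedGraph [DecidableEq V]
    {P : Finpartition (univ : Finset V)} (hε : 0 ≤ ε) (hτ₀ : 0 < τ) (hτ : τ ≤ 1 / 2)
    (hτd : τ + ε ≤ d) (hεη : Fintype.card W * ε ≤ η * τ ^ Fintype.card W)
    (hP : ∀ x : P.parts, 2 ≤ η * τ ^ Fintype.card W * #(x : Finset V))
    (ψ : H →g reducedGraph G P ε d) {A : P.parts → Finset V} (hAP : ∀ x, A x ⊆ x)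
    (hA : ∀ x : P.parts, η * #(x : Finset V) ≤ #(A x)) :
    ∃ f : W → V, (∀ w, f w ∈ A (ψ w)) ∧ f.Injective ∧ ∀ a b, H.Adj a b → G.Adj (f a) (f b) :=
  exists_injective_adj_of_isRegularPair hε hτ₀ hτ hτd hεη (fun w ↦ hP (ψ w))
    (fun a b hab ↦ (ψ.map_adj hab).2) (fun w ↦ hAP (ψ w)) fun w ↦ by
      rw [mul_right_comm]
      gcongr
      exact hA _

lemma exists_isTiling_of_reducedGraph [Nonempty W] [DecidableEq V]
    {P : Finpartition (univ : Finset V)} (hP : P.IsEquipartition) (hm : P.parts.Nonempty)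
    (hη₀ : 0 < η) (hη₁ : η ≤ 1) (hε : 0 ≤ ε)
    (hτ₀ : 0 < τ) (hτ : τ ≤ 1 / 2) (hτd : τ + ε ≤ d)
    (hεη : Fintype.card W * ε ≤ η * τ ^ Fintype.card W)
    (hmn : (2 / (η * τ ^ Fintype.card W) + 1) * #P.parts ≤ Fintype.card V)
    [Fintype (H →g reducedGraph G P ε d)] {lam : (H →g reducedGraph G P ε d) → ℝ}
    (hlam : lam ∈ stdSimplex ℝ _)
    (hload : ∀ i, ∑ ψ, lam ψ * #{w | ψ w = i} ≤ (1 + η) * Fintype.card W / #P.parts) :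
    ∃ 𝒯 : Finset (W → V), IsTiling H G 𝒯 ∧ ((untiled 𝒯).ncard : ℝ) ≤
      2 * η * Fintype.card V + (#P.parts + Fintype.card W * #P.parts ^ Fintype.card W) := by
  set μ := η * τ ^ Fintype.card W
  have hμ : 0 < μ := by positivity
  have hm₀ : 0 < (#P.parts : ℝ) := mod_cast hm.card_pos
  have hbig : 2 / μ ≤ (Fintype.card V : ℝ) / #P.parts - 1 := by
    rwa [le_sub_iff_add_le, le_div_iff₀ hm₀]
  have hpart (x : P.parts) : 2 ≤ μ * #(x : Finset V) := by
    rw [← div_le_iff₀' hμ]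
    exact hbig.trans (div_sub_one_le_card_part hP x.2)
  obtain ⟨𝒯, h𝒯, hcard⟩ := exists_isTiling_of_fractional (ε := η) (P := fun x : P.parts ↦ x.1)
    (p := Fintype.card V / #P.parts - 1) (t := (1 + η) * Fintype.card W / #P.parts)
    (fun x z hxz ↦ P.disjoint x.2 z.2 fun h ↦ hxz (Subtype.ext h))
    (fun ψ A hAP hA ↦
      exists_injective_adj_of_hom_reducedGraph hε hτ₀ hτ hτd hεη hpart ψ hAP hA)
    hη₁ ((by positivity : 0 ≤ 2 / μ).trans hbig) (fun x ↦ div_sub_one_le_card_part hP x.2)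
    (by positivity) hlam hload
  refine ⟨𝒯, h𝒯, hcard.trans ?_⟩
  have hhom : (Fintype.card (H →g reducedGraph G P ε d) : ℝ) ≤ #P.parts ^ Fintype.card W := by
    rw [← Fintype.card_coe P.parts]
    exact_mod_cast card_hom_le_card_pow _
  set n : ℝ := (Fintype.card V : ℝ)
  set m : ℝ := (#P.parts : ℝ)
  set h : ℝ := (Fintype.card W : ℝ)
  have hh : 0 < h := Nat.cast_pos.mpr Fintype.card_pos
  have hmn' : m ≤ n := le_trans (le_mul_of_one_le_left hm₀.le (by
    linarith [show 0 ≤ 2 / μ by positivity])) hmn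
  have hcovered : (1 - 2 * η) * (n - m) ≤ h * ((1 - η) * (n / m - 1) / ((1 + η) * h / m)) := by
    calc (1 - 2 * η) * (n - m) ≤ (1 - η) / (1 + η) * (n - m) := by
          have : 1 - 2 * η ≤ (1 - η) / (1 + η) := by
            rw [le_div_iff₀ (by positivity)]
            nlinarith
          gcongr
      _ = h * ((1 - η) * (n / m - 1) / ((1 + η) * h / m)) := by field_simp
  linarith [mul_le_mul_of_nonneg_left hhom hh.le, mul_nonneg hη₀.le hm₀.le]

lemma exists_fractional_tiling_reducedGraph {r : ℕ} (g : H.Coloring (Option (Fin r)))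
    (hg : ∃ w, g w = none) (hg' : ∃ w, g w ≠ none) (hη : 0 < η) :
    ∃ d > (0 : ℝ), d ≤ 1 / 2 ∧
      ∀ {V : Type*} [Fintype V] [DecidableEq V] (G : SimpleGraph V) [DecidableRel G.Adj]
      (P : Finpartition (univ : Finset V)) (ε : ℝ) [Fintype (H →g reducedGraph G P ε d)],
      P.IsEquipartition → P.IsUniform G ε → ε ≤ d ^ 2 →
      1 ≤ d * #P.parts → #P.parts ≤ d * Fintype.card V →
      (∀ x y, x ≠ y → ¬G.Adj x y →
        2 * (1 - #{w | g w ≠ none} / (r * Fintype.card W)) * Fintype.card V ≤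
          (G.degree x : ℝ) + G.degree y) →
      ∃ lam ∈ stdSimplex ℝ (H →g reducedGraph G P ε d),
        ∀ i, ∑ ψ, lam ψ * #{w | ψ w = i} ≤ (1 + η) * Fintype.card W / #P.parts := by
  classical
  obtain ⟨δ₀, hδ₀, hfractional⟩ := exists_fractional_tiling g hg hg' hη
  set invχ : ℝ := #{w | g w ≠ none} / (r * Fintype.card W)
  have hinvχ : 0 ≤ invχ := by positivity
  obtain ⟨d, hd₀, hd, hdδ⟩ : ∃ d > (0 : ℝ), d ≤ 1 / 2 ∧ 6 * d ≤ δ₀ :=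
    ⟨min (1 / 2) (δ₀ / 6), by positivity, min_le_left _ _, by
      linarith [min_le_right (1 / 2) (δ₀ / 6)]⟩
  refine ⟨d, hd₀, hd, fun {V} _ _ G _ P ε _ hP hPε hεd hm hmn hOre ↦ ?_⟩
  have hore := isNearlyOre_reducedGraph (ε := ε) hP hd₀ hd hm hmn (by linarith) hOre
  rw [sub_sub_cancel] at hore
  rw [← Fintype.card_coe] at hm hore ⊢
  refine hfractional (6 * d) (by positivity) hdδ _ _ (typicalParts G P ε d) (by linarith) ?_
    (hore.mono subset_rfl (by gcongr; norm_num))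
  rw [Fintype.card_coe]
  refine le_trans ?_ (one_sub_mul_card_le_card_typicalParts hd₀ hεd hPε)
  gcongr
  linarith

theorem exists_isTiling_of_isUniform {r : ℕ} (g : H.Coloring (Option (Fin r)))
    (hg : ∃ w, g w = none) (hg' : ∃ w, g w ≠ none) (hη₀ : 0 < η) (hη₁ : η ≤ 1) :
    ∃ ε > (0 : ℝ), ∃ (l : ℕ) (C : ℝ), 0 ≤ C ∧
      ∀ {V : Type*} [Fintype V] [DecidableEq V] (G : SimpleGraph V) [DecidableRel G.Adj]
      (P : Finpartition (univ : Finset V)), P.IsEquipartition → P.IsUniform G ε →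
      l ≤ #P.parts → C * #P.parts ≤ Fintype.card V →
      (∀ x y, x ≠ y → ¬G.Adj x y →
        2 * (1 - #{w | g w ≠ none} / (r * Fintype.card W)) * Fintype.card V ≤
          (G.degree x : ℝ) + G.degree y) →
      ∃ 𝒯 : Finset (W → V), IsTiling H G 𝒯 ∧ ((untiled 𝒯).ncard : ℝ) ≤
        2 * η * Fintype.card V + (#P.parts + Fintype.card W * #P.parts ^ Fintype.card W) := by
  have : Nonempty W := ⟨hg.choose⟩
  obtain ⟨d, hd₀, hd, hfractional⟩ := exists_fractional_tiling_reducedGraph g hg hg' hη₀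
  set h := Fintype.card W
  have hh : 0 < (h : ℝ) := Nat.cast_pos.mpr Fintype.card_pos
  obtain ⟨ε, hε₀, hεd, hεη⟩ : ∃ ε > (0 : ℝ), ε ≤ d ^ 2 ∧ h * ε ≤ η * (d / 2) ^ h :=
    ⟨min (d ^ 2) (η * (d / 2) ^ h / h), by positivity, min_le_left _ _, by
      rw [← le_div_iff₀' hh]
      exact min_le_right _ _⟩
  refine ⟨ε, hε₀, ⌈1 / d⌉₊, max (1 / d) (2 / (η * (d / 2) ^ h) + 1), by positivity,
    fun {V} _ _ G _ P hP hPε hlm hmn hOre ↦ ?_⟩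
  have hm : 1 ≤ d * #P.parts := (div_le_iff₀' hd₀).mp (Nat.ceil_le.mp hlm)
  have hm₀ : 0 < #P.parts := Nat.cast_pos.mp (pos_of_mul_pos_right (one_pos.trans_le hm) hd₀.le)
  rw [max_mul_of_nonneg _ _ (Nat.cast_nonneg _), max_le_iff] at hmn
  have hmn_d : #P.parts ≤ d * Fintype.card V := by
    rw [← div_le_iff₀' hd₀, ← one_div_mul_eq_div]
    exact hmn.1
  have : Finite (H →g reducedGraph G P ε d) := DFunLike.finite _
  have : Fintype (H →g reducedGraph G P ε d) := Fintype.ofFinite _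
  obtain ⟨lam, hlam, hload⟩ := hfractional G P ε hP hPε hεd hm hmn_d hOre
  exact exists_isTiling_of_reducedGraph hP (card_pos.mp hm₀) hη₀ hη₁ hε₀.le (half_pos hd₀)
    (by linarith) (by nlinarith) hεη hmn.2 hlam hload

theorem exists_isTiling_of_ore {r : ℕ} (g : H.Coloring (Option (Fin r)))
    (hg : ∃ w, g w = none) (hg' : ∃ w, g w ≠ none) (hη : 0 < η) :
    ∃ n₀ : ℕ, ∀ {V : Type*} [Fintype V] (G : SimpleGraph V) [DecidableRel G.Adj],
      n₀ ≤ Fintype.card V →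
      (∀ x y, x ≠ y → ¬G.Adj x y →
        2 * (1 - #{w | g w ≠ none} / (r * Fintype.card W)) * Fintype.card V ≤
          (G.degree x : ℝ) + G.degree y) →
      ∃ 𝒯 : Finset (W → V), IsTiling H G 𝒯 ∧ ((untiled 𝒯).ncard : ℝ) ≤ η * Fintype.card V := by
  classical
  obtain ⟨η', hη'₀, hη'₁, hη'⟩ : ∃ η' > (0 : ℝ), η' ≤ 1 ∧ 3 * η' ≤ η :=
    ⟨min 1 (η / 3), by positivity, min_le_left _ _, by linarith [min_le_right 1 (η / 3)]⟩
  obtain ⟨ε, hε, l, C, hC, htiling⟩ := exists_isTiling_of_isUniform g hg hg' hη'₀ hη'₁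
  set h := Fintype.card W
  set M := SzemerediRegularity.bound ε l
  refine ⟨max l (max ⌈C * M⌉₊ ⌈(M + h * M ^ h) / η'⌉₊), fun {V} _ G _ hn hOre ↦ ?_⟩
  rw [max_le_iff, max_le_iff, Nat.ceil_le, Nat.ceil_le, div_le_iff₀' hη'₀] at hn
  obtain ⟨hln, hCn, hMn⟩ := hn
  obtain ⟨P, hP, hlP, hPM, hPε⟩ := szemeredi_regularity G hε hln
  have hPM' : (#P.parts : ℝ) ≤ M := Nat.cast_le.mpr hPM
  obtain ⟨𝒯, h𝒯, huntiled⟩ := htiling G P hP hPε hlP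
    ((mul_le_mul_of_nonneg_left hPM' hC).trans hCn) hOre
  refine ⟨𝒯, h𝒯, huntiled.trans ?_⟩
  calc 2 * η' * Fintype.card V + (#P.parts + h * (#P.parts : ℝ) ^ h)
      ≤ 2 * η' * Fintype.card V + (M + h * (M : ℝ) ^ h) := by gcongr
    _ ≤ 3 * η' * Fintype.card V := by linarith
    _ ≤ η * Fintype.card V := by gcongr

theorem kuhn_osthus_treglown_general {k : ℕ} (c : H.Coloring (Fin k)) (i : Fin k)
    (hi : ∃ w, c w = i) (hi' : ∃ w, c w ≠ i) (hη : 0 < η) :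
    ∃ n₀ : ℕ, ∀ {V : Type*} [Fintype V] (G : SimpleGraph V) [DecidableRel G.Adj],
      n₀ ≤ Fintype.card V →
      (∀ x y, x ≠ y → ¬G.Adj x y →
        2 * (1 - 1 / ((k - 1) * Fintype.card W / (Fintype.card W - #{w | c w = i}))) *
          Fintype.card V ≤ (G.degree x : ℝ) + G.degree y) →
      ∃ 𝒯 : Finset (W → V), IsTiling H G 𝒯 ∧ ((untiled 𝒯).ncard : ℝ) ≤ η * Fintype.card V := by
  obtain - | r := k
  · exact i.elim0
  let g : H.Coloring (Option (Fin r)) := H.recolorOfEquiv (finSuccEquiv' i) c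
  have hg (w : W) : g w = none ↔ c w = i := finSuccEquiv'_eq_none.trans eq_comm
  have hneck : #{w | c w = i} + #{w | g w ≠ none} = (Fintype.card W : ℝ) := by
    simp only [← hg]
    exact_mod_cast card_filter_none_add_card_filter_ne_none g
  obtain ⟨n₀, hn₀⟩ := exists_isTiling_of_ore g (by simpa only [hg] using hi)
    (by simpa only [ne_eq, hg] using hi') hη
  refine ⟨n₀, fun {V} _ G _ hn hOre ↦ hn₀ G hn ?_⟩
  rwa [← hneck, add_sub_cancel_left, hneck, one_div_div, Nat.cast_succ, add_sub_cancel_right]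
    at hOre

end AlmostPerfectTiling

/-- **Theorem (Kühn–Osthus–Treglown).** For every graph `H` with at least one edge and
every `η > 0` there is `n₀` such that every graph `G` on `n ≥ n₀` vertices with
`d(x)+d(y) ≥ 2(1 - 1/χ_cr(H))n` for all distinct nonadjacent `x, y` has an `H`-tiling
covering all but at most `ηn` vertices. -/
theorem kuhn_osthus_treglown
    {W : Type} [Fintype W] (H : SimpleGraph W) (hedge : ∃ a b : W, H.Adj a b)
    (k σ : ℕ) (hk : H.chromaticNumber = (k : ℕ∞)) (hσ : IsMinColorClassSize H k σ)
    (η : ℝ) (hη : 0 < η) :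
    ∃ n₀ : ℕ, ∀ (V : Type) [Fintype V] (G : SimpleGraph V) [DecidableRel G.Adj],
      n₀ ≤ Fintype.card V →
      (∀ x y : V, x ≠ y → ¬ G.Adj x y →
        2 * (1 - 1 / (((k : ℝ) - 1) * (Fintype.card W) / ((Fintype.card W : ℝ) - σ))) *
          (Fintype.card V) ≤ (G.degree x : ℝ) + (G.degree y : ℝ)) →
      ∃ 𝒯 : Finset (W → V), IsTiling H G 𝒯 ∧
        ((untiled 𝒯).ncard : ℝ) ≤ η * (Fintype.card V) := by
  classical
  obtain ⟨⟨c, i, rfl⟩, -⟩ := hσ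
  obtain ⟨a, b, hab⟩ := hedge
  have hi : ∃ w, c w = i := SimpleGraph.le_chromaticNumber_iff_forall_surjective.mp hk.ge c i
  have hi' : ∃ w, c w ≠ i := by
    by_contra! h
    exact c.valid hab ((h a).trans (h b).symm)
  obtain ⟨n₀, hn₀⟩ := kuhn_osthus_treglown_general c i hi hi' hη
  exact ⟨n₀, fun V _ G _ hn hOre ↦ hn₀ G hn hOre⟩
end

section
/- (Komlós.) For every graph H containing at least one edge and every ε > 0, there exists a threshold n₀ = n₀(H, ε) such that if n ≥ n₀ and G is an n-vertex graph with minimum degree δ(G) ≥ (1 − 1/χ_cr(H))·n, then G contains an H-tiling that covers all but at most εn vertices. -/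
/-!
Szemerédi's regularity lemma replaces `G` by a reduced graph on the clusters, which inherits the
minimum degree condition up to a small loss. In a graph satisfying this condition the vertices can
be given any nonnegative weights, and `H` still has a light homomorphic image: choose a clique on
`χ(H)` vertices greedily, always taking a lightest available vertex, send the smallest colour class
of `H` to the last (heaviest) vertex of the clique, and average over the cyclic shifts of the other
colours. By the minimax theorem this is dual to the existence of a fractional `H`-tiling of the
reduced graph in which no cluster is overused. After rounding, the copies of `H` are embedded
greedily, one after the other, into what remains of the regular pairs.
-/

universe u

namespace Komlos

open Finset SimpleGraph

section FractionalTiling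

variable {W M : Type*} [Fintype W] [Fintype M]

theorem card_sdiff_neighborFinset_le [DecidableEq M] (R : SimpleGraph M) [DecidableRel R.Adj]
    (S : Finset M) (v : M) :
    (#(S \ R.neighborFinset v) : ℝ) ≤ Fintype.card M - R.degree v := by
  have hle : #(S \ R.neighborFinset v) ≤ #(R.neighborFinset v)ᶜ :=
    card_le_card fun u hu => mem_compl.2 (mem_sdiff.1 hu).2
  have hcompl := card_compl_add_card (R.neighborFinset v)
  rw [card_neighborFinset_eq_degree] at hcompl
  rw [le_sub_iff_add_le]
  exact_mod_cast (by lia : #(S \ R.neighborFinset v) + R.degree v ≤ Fintype.card M)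

-- The clique is chosen greedily, each time taking a vertex of least weight among the common
-- neighbours of the vertices chosen so far; at most `q` vertices are lost at each step.
theorem exists_clique_weight_le (R : SimpleGraph M) [DecidableRel R.Adj] (y : M → ℝ) {q : ℝ}
    (hq : 0 ≤ q) (hR : ∀ v, Fintype.card M - q ≤ R.degree v) (j : ℕ) (S : Finset M)
    (hS : j * q < #S) :
    ∃ f : completeGraph (Fin (j + 1)) →g R, (∀ i, f i ∈ S) ∧
      q * ∑ i : Fin j, y (f i.castSucc) + (#S - j * q) * y (f (Fin.last j)) ≤ ∑ u ∈ S, y u := by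
  classical
  induction j generalizing S with
  | zero =>
    have hne : S.Nonempty := card_pos.1 (by simpa using hS)
    obtain ⟨v₀, hv₀, hmin⟩ := S.exists_min_image y hne
    refine ⟨⟨fun _ => v₀, fun {a b} hab => absurd (Subsingleton.elim (α := Fin 1) a b) hab⟩,
      fun _ => hv₀, ?_⟩
    simpa using card_nsmul_le_sum S y (y v₀) hmin
  | succ j ih =>
    push_cast at hS
    have hne : S.Nonempty := card_pos.1 <| by
      exact_mod_cast (by positivity : 0 ≤ (j + 1) * q).trans_lt hS
    obtain ⟨v₀, hv₀, hmin⟩ := S.exists_min_image y hne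
    set N := R.neighborFinset v₀
    have hlost : (#(S \ N) : ℝ) ≤ q := by
      linarith [hR v₀, card_sdiff_neighborFinset_le R S v₀]
    have hcard : (#(S ∩ N) : ℝ) + #(S \ N) = #S := by
      exact_mod_cast card_inter_add_card_sdiff S N
    obtain ⟨f, hfS, hsum⟩ := ih (S ∩ N) (by linarith)
    have hadj (i) : R.Adj v₀ (f i) := (R.mem_neighborFinset _ _).1 (mem_inter.1 (hfS i)).2
    refine ⟨⟨Fin.cons v₀ f, fun {a b} => ?_⟩, Fin.cases hv₀ fun i => (mem_inter.1 (hfS i)).1, ?_⟩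
    · refine Fin.cases ?_ (fun a => ?_) a <;> refine Fin.cases ?_ (fun b => ?_) b
      · simp
      · exact fun _ => hadj b
      · exact fun _ => (hadj a).symm
      · exact fun hab => f.map_rel fun h => hab (congrArg Fin.succ h)
    · change q * ∑ i : Fin (j + 1), y (Fin.cons (α := fun _ => M) v₀ f i.castSucc) +
        (#S - (j + 1 : ℕ) * q) * y (f (Fin.last j)) ≤ _
      simp only [Fin.sum_univ_succ, Fin.castSucc_zero, Fin.cons_zero, ← Fin.succ_castSucc,
        Fin.cons_succ]
      have hout : #(S \ N) * y v₀ ≤ ∑ u ∈ S \ N, y u := by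
        simpa using card_nsmul_le_sum (S \ N) y (y v₀) fun u hu => hmin u (mem_sdiff.1 hu).1
      have hlast := hmin _ (mem_inter.1 (hfS (Fin.last j))).1
      have hgain := mul_nonneg (sub_nonneg.2 hlost) (sub_nonneg.2 hlast)
      push_cast
      rw [← sum_inter_add_sum_sdiff S N y, ← hcard]
      linear_combination hsum + hout + hgain

/-- The permutation of `Fin (p + 1)` that fixes the last element and adds `r` to the others
modulo `p`. Used to average over the assignments of colours to the vertices of a clique. -/
def shiftFixingLast {p : ℕ} [NeZero p] (r : Fin p) : Equiv.Perm (Fin (p + 1)) :=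
  (finSuccEquivLast.trans (Equiv.optionCongr (Equiv.addRight r))).trans finSuccEquivLast.symm

theorem sum_shiftFixingLast {p : ℕ} [NeZero p] (t : Fin (p + 1) → ℝ) (a : Fin (p + 1)) :
    ∑ r, t (shiftFixingLast r a) =
      if a = Fin.last p then p * t (Fin.last p) else ∑ i : Fin p, t i.castSucc := by
  refine Fin.lastCases ?_ (fun a => ?_) a
  · simp [shiftFixingLast]
  · simpa [shiftFixingLast, Fin.castSucc_ne_last] using
      Equiv.sum_comp (Equiv.addLeft a) fun i : Fin p => t i.castSucc

theorem exists_perm_sum_le {p : ℕ} [NeZero p] (c : W → Fin (p + 1)) (t : Fin (p + 1) → ℝ) :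
    ∃ π : Equiv.Perm (Fin (p + 1)), p * ∑ w, t (π (c w)) ≤
      (Fintype.card W - #{w | c w = Fin.last p}) * ∑ i : Fin p, t i.castSucc +
        p * #{w | c w = Fin.last p} * t (Fin.last p) := by
  have hcard : (#{w | c w ≠ Fin.last p} : ℝ) = Fintype.card W - #{w | c w = Fin.last p} := by
    rw [eq_sub_iff_add_eq']
    exact_mod_cast card_filter_add_card_filter_not (s := univ) fun w => c w = Fin.last p
  have htotal : ∑ r : Fin p, ∑ w, t (shiftFixingLast r (c w)) =
      (Fintype.card W - #{w | c w = Fin.last p}) * ∑ i : Fin p, t i.castSucc +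
        p * #{w | c w = Fin.last p} * t (Fin.last p) := by
    rw [sum_comm, ← hcard]
    simp only [sum_shiftFixingLast, sum_ite, sum_const, nsmul_eq_mul]
    ring
  obtain ⟨r, -, hr⟩ := exists_min_image univ
    (fun r : Fin p => ∑ w, t (shiftFixingLast r (c w))) univ_nonempty
  refine ⟨shiftFixingLast r, ?_⟩
  rw [← htotal]
  simpa using card_nsmul_le_sum univ _ _ hr

theorem exists_hom_sum_le_of_le_degree {H : SimpleGraph W} {p : ℕ} [NeZero p]
    (c : H.Coloring (Fin (p + 1))) (R : SimpleGraph M) [DecidableRel R.Adj] {q θ : ℝ} (hq : 0 ≤ q)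
    (hR : ∀ v, Fintype.card M - q ≤ R.degree v) (hpq : p * q < Fintype.card M) (hθ : 0 ≤ θ)
    (hrest : θ * Fintype.card M * (Fintype.card W - #{w | c w = Fin.last p}) ≤
      Fintype.card W * (p * q))
    (hlast : θ * Fintype.card M * #{w | c w = Fin.last p} ≤
      Fintype.card W * (Fintype.card M - p * q))
    (y : M → ℝ) (hy : 0 ≤ y) :
    ∃ ψ : H →g R, θ * Fintype.card M * ∑ w, y (ψ w) ≤ Fintype.card W * ∑ v, y v := by
  obtain ⟨f, -, hf⟩ := exists_clique_weight_le R y hq hR p univ (by simpa using hpq)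
  obtain ⟨π, hπ⟩ := exists_perm_sum_le c (y ∘ f)
  refine ⟨(f.comp (Iso.completeGraph π).toHom).comp c, ?_⟩
  have hp : (0 : ℝ) < p := by exact_mod_cast NeZero.pos p
  simp only [card_univ, Function.comp_apply] at hf hπ
  set σ := (#{w | c w = Fin.last p} : ℝ)
  set h := (Fintype.card W : ℝ)
  set m := (Fintype.card M : ℝ)
  set T := ∑ i : Fin p, y (f i.castSucc)
  set L := y (f (Fin.last p))
  have hT : 0 ≤ T := sum_nonneg fun _ _ => hy _
  have hL : 0 ≤ L := hy _
  refine le_of_mul_le_mul_left ?_ hp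
  calc p * (θ * m * ∑ w, y (f (π (c w))))
      = θ * m * (p * ∑ w, y (f (π (c w)))) := by ring
    _ ≤ θ * m * ((h - σ) * T + p * σ * L) := by gcongr
    _ = θ * m * (h - σ) * T + p * (θ * m * σ) * L := by ring
    _ ≤ h * (p * q) * T + p * (h * (m - p * q)) * L := by gcongr
    _ = p * (h * (q * T + (m - p * q) * L)) := by ring
    _ ≤ p * (h * ∑ v, y v) := by gcongr

/-- The number `1 - 1 / χ`, where `χ` is the expression defining the critical chromatic number,
evaluated for the colouring `c` and with its last colour class in the role of the smallest one. -/
noncomputable def degreeThreshold {H : SimpleGraph W} {p : ℕ} (c : H.Coloring (Fin (p + 1))) : ℝ :=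
  1 - (Fintype.card W - #{w | c w = Fin.last p}) / (p * Fintype.card W)

theorem degreeThreshold_mem_Icc {H : SimpleGraph W} {p : ℕ} [NeZero p]
    (c : H.Coloring (Fin (p + 1))) : degreeThreshold c ∈ Set.Icc 0 1 := by
  have hp : (1 : ℝ) ≤ p := by exact_mod_cast NeZero.one_le
  have hσ : (#{w | c w = Fin.last p} : ℝ) ≤ Fintype.card W := by exact_mod_cast card_le_univ _
  have hle : (Fintype.card W - #{w | c w = Fin.last p} : ℝ) ≤ p * Fintype.card W :=
    (sub_le_self _ (Nat.cast_nonneg _)).trans (le_mul_of_one_le_left (Nat.cast_nonneg _) hp)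
  exact ⟨sub_nonneg.2 (div_le_one_of_le₀ hle (by positivity)),
    sub_le_self _ (div_nonneg (sub_nonneg.2 hσ) (by positivity))⟩

theorem exists_hom_sum_le [Nonempty M] {H : SimpleGraph W} {p : ℕ} [NeZero p]
    (c : H.Coloring (Fin (p + 1))) (hc : ∃ w, c w = Fin.last p) (R : SimpleGraph M)
    [DecidableRel R.Adj] {δ : ℝ} (hδ : 0 ≤ δ) (hδ' : p * δ * Fintype.card W < 1)
    (hR : ∀ v, (degreeThreshold c - δ) * Fintype.card M ≤ R.degree v)
    (y : M → ℝ) (hy : 0 ≤ y) :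
    ∃ ψ : H →g R, (1 - p * δ * Fintype.card W) * Fintype.card M * ∑ w, y (ψ w) ≤
      Fintype.card W * ∑ v, y v := by
  have hσ : (1 : ℝ) ≤ #{w | c w = Fin.last p} := by
    obtain ⟨w, hw⟩ := hc
    exact_mod_cast card_pos.2 ⟨w, by simpa using hw⟩
  have hσh : (#{w | c w = Fin.last p} : ℝ) ≤ Fintype.card W := by
    exact_mod_cast card_le_univ {w | c w = Fin.last p}
  have hm : (0 : ℝ) < Fintype.card M := by exact_mod_cast Fintype.card_pos
  have hp : (0 : ℝ) < p := by exact_mod_cast NeZero.pos p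
  have hq : 0 ≤ ((Fintype.card W - #{w | c w = Fin.last p}) / (p * Fintype.card W) + δ) *
      Fintype.card M := by
    have := sub_nonneg.2 hσh
    positivity
  simp only [degreeThreshold] at hR
  refine exists_hom_sum_le_of_le_degree c R hq (fun v => by linarith [hR v]) ?_
    (by linarith) ?_ ?_ y hy
  all_goals
    set σ := (#{w | c w = Fin.last p} : ℝ)
    set h := (Fintype.card W : ℝ)
    set m := (Fintype.card M : ℝ)
    set q := ((h - σ) / (p * h) + δ) * m with hq_def
    have hh : 0 < h := by linarith
    have hpq : h * (p * q) = (h - σ) * m + p * δ * h * m := by rw [hq_def]; field_simp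
    have hloss : 0 ≤ p * δ * h * m := by positivity
  · refine lt_of_mul_lt_mul_left (a := h) ?_ hh.le
    linear_combination hpq + m * hδ' + m * hσ
  · linear_combination (h - σ) * hloss + hloss - hpq
  · linear_combination hpq + (σ - 1) * hloss

theorem exists_mem_stdSimplex_forall_vecMul_le {I : Type*} [Fintype I] [Nonempty M]
    (A : Matrix I M ℝ) {B : ℝ} (hA : ∀ y ∈ stdSimplex ℝ M, ∃ i, A.mulVec y i ≤ B) :
    ∃ l ∈ stdSimplex ℝ I, ∀ v, Matrix.vecMul l A v ≤ B := by
  classical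
  let F : (I → ℝ) →ₗ[ℝ] (M → ℝ) →ₗ[ℝ] ℝ := Matrix.toLinearMap₂' ℝ A
  have hF (l y) : F l y = l ⬝ᵥ A.mulVec y := Matrix.toLinearMap₂'_apply' A l y
  obtain ⟨y₀, hy₀⟩ : (stdSimplex ℝ M).Nonempty :=
    ⟨_, single_mem_stdSimplex ℝ (Classical.arbitrary M)⟩
  obtain ⟨i₀, -⟩ := hA y₀ hy₀
  obtain ⟨l, hl, y, hy, hsaddle⟩ := Sion.exists_isSaddlePointOn (f := fun l y => F l y)
    ⟨_, single_mem_stdSimplex ℝ i₀⟩ (convex_stdSimplex ℝ I) (isCompact_stdSimplex ℝ I)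
    (fun y _ =>
      (F.flip y).continuous_of_finiteDimensional.lowerSemicontinuous.lowerSemicontinuousOn _)
    (fun y _ => ((F.flip y).convexOn (convex_stdSimplex ℝ I)).quasiconvexOn)
    (convex_stdSimplex ℝ M) ⟨y₀, hy₀⟩ (isCompact_stdSimplex ℝ M)
    (fun l _ =>
      (F l).continuous_of_finiteDimensional.upperSemicontinuous.upperSemicontinuousOn _)
    (fun l _ => ((F l).concaveOn (convex_stdSimplex ℝ M)).quasiconcaveOn)
  obtain ⟨i, hi⟩ := hA y hy
  refine ⟨l, hl, fun v => ?_⟩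
  have hle := hsaddle _ (single_mem_stdSimplex ℝ i) _ (single_mem_stdSimplex ℝ v)
  simp only [hF, Matrix.dotProduct_mulVec l, dotProduct_single_one, single_one_dotProduct] at hle
  exact hle.trans hi

theorem exists_fractional_tiling [Nonempty M] {H : SimpleGraph W} {p : ℕ} [NeZero p]
    (c : H.Coloring (Fin (p + 1))) (hc : ∃ w, c w = Fin.last p) (R : SimpleGraph M)
    [DecidableRel R.Adj] [Fintype (H →g R)] [DecidableEq M] {δ : ℝ} (hδ : 0 ≤ δ)
    (hδ' : p * δ * Fintype.card W < 1)
    (hR : ∀ v, (degreeThreshold c - δ) * Fintype.card M ≤ R.degree v) :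
    ∃ l ∈ stdSimplex ℝ (H →g R), ∀ v, ∑ ψ, l ψ * #{w | ψ w = v} ≤
      Fintype.card W / ((1 - p * δ * Fintype.card W) * Fintype.card M) := by
  refine exists_mem_stdSimplex_forall_vecMul_le
    (Matrix.of fun (ψ : H →g R) v => (#{w | ψ w = v} : ℝ)) fun y hy => ?_
  obtain ⟨ψ, hψ⟩ := exists_hom_sum_le c hc R hδ hδ' hR y hy.1
  have hm : (0 : ℝ) < Fintype.card M := by exact_mod_cast Fintype.card_pos
  have hcount : ∑ v, #{w | ψ w = v} * y v = ∑ w, y (ψ w) := by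
    simp [← sum_fiberwise' univ ψ y]
  refine ⟨ψ, ?_⟩
  rw [le_div_iff₀' (mul_pos (by linarith) hm)]
  simpa [Matrix.mulVec, dotProduct, hcount, hy.2] using hψ

end FractionalTiling

theorem forall_adj_update {V W : Type*} [DecidableEq W] {G : SimpleGraph V} {H : SimpleGraph W}
    {S : Finset W} {w : W} {v : V} {f : W → V} (hwS : w ∉ S)
    (hv : ∀ u ∈ S, H.Adj w u → G.Adj v (f u))
    (hf : ∀ a ∈ S, ∀ b ∈ S, H.Adj a b → G.Adj (f a) (f b)) :
    ∀ a ∈ insert w S, ∀ b ∈ insert w S,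
      H.Adj a b → G.Adj (Function.update f w v a) (Function.update f w v b) := by
  have hupdate : ∀ u ∈ S, Function.update f w v u = f u := fun u hu =>
    Function.update_of_ne (ne_of_mem_of_not_mem hu hwS) _ _
  simp only [forall_mem_insert, Function.update_self]
  refine ⟨⟨fun h => (H.irrefl h).elim, fun u hu => ?_⟩, fun u hu => ⟨?_, fun b hb => ?_⟩⟩
  · rw [hupdate u hu]; exact hv u hu
  · rw [hupdate u hu]; exact fun h => (hv u hu h.symm).symm
  · rw [hupdate u hu, hupdate b hb]; exact hf u hu b hb

section LowerRegular

variable {V : Type*} {G : SimpleGraph V} [DecidableRel G.Adj] {d τ : ℝ} {A B : Finset V}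

theorem card_interedges_eq_sum (G : SimpleGraph V) [DecidableRel G.Adj] (s t : Finset V) :
    #(G.interedges s t) = ∑ v ∈ s, #{x ∈ t | G.Adj v x} := by
  simp_rw [interedges_def, card_filter, sum_product]

/-- The pair `(A, B)` has density at least `d` on all pairs of subsets with at least `τ` elements
each. This is the part of `ε`-regularity used for embedding; the threshold `τ` is an absolute size,
so that the property is inherited by subsets of `A` and `B`. -/
def IsLowerRegular (G : SimpleGraph V) [DecidableRel G.Adj] (d τ : ℝ) (A B : Finset V) : Prop :=
  ∀ s ⊆ A, ∀ t ⊆ B, τ ≤ #s → τ ≤ #t → d ≤ G.edgeDensity s t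

theorem IsLowerRegular.mono {A' B' : Finset V} (h : IsLowerRegular G d τ A B) (hA : A' ⊆ A)
    (hB : B' ⊆ B) : IsLowerRegular G d τ A' B' :=
  fun s hs t ht => h s (hs.trans hA) t (ht.trans hB)

theorem isLowerRegular_of_isUniform {ε γ : ℝ} (h : G.IsUniform ε A B) (hγ : γ ≤ G.edgeDensity A B)
    (hA : #A * ε ≤ τ) (hB : #B * ε ≤ τ) : IsLowerRegular G (γ - ε) τ A B := by
  intro s hs t ht hsτ htτ
  linarith [(abs_lt.1 (h hs ht (hA.trans hsτ) (hB.trans htτ))).1]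

theorem IsLowerRegular.card_filter_lt (h : IsLowerRegular G d τ A B) (hτ : 0 < τ) (hB : τ ≤ #B) :
    #{v ∈ A | (#{x ∈ B | G.Adj v x} : ℝ) < d * #B} < τ := by
  by_contra! hbad
  set s := {v ∈ A | (#{x ∈ B | G.Adj v x} : ℝ) < d * #B}
  have hs : (0 : ℝ) < #s := hτ.trans_le hbad
  have hdensity := h s (filter_subset _ _) B subset_rfl hbad hB
  rw [edgeDensity_def, Rat.cast_div, Rat.cast_mul] at hdensity
  push_cast at hdensity
  rw [le_div_iff₀ (mul_pos hs (hτ.trans_le hB)), card_interedges_eq_sum] at hdensity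
  have hfew : ∑ v ∈ s, (#{x ∈ B | G.Adj v x} : ℝ) < ∑ _v ∈ s, d * #B :=
    sum_lt_sum_of_nonempty (card_pos.1 (by exact_mod_cast hs)) fun v hv => (mem_filter.1 hv).2
  rw [sum_const, nsmul_eq_mul] at hfew
  push_cast at hdensity
  linarith

theorem exists_forall_mul_card_le {W : Type*} (S : Finset W) (C : W → Finset V) (hτ : 0 < τ)
    (hC : ∀ u ∈ S, τ ≤ #(C u)) (hreg : ∀ u ∈ S, IsLowerRegular G d τ A (C u))
    (hA : #S * τ < #A) :
    ∃ v ∈ A, ∀ u ∈ S, d * #(C u) ≤ #{x ∈ C u | G.Adj v x} := by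
  classical
  by_contra! hbad
  have hcover : A ⊆ S.biUnion fun u => {v ∈ A | (#{x ∈ C u | G.Adj v x} : ℝ) < d * #(C u)} := by
    intro v hv
    simpa [hv] using hbad v hv
  have hsmall : (#A : ℝ) ≤ ∑ _u ∈ S, τ := calc
    (#A : ℝ) ≤ ∑ u ∈ S, (#{v ∈ A | (#{x ∈ C u | G.Adj v x} : ℝ) < d * #(C u)} : ℝ) := by
      exact_mod_cast (card_le_card hcover).trans card_biUnion_le
    _ ≤ ∑ _u ∈ S, τ := sum_le_sum fun u hu => ((hreg u hu).card_filter_lt hτ (hC u hu)).le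
  rw [sum_const, nsmul_eq_mul] at hsmall
  linarith

theorem exists_shrunken_candidates {W : Type*} (H : SimpleGraph W) (hd1 : d ≤ 1) (hτ : 1 ≤ τ)
    (w : W) (S : Finset W) (C : W → Finset V) (hA : (#S + 1) * τ ≤ d / 2 * #A)
    (hC : ∀ u ∈ S, (#S + 1) * τ ≤ d / 2 * #(C u))
    (hreg : ∀ u ∈ S, H.Adj w u → IsLowerRegular G d τ A (C u)) :
    ∃ v ∈ A, ∃ C' : W → Finset V, ∀ u ∈ S, C' u ⊆ C u ∧ v ∉ C' u ∧
      (H.Adj w u → ∀ x ∈ C' u, G.Adj v x) ∧ d / 2 * #(C u) ≤ #(C' u) := by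
  classical
  have hshrink (n : ℕ) : d * n ≤ n := mul_le_of_le_one_left (by positivity) hd1
  have hτS : 0 ≤ #S * τ := by positivity
  obtain ⟨v, hvA, hv⟩ := exists_forall_mul_card_le (A := A) (G := G) (d := d) {u ∈ S | H.Adj w u} C
    (zero_lt_one.trans_le hτ)
    (fun u hu => by linarith [hC u (mem_filter.1 hu).1, hshrink #(C u)])
    (fun u hu => hreg u (mem_filter.1 hu).1 (mem_filter.1 hu).2)
    (calc (#{u ∈ S | H.Adj w u} : ℝ) * τ ≤ #S * τ := by gcongr; exact filter_subset _ _
      _ < #A := by linarith [hshrink #A])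
  refine ⟨v, hvA, fun u => {x ∈ C u | H.Adj w u → G.Adj v x}.erase v, fun u hu =>
    ⟨(erase_subset _ _).trans (filter_subset _ _), notMem_erase _ _,
      fun hwu x hx => (mem_filter.1 (mem_of_mem_erase hx)).2 hwu, ?_⟩⟩
  have hkeep : d * #(C u) ≤ #{x ∈ C u | H.Adj w u → G.Adj v x} := by
    by_cases hwu : H.Adj w u
    · simpa [hwu] using hv u (mem_filter.2 ⟨hu, hwu⟩)
    · simpa [hwu] using hshrink #(C u)
  have herase : (#{x ∈ C u | H.Adj w u → G.Adj v x} : ℝ) ≤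
      #({x ∈ C u | H.Adj w u → G.Adj v x}.erase v) + 1 := by
    exact_mod_cast Nat.sub_le_iff_le_add.1 pred_card_le_card_erase
  linarith [hC u hu]

-- Embed one vertex at a time, keeping for each remaining vertex a candidate set that shrinks by a
-- factor of at most `d / 2` at each step.
theorem exists_injOn_forall_adj {W : Type*} [Nonempty V] (H : SimpleGraph W) (hd : 0 < d)
    (hd1 : d ≤ 1) (hτ : 1 ≤ τ) (S : Finset W) (C : W → Finset V)
    (hC : ∀ w ∈ S, #S * τ ≤ (d / 2) ^ #S * #(C w))
    (hreg : ∀ a ∈ S, ∀ b ∈ S, H.Adj a b → IsLowerRegular G d τ (C a) (C b)) :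
    ∃ f : W → V, (∀ w ∈ S, f w ∈ C w) ∧ Set.InjOn f S ∧
      ∀ a ∈ S, ∀ b ∈ S, H.Adj a b → G.Adj (f a) (f b) := by
  classical
  induction S using Finset.induction_on generalizing C with
  | empty => simp
  | insert w S hwS ih =>
    have hpow : (d / 2) ^ #S ≤ 1 := pow_le_one₀ (by positivity) (by linarith)
    have hC : ∀ u ∈ insert w S, (#S + 1) * τ ≤ (d / 2) ^ #S * (d / 2 * #(C u)) := by
      simpa [card_insert_of_notMem hwS, pow_succ, mul_assoc] using hC
    have hlarge : ∀ u ∈ insert w S, (#S + 1) * τ ≤ d / 2 * #(C u) := fun u hu =>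
      (hC u hu).trans (mul_le_of_le_one_left (by positivity) hpow)
    obtain ⟨v, hvC, C', hC'⟩ := exists_shrunken_candidates H hd1 hτ w S C
      (hlarge w (mem_insert_self _ _)) (fun u hu => hlarge u (mem_insert_of_mem hu))
      fun u hu => hreg w (mem_insert_self _ _) u (mem_insert_of_mem hu)
    choose! hsub hnot hadj hcard using hC'
    obtain ⟨f, hfC, hinj, hf⟩ := ih C'
      (fun u hu => calc
        #S * τ ≤ (#S + 1) * τ := by gcongr; linarith
        _ ≤ (d / 2) ^ #S * (d / 2 * #(C u)) := hC u (mem_insert_of_mem hu)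
        _ ≤ (d / 2) ^ #S * #(C' u) := by gcongr; exact hcard u hu)
      fun a ha b hb hab => (hreg a (mem_insert_of_mem ha) b (mem_insert_of_mem hb) hab).mono
        (hsub a ha) (hsub b hb)
    have hupdate : ∀ u ∈ S, Function.update f w v u = f u := fun u hu =>
      Function.update_of_ne (ne_of_mem_of_not_mem hu hwS) _ _
    refine ⟨Function.update f w v, ?_, ?_, ?_⟩
    · exact forall_mem_insert .. |>.2 ⟨by simpa using hvC,
        fun u hu => hupdate u hu ▸ hsub u hu (hfC u hu)⟩
    · rw [coe_insert, Set.injOn_insert (by exact_mod_cast hwS)]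
      refine ⟨hinj.congr fun u hu => (hupdate u hu).symm, ?_⟩
      rintro ⟨u, hu, huv⟩
      rw [hupdate u hu, Function.update_self] at huv
      exact hnot u hu (huv ▸ hfC u hu)
    · exact forall_adj_update hwS (fun u hu hwu => hadj u hu hwu _ (hfC u hu)) hf

end LowerRegular

section Packing

variable {V W : Type*} {H : SimpleGraph W} {G : SimpleGraph V} {𝒯 : Finset (W → V)}

theorem card_untiled [Fintype V] [Fintype W] (h : IsTiling H G 𝒯) :
    (untiled 𝒯).ncard + Fintype.card W * #𝒯 = Fintype.card V := by
  classical
  have hcompl : untiled 𝒯 = ((𝒯.biUnion fun f => univ.image f)ᶜ : Finset V) := by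
    ext v
    simp [untiled]
  have hdisj : (𝒯 : Set (W → V)).PairwiseDisjoint fun f => univ.image f := fun f hf g hg hfg => by
    simpa [Function.onFun, ← disjoint_coe] using h.2 hf hg hfg
  have hcard : #(𝒯.biUnion fun f => univ.image f) = Fintype.card W * #𝒯 := by
    rw [card_biUnion hdisj, sum_congr rfl fun f hf => card_image_of_injective univ (h.1 f hf).1]
    simp [mul_comm]
  rw [hcompl, Set.ncard_coe_finset, ← hcard, card_compl_add_card]

theorem mem_untiled_insert [DecidableEq (W → V)] {f : W → V} {v : V} :
    v ∈ untiled (insert f 𝒯) ↔ v ∉ Set.range f ∧ v ∈ untiled 𝒯 :=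
  forall_mem_insert ..

theorem notMem_of_range_subset_untiled [Nonempty W] {f : W → V} (hf : Set.range f ⊆ untiled 𝒯) :
    f ∉ 𝒯 := fun h =>
  let w := Classical.arbitrary W
  hf ⟨w, rfl⟩ f h ⟨w, rfl⟩

theorem isTiling_insert [DecidableEq (W → V)] (h : IsTiling H G 𝒯) {f : W → V}
    (hinj : Function.Injective f) (hadj : ∀ a b, H.Adj a b → G.Adj (f a) (f b))
    (hf : Set.range f ⊆ untiled 𝒯) : IsTiling H G (insert f 𝒯) := by
  refine ⟨forall_mem_insert .. |>.2 ⟨⟨hinj, hadj⟩, h.1⟩, ?_⟩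
  rw [coe_insert]
  refine h.2.insert fun g hg _ => ?_
  have hfg : Disjoint (Set.range f) (Set.range g) :=
    Set.disjoint_left.2 fun v hvf => hf hvf g hg
  exact ⟨hfg, hfg.symm⟩

open scoped Classical in
theorem card_filter_untiled_le_insert [Fintype W] {M : Type*} {A : M → Finset V}
    (hA : Pairwise (Function.onFun Disjoint A)) (ψ : W → M) {f : W → V}
    (hf : ∀ w, f w ∈ A (ψ w)) (v : M) :
    #{x ∈ A v | x ∈ untiled 𝒯} ≤
      #{x ∈ A v | x ∈ untiled (insert f 𝒯)} + #{w | ψ w = v} := by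
  have hsub : {x ∈ A v | x ∈ untiled 𝒯} ⊆
      {x ∈ A v | x ∈ untiled (insert f 𝒯)} ∪ image f {w | ψ w = v} := by
    intro x hx
    obtain ⟨hxA, hx⟩ := mem_filter.1 hx
    simp only [mem_union, mem_filter, mem_image, mem_univ, true_and, mem_untiled_insert, hxA, hx,
      and_true]
    refine or_iff_not_imp_left.2 fun hxf => ?_
    obtain ⟨w, rfl⟩ := not_not.1 hxf
    by_contra! hne
    exact disjoint_left.1 (hA fun h : ψ w = v => hne w h rfl) (hf w) hxA
  exact (card_le_card hsub).trans ((card_union_le _ _).trans (by gcongr; exact card_image_le))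

open scoped Classical in
theorem exists_isTiling_of_family [Fintype W] [Nonempty V] [Nonempty W] [DecidableRel G.Adj]
    {M ι : Type*} {R : SimpleGraph M} {A : M → Finset V}
    (hA : Pairwise (Function.onFun Disjoint A)) {d τ X : ℝ} (hd : 0 < d) (hd1 : d ≤ 1)
    (hτ : 1 ≤ τ) (hX : Fintype.card W * τ ≤ (d / 2) ^ Fintype.card W * X)
    (hreg : ∀ u v, R.Adj u v → IsLowerRegular G d τ (A u) (A v)) (ψ : ι → H →g R) (s : Finset ι)
    (hload : ∀ v, ∑ i ∈ s, #{w | ψ i w = v} + X ≤ #(A v)) :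
    ∃ 𝒯 : Finset (W → V), IsTiling H G 𝒯 ∧ #𝒯 = #s ∧
      ∀ v, #(A v) ≤ #{x ∈ A v | x ∈ untiled 𝒯} + ∑ i ∈ s, #{w | ψ i w = v} := by
  induction s using Finset.induction_on with
  | empty => exact ⟨∅, by simp [IsTiling], rfl, by simp [untiled]⟩
  | insert i s his ih =>
    simp only [sum_insert his] at hload ⊢
    push_cast at hload
    obtain ⟨𝒯, h𝒯, hcard, hfree⟩ := ih fun v => by
      push_cast
      linarith [hload v, (#{w | ψ i w = v}).cast_nonneg (α := ℝ)]
    have hroom (v : M) : X ≤ #{x ∈ A v | x ∈ untiled 𝒯} := by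
      have hfree : (#(A v) : ℝ) ≤ #{x ∈ A v | x ∈ untiled 𝒯} + ∑ i ∈ s, (#{w | ψ i w = v} : ℝ) := by
        exact_mod_cast hfree v
      linarith [hload v, (#{w | ψ i w = v}).cast_nonneg (α := ℝ)]
    obtain ⟨f, hfU, hinj, hadj⟩ := exists_injOn_forall_adj H hd hd1 hτ univ
      (fun w => {x ∈ A (ψ i w) | x ∈ untiled 𝒯})
      (fun w _ => hX.trans (mul_le_mul_of_nonneg_left (hroom _) (by positivity)))
      fun a _ b _ hab => (hreg _ _ ((ψ i).map_rel hab)).mono (filter_subset _ _) (filter_subset _ _)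
    simp only [mem_univ, true_imp_iff, mem_filter, coe_univ, Set.injOn_univ] at hfU hinj hadj
    have hrange : Set.range f ⊆ untiled 𝒯 := Set.range_subset_iff.2 fun w => (hfU w).2
    refine ⟨insert f 𝒯, isTiling_insert h𝒯 hinj hadj hrange, ?_, fun v => ?_⟩
    · rw [card_insert_of_notMem (notMem_of_range_subset_untiled hrange), hcard,
        card_insert_of_notMem his]
    · have hstep := card_filter_untiled_le_insert (𝒯 := 𝒯) hA (ψ i) (fun w => (hfU w).1) v
      linarith [hfree v]

open scoped Classical in
theorem exists_isTiling_of_fractional [Fintype W] [Nonempty V] [Nonempty W] [DecidableRel G.Adj]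
    {M : Type*} {R : SimpleGraph M} [Fintype (H →g R)] {A : M → Finset V}
    (hA : Pairwise (Function.onFun Disjoint A)) {d τ X N : ℝ} (hd : 0 < d) (hd1 : d ≤ 1)
    (hτ : 1 ≤ τ) (hX : Fintype.card W * τ ≤ (d / 2) ^ Fintype.card W * X)
    (hreg : ∀ u v, R.Adj u v → IsLowerRegular G d τ (A u) (A v)) {l : (H →g R) → ℝ}
    (hl : l ∈ stdSimplex ℝ (H →g R)) (hN : 0 ≤ N)
    (hload : ∀ v, N * ∑ ψ, l ψ * #{w | ψ w = v} + X ≤ #(A v)) :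
    ∃ 𝒯 : Finset (W → V), IsTiling H G 𝒯 ∧ N - Fintype.card (H →g R) ≤ #𝒯 := by
  have hfloor (ψ : H →g R) : (⌊N * l ψ⌋₊ : ℝ) ≤ N * l ψ := Nat.floor_le (mul_nonneg hN (hl.1 ψ))
  obtain ⟨𝒯, h𝒯, hcard, -⟩ := exists_isTiling_of_family hA hd hd1 hτ hX hreg
    (fun i : Σ ψ : H →g R, Fin ⌊N * l ψ⌋₊ => i.1) univ fun v => by
      refine le_trans ?_ (hload v)
      rw [Fintype.sum_sigma]
      simp only [sum_const, card_univ, Fintype.card_fin, smul_eq_mul, mul_sum, ← mul_assoc]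
      push_cast
      gcongr with ψ
      exact hfloor ψ
  refine ⟨𝒯, h𝒯, ?_⟩
  rw [hcard, card_univ, Fintype.card_sigma]
  simp only [Fintype.card_fin]
  push_cast
  calc N - Fintype.card (H →g R) = ∑ ψ, (N * l ψ - 1) := by
        simp [← mul_sum, hl.2]
    _ ≤ ∑ ψ, (⌊N * l ψ⌋₊ : ℝ) := sum_le_sum fun ψ _ => (Nat.sub_one_lt_floor _).le

theorem card_hom_le {M : Type*} [Fintype W] [Fintype M] (H : SimpleGraph W) (R : SimpleGraph M)
    [Fintype (H →g R)] : Fintype.card (H →g R) ≤ Fintype.card M ^ Fintype.card W := by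
  classical
  rw [← Fintype.card_fun]
  exact Fintype.card_le_of_injective _ DFunLike.coe_injective

theorem exists_isTiling_of_clusters [Fintype W] [Nonempty V] [DecidableRel G.Adj]
    {M : Type*} [Fintype M] [Nonempty M] {p : ℕ} [NeZero p] (c : H.Coloring (Fin (p + 1)))
    (hc : ∃ w, c w = Fin.last p) (R : SimpleGraph M) [DecidableRel R.Adj] {δ : ℝ} (hδ : 0 ≤ δ)
    (hδ' : p * δ * Fintype.card W < 1)
    (hR : ∀ v, (degreeThreshold c - δ) * Fintype.card M ≤ R.degree v)
    {A : M → Finset V} (hA : Pairwise (Function.onFun Disjoint A)) {d τ r L : ℝ} (hd : 0 < d)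
    (hd1 : d ≤ 1) (hτ : 1 ≤ τ) (hr : r ≤ 1) (hL : 0 ≤ L) (hAL : ∀ v, L ≤ #(A v))
    (hX : Fintype.card W * τ ≤ (d / 2) ^ Fintype.card W * (r * L))
    (hreg : ∀ u v, R.Adj u v → IsLowerRegular G d τ (A u) (A v)) :
    ∃ 𝒯 : Finset (W → V), IsTiling H G 𝒯 ∧
      (1 - r) * (1 - p * δ * Fintype.card W) * (Fintype.card M * L) -
        Fintype.card W * Fintype.card M ^ Fintype.card W ≤ Fintype.card W * #𝒯 := by
  classical
  have := Fintype.ofFinite (H →g R)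
  have : Nonempty W := ⟨hc.choose⟩
  have hθ := sub_pos.2 hδ'
  obtain ⟨l, hl, hload⟩ := exists_fractional_tiling c hc R hδ hδ' hR
  set θ := 1 - p * δ * (Fintype.card W : ℝ)
  set N := (1 - r) * (θ * (Fintype.card M * L) / Fintype.card W) with hN_def
  have hN : 0 ≤ N := mul_nonneg (sub_nonneg.2 hr) (by positivity)
  obtain ⟨𝒯, h𝒯, hcard⟩ := exists_isTiling_of_fractional hA hd hd1 hτ hX hreg hl hN fun v => calc
    N * ∑ ψ, l ψ * #{w | ψ w = v} + r * L
      ≤ N * (Fintype.card W / (θ * Fintype.card M)) + r * L := by gcongr; exact hload v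
    _ = L := by rw [hN_def]; field_simp; ring
    _ ≤ #(A v) := hAL v
  refine ⟨𝒯, h𝒯, ?_⟩
  have hhom : (Fintype.card (H →g R) : ℝ) ≤ Fintype.card M ^ Fintype.card W := by
    exact_mod_cast card_hom_le H R
  calc (1 - r) * θ * (Fintype.card M * L) - Fintype.card W * Fintype.card M ^ Fintype.card W
      = Fintype.card W * (N - Fintype.card M ^ Fintype.card W) := by
        rw [hN_def]; field_simp
    _ ≤ Fintype.card W * #𝒯 := by gcongr; linarith

end Packing

section ReducedGraph

variable {V : Type*} (G : SimpleGraph V) [DecidableRel G.Adj]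

/-- The reduced graph of the regularity method: its vertices are sets of vertices of `G`, and two
of them are adjacent if they form an `ε`-uniform pair of density at least `γ`. It is defined on all
finite sets, and later restricted to the parts of a regular partition. -/
def clusterGraph (ε γ : ℝ) : SimpleGraph (Finset V) where
  Adj A B := A ≠ B ∧ G.IsUniform ε A B ∧ γ ≤ G.edgeDensity A B
  symm := ⟨fun A B h => ⟨h.1.symm, h.2.1.symm, G.edgeDensity_comm B A ▸ h.2.2⟩⟩
  loopless := ⟨fun _ h => h.1 rfl⟩

noncomputable instance (ε γ : ℝ) : DecidableRel (clusterGraph G ε γ).Adj := Classical.decRel _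

variable [Fintype V] [DecidableEq V] (P : Finpartition (univ : Finset V))

/-- The parts of `P` that form a non-`ε`-uniform pair with `A`. -/
noncomputable def irregularParts (ε : ℝ) (A : Finset V) : Finset (Finset V) :=
  {B ∈ P.parts | (A, B) ∈ P.nonUniforms G ε}

/-- The parts of `P` to which `A` has density less than `γ`. -/
noncomputable def sparseParts (γ : ℝ) (A : Finset V) : Finset (Finset V) :=
  {B ∈ P.parts | G.edgeDensity A B < γ}

/-- The parts of `P` that lie in few irregular pairs. Only these become clusters. -/
noncomputable def typicalParts (ε γ : ℝ) : Finset (Finset V) :=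
  {A ∈ P.parts | #(irregularParts G P ε A) ≤ γ * #P.parts}

variable {G P} {ε γ : ℝ}

theorem sum_card_irregularParts :
    ∑ A ∈ P.parts, #(irregularParts G P ε A) = #(P.nonUniforms G ε) := by
  have hsub : P.nonUniforms G ε ⊆ P.parts ×ˢ P.parts := fun ⟨A, B⟩ h => by
    obtain ⟨hA, hB, -⟩ := (P.mk_mem_nonUniforms G).1 h
    exact mk_mem_product hA hB
  rw [← inter_eq_right.2 hsub, ← filter_mem_eq_inter, card_filter, sum_product]
  simp only [irregularParts, card_filter]

theorem le_card_typicalParts (hP : P.IsUniform G ε) (hεγ : ε ≤ γ ^ 2) (hγ : 0 < γ) :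
    (1 - γ) * #P.parts ≤ #(typicalParts G P ε γ) := by
  set bad := {A ∈ P.parts | ¬ (#(irregularParts G P ε A) : ℝ) ≤ γ * #P.parts}
  have hsplit : (#(typicalParts G P ε γ) : ℝ) + #bad = #P.parts := by
    rw [typicalParts]
    exact_mod_cast card_filter_add_card_filter_not (s := P.parts)
      fun A => (#(irregularParts G P ε A) : ℝ) ≤ γ * #P.parts
  suffices hbad : #bad * (γ * #P.parts) ≤ γ * #P.parts * (γ * #P.parts) by
    rcases eq_or_ne (#P.parts : ℝ) 0 with hK0 | hK0
    · simp [hK0]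
    · linarith [le_of_mul_le_mul_right hbad (by positivity)]
  calc #bad * (γ * #P.parts) = ∑ _A ∈ bad, γ * #P.parts := by rw [sum_const, nsmul_eq_mul]
    _ ≤ ∑ A ∈ bad, (#(irregularParts G P ε A) : ℝ) :=
      sum_le_sum fun A hA => (not_le.1 (mem_filter.1 hA).2).le
    _ ≤ ∑ A ∈ P.parts, (#(irregularParts G P ε A) : ℝ) :=
      sum_le_sum_of_subset_of_nonneg (filter_subset _ _) fun _ _ _ => Nat.cast_nonneg _
    _ = #(P.nonUniforms G ε) := by exact_mod_cast sum_card_irregularParts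
    _ ≤ (#P.parts * (#P.parts - 1) : ℕ) * ε := hP
    _ ≤ (#P.parts * (#P.parts - 1) : ℕ) * γ ^ 2 := by gcongr
    _ ≤ (#P.parts * #P.parts : ℕ) * γ ^ 2 := by gcongr; exact Nat.sub_le _ _
    _ = γ * #P.parts * (γ * #P.parts) := by push_cast; ring

theorem mul_card_le_sum_card_interedges {a : ℝ}
    (hG : ∀ v, a * Fintype.card V ≤ G.degree v) (A : Finset V) :
    a * Fintype.card V * #A ≤ ∑ B ∈ P.parts, (#(G.interedges A B) : ℝ) := by
  have hdegrees : ∑ B ∈ P.parts, #(G.interedges A B) = ∑ v ∈ A, G.degree v := by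
    refine (Rel.card_interedges_finpartition_right G.Adj A P).symm.trans ?_
    refine (card_interedges_eq_sum G A univ).trans ?_
    simp only [← card_neighborFinset_eq_degree, neighborFinset_eq_filter]
  rw [mul_comm, ← nsmul_eq_mul]
  exact (card_nsmul_le_sum A _ _ fun v _ => hG v).trans_eq (by exact_mod_cast hdegrees.symm)

theorem card_sparseParts_mul_le {a L : ℝ}
    (hG : ∀ v, a * Fintype.card V ≤ G.degree v) {A : Finset V} (hA : A.Nonempty) (hγ : γ ≤ 1)
    (hL : ∀ B ∈ P.parts, L ≤ #B) :
    #(sparseParts G P γ A) * ((1 - γ) * L) ≤ (1 - a) * Fintype.card V := by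
  have hA : (0 : ℝ) < #A := by exact_mod_cast hA.card_pos
  have hedges (B : Finset V) : (0 : ℝ) ≤ #A * #B - #(G.interedges A B) :=
    sub_nonneg.2 (by exact_mod_cast G.card_interedges_le_mul A B)
  have hmissing : ∀ B ∈ sparseParts G P γ A,
      #A * ((1 - γ) * L) ≤ #A * #B - #(G.interedges A B) := by
    intro B hB
    obtain ⟨hBP, hdensity⟩ := mem_filter.1 hB
    have hB : (0 : ℝ) < #B := by exact_mod_cast (P.nonempty_of_mem_parts hBP).card_pos
    rw [edgeDensity_def] at hdensity
    push_cast at hdensity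
    rw [div_lt_iff₀ (by positivity)] at hdensity
    calc #A * ((1 - γ) * L) ≤ #A * ((1 - γ) * #B) := by
          gcongr
          exacts [hL B hBP]
      _ ≤ #A * #B - #(G.interedges A B) := by linarith
  have hV : ∑ B ∈ P.parts, (#B : ℝ) = Fintype.card V := by exact_mod_cast P.sum_card_parts
  refine le_of_mul_le_mul_left ?_ hA
  calc #A * (#(sparseParts G P γ A) * ((1 - γ) * L))
      = ∑ B ∈ sparseParts G P γ A, #A * ((1 - γ) * L) := by rw [sum_const, nsmul_eq_mul]; ring
    _ ≤ ∑ B ∈ sparseParts G P γ A, ((#A * #B - #(G.interedges A B) : ℝ)) := sum_le_sum hmissing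
    _ ≤ ∑ B ∈ P.parts, ((#A * #B - #(G.interedges A B) : ℝ)) :=
      sum_le_sum_of_subset_of_nonneg (filter_subset _ _) fun B _ _ => hedges B
    _ = #A * Fintype.card V - ∑ B ∈ P.parts, (#(G.interedges A B) : ℝ) := by
      rw [sum_sub_distrib, ← mul_sum, hV]
    _ ≤ #A * ((1 - a) * Fintype.card V) := by
      linarith [mul_card_le_sum_card_interedges (P := P) hG A]

theorem card_le_card_filter_adj_add {M : Finset (Finset V)} (hM : M ⊆ P.parts) {A : Finset V}
    (hA : A ∈ P.parts) :
    #M ≤ #{B ∈ M | (clusterGraph G ε γ).Adj A B} + 1 + #(irregularParts G P ε A) +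
      #(sparseParts G P γ A) := by
  have hcover : M ⊆ {B ∈ M | (clusterGraph G ε γ).Adj A B} ∪ {A} ∪ irregularParts G P ε A ∪
      sparseParts G P γ A := by
    intro B hB
    by_cases hedge : (clusterGraph G ε γ).Adj A B
    · simp [hB, hedge]
    · simp only [clusterGraph, not_and, not_le] at hedge
      simp only [mem_union, mem_filter, mem_singleton, irregularParts, sparseParts,
        P.mk_mem_nonUniforms, hA, hM hB]
      grind
  refine (card_le_card hcover).trans ((card_union_le _ _).trans ?_)
  gcongr
  refine (card_union_le _ _).trans ?_
  gcongr
  exact card_union_le _ _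

theorem le_card_filter_clusterGraph_adj {a L : ℝ} (hG : ∀ v, a * Fintype.card V ≤ G.degree v)
    (ha0 : 0 ≤ a) (ha1 : a ≤ 1) (hγ : 0 < γ) (hγ2 : γ ≤ 1 / 2) (hK : 1 ≤ γ * #P.parts)
    (htypical : (1 - γ) * #P.parts ≤ #(typicalParts G P ε γ)) (hL : 0 < L)
    (hV : Fintype.card V ≤ (1 + γ) * (#P.parts * L)) (hLP : ∀ B ∈ P.parts, L ≤ #B)
    {A : Finset V} (hA : A ∈ typicalParts G P ε γ) :
    (a - 10 * γ) * #(typicalParts G P ε γ) ≤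
      #{B ∈ typicalParts G P ε γ | (clusterGraph G ε γ).Adj A B} := by
  obtain ⟨hAP, hirregular⟩ := mem_filter.1 hA
  have hsparseK : (#(sparseParts G P γ A) : ℝ) ≤ #P.parts := by
    exact_mod_cast card_filter_le ..
  have hcover : (#(typicalParts G P ε γ) : ℝ) ≤
      #{B ∈ typicalParts G P ε γ | (clusterGraph G ε γ).Adj A B} + 1 +
        #(irregularParts G P ε A) + #(sparseParts G P γ A) := by
    exact_mod_cast card_le_card_filter_adj_add (filter_subset _ _) hAP
  have hsparse : (1 - γ) * #(sparseParts G P γ A) ≤ (1 - a) * (1 + γ) * #P.parts := by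
    have hmissing := card_sparseParts_mul_le (γ := γ) hG (P.nonempty_of_mem_parts hAP)
      (by linarith) hLP
    refine le_of_mul_le_mul_right ?_ hL
    linarith [mul_le_mul_of_nonneg_left hV (sub_nonneg.2 ha1)]
  have hnonadj : 1 + #(irregularParts G P ε A) + #(sparseParts G P γ A) ≤
      (1 - a + 4 * γ) * #P.parts := by
    linarith [mul_le_mul_of_nonneg_left hsparseK hγ.le, mul_nonneg ha0 (zero_le_one.trans hK)]
  calc (a - 10 * γ) * #(typicalParts G P ε γ)
      = #(typicalParts G P ε γ) - (1 - a + 10 * γ) * #(typicalParts G P ε γ) := by ring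
    _ ≤ #(typicalParts G P ε γ) - (1 - a + 10 * γ) * ((1 - γ) * #P.parts) := by
      gcongr
    _ ≤ #(typicalParts G P ε γ) - (1 - a + 4 * γ) * #P.parts := by
      nlinarith [mul_nonneg ha0 (zero_le_one.trans hK), mul_le_mul_of_nonneg_left hγ2
        (zero_le_one.trans hK)]
    _ ≤ #{B ∈ typicalParts G P ε γ | (clusterGraph G ε γ).Adj A B} := by linarith

theorem card_part_bounds (hP : P.IsEquipartition) {L : ℝ} (hL : 2 ≤ L)
    (hVL : Fintype.card V = #P.parts * (L + 1)) {A : Finset V} (hA : A ∈ P.parts) :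
    L ≤ #A ∧ #A ≤ 2 * L := by
  have hK : (0 : ℝ) < #P.parts := by exact_mod_cast card_pos.2 ⟨A, hA⟩
  have haverage : (Fintype.card V / #P.parts : ℝ) = L + 1 := by rw [hVL]; field_simp
  have hfloor : ((Fintype.card V / #P.parts : ℕ) : ℝ) ≤ L + 1 := Nat.cast_div_le.trans_eq haverage
  have hfloor' : L + 1 < (Fintype.card V / #P.parts : ℕ) + 1 := by
    rw [← haverage, ← Nat.floor_div_eq_div (K := ℝ)]
    exact Nat.lt_floor_add_one _
  have hlower : ((Fintype.card V / #P.parts : ℕ) : ℝ) ≤ #A := by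
    exact_mod_cast hP.average_le_card_part hA
  have hupper : (#A : ℝ) ≤ (Fintype.card V / #P.parts : ℕ) + 1 := by
    exact_mod_cast hP.card_part_le_average_add_one hA
  constructor <;> linarith

end ReducedGraph

/-- `M` is a family of disjoint vertex sets whose sizes agree with `L` up to a factor of two. The
sets are so large that the `ε`-uniformity of a pair of them says something about subsets of size
`2 * ε * L`. -/
structure IsClusterFamily {V : Type*} (M : Finset (Finset V)) (ε L : ℝ) : Prop where
  nonempty : M.Nonempty
  pairwiseDisjoint : (M : Set (Finset V)).PairwiseDisjoint id
  le_card : ∀ A ∈ M, L ≤ #A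
  card_le : ∀ A ∈ M, #A ≤ 2 * L
  one_le : 1 ≤ 2 * ε * L

theorem exists_isClusterFamily {ε γ a : ℝ} (hε : 0 < ε) (hεγ : ε ≤ γ ^ 2) (hγ : 0 < γ)
    (hγ2 : γ ≤ 1 / 2) (ha : a ∈ Set.Icc 0 1) :
    ∃ K₀ n₀ : ℕ, ∀ (V : Type u) [Fintype V] (G : SimpleGraph V) [DecidableRel G.Adj],
      n₀ ≤ Fintype.card V → (∀ v, a * Fintype.card V ≤ G.degree v) →
      ∃ (M : Finset (Finset V)) (L : ℝ), IsClusterFamily M ε L ∧ #M ≤ K₀ ∧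
        (1 - 2 * γ) * Fintype.card V ≤ #M * L ∧
        ∀ A ∈ M, (a - 10 * γ) * #M ≤ #{B ∈ M | (clusterGraph G ε γ).Adj A B} := by
  classical
  obtain ⟨l, hl⟩ := exists_nat_ge (1 / γ)
  set K₀ := SzemerediRegularity.bound ε l
  obtain ⟨n₀, hn₀⟩ := exists_nat_ge (K₀ * (1 / (2 * ε) + 1))
  refine ⟨K₀, max l n₀, fun V _ G _ hn hG => ?_⟩
  obtain ⟨P, heq, hlP, hPK₀, hP⟩ := szemeredi_regularity G hε ((le_max_left _ _).trans hn)
  have hn : (n₀ : ℝ) ≤ Fintype.card V := by exact_mod_cast (le_max_right _ _).trans hn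
  have hγK : 1 ≤ γ * #P.parts := (div_le_iff₀' hγ).1 (hl.trans (by exact_mod_cast hlP))
  have hK : (0 : ℝ) < #P.parts := pos_of_mul_pos_right (one_pos.trans_le hγK) hγ.le
  set L : ℝ := Fintype.card V / #P.parts - 1
  have hVL : Fintype.card V = #P.parts * (L + 1) := by simp only [L]; field_simp; ring
  have hεL : 1 / (2 * ε) ≤ L := by
    rw [le_sub_iff_add_le, le_div_iff₀' hK]
    refine le_trans ?_ (hn₀.trans hn)
    gcongr
  have hL : 0 < L := lt_of_lt_of_le (by positivity) hεL
  replace hεL : 1 ≤ 2 * ε * L := (div_le_iff₀' (by positivity)).1 hεL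
  have hγL : 1 ≤ γ * L := hεL.trans (by gcongr; nlinarith)
  have hV : Fintype.card V ≤ (1 + γ) * (#P.parts * L) := by
    rw [hVL]
    linarith [mul_le_mul_of_nonneg_left hγL hK.le]
  have hLP (A) (hA : A ∈ P.parts) : L ≤ #A ∧ #A ≤ 2 * L :=
    card_part_bounds heq (by nlinarith) hVL hA
  have htypical := le_card_typicalParts hP hεγ hγ
  have hne : (0 : ℝ) < #(typicalParts G P ε γ) := (mul_pos (by linarith) hK).trans_le htypical
  refine ⟨typicalParts G P ε γ, L, ⟨card_pos.1 (by exact_mod_cast hne),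
    P.disjoint.subset (filter_subset _ _), fun A hA => (hLP A (mem_filter.1 hA).1).1,
    fun A hA => (hLP A (mem_filter.1 hA).1).2, hεL⟩, (card_filter_le _ _).trans hPK₀, ?_,
    fun A hA => le_card_filter_clusterGraph_adj hG ha.1 ha.2 hγ hγ2 hγK htypical hL hV
      (fun B hB => (hLP B hB).1) hA⟩
  calc (1 - 2 * γ) * Fintype.card V ≤ (1 - 2 * γ) * ((1 + γ) * (#P.parts * L)) := by
        gcongr
        linarith
    _ ≤ (1 - γ) * #P.parts * L := by
      linarith [mul_nonneg (sq_nonneg γ) (mul_nonneg hK.le hL.le)]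
    _ ≤ #(typicalParts G P ε γ) * L := by gcongr

section Assembly

theorem degree_comap_coe {α : Type*} (R : SimpleGraph α) [DecidableRel R.Adj] (M : Finset α)
    (v : M) : (R.comap ((↑) : M → α)).degree v = #{w ∈ M | R.Adj v w} := by
  rw [← card_neighborFinset_eq_degree, neighborFinset_eq_filter, card_filter, card_filter,
    ← sum_coe_sort M]
  rfl

theorem exists_regularity_parameters {h : ℕ} [NeZero h] (p : ℕ) {r : ℝ} (hr : 0 < r)
    (hr1 : r ≤ 1 / 5) :
    ∃ γ > 0, γ ≤ r ∧ p * (10 * γ) * h ≤ r ∧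
      ∃ η > 0, η ≤ γ ^ 2 ∧ η ≤ γ / 2 ∧ h * (2 * η) ≤ (γ / 4) ^ h * r := by
  have hh : (1 : ℝ) ≤ h := by exact_mod_cast NeZero.one_le
  obtain ⟨γ, hγ, hγr⟩ := exists_pos_mul_lt hr (10 * p * h + 1)
  obtain ⟨η, hη, hηr⟩ := exists_pos_mul_lt
    (show 0 < min (γ ^ 2) ((γ / 4) ^ h * r) by positivity) (2 * h)
  have hphγ : 0 ≤ p * h * γ := by positivity
  have hhηγ := hηr.trans_le (min_le_left _ _)
  have hηγ : η ≤ γ ^ 2 := by nlinarith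
  exact ⟨γ, hγ, by linarith, by linarith, η, hη, hηγ, by nlinarith,
    by linarith [min_le_right (γ ^ 2) ((γ / 4) ^ h * r)]⟩

variable {W : Type*} [Fintype W] {H : SimpleGraph W} {p : ℕ} [NeZero p]

theorem exists_isTiling_of_clusterGraph {V : Type*} {G : SimpleGraph V} [DecidableRel G.Adj]
    (c : H.Coloring (Fin (p + 1))) (hc : ∃ w, c w = Fin.last p) {M : Finset (Finset V)}
    {L γ η r : ℝ} (hM : IsClusterFamily M η L)
    (hdegree : ∀ A ∈ M,
      (degreeThreshold c - 10 * γ) * #M ≤ #{B ∈ M | (clusterGraph G η γ).Adj A B})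
    (hγ : 0 < γ) (hγ1 : γ ≤ 1) (hr1 : r < 1) (hγr : p * (10 * γ) * Fintype.card W ≤ r)
    (hη : 0 < η) (hηγ : η ≤ γ / 2)
    (hηr : Fintype.card W * (2 * η) ≤ (γ / 4) ^ Fintype.card W * r) :
    ∃ 𝒯 : Finset (W → V), IsTiling H G 𝒯 ∧
      (1 - r) * (1 - r) * (#M * L) - Fintype.card W * #M ^ Fintype.card W ≤
        Fintype.card W * #𝒯 := by
  have hL : 0 < L := pos_of_mul_pos_right (one_pos.trans_le hM.one_le) (by positivity)
  have hr : 0 ≤ r := le_trans (by positivity) hγr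
  have : Nonempty M := hM.nonempty.to_subtype
  have : Nonempty V := by
    obtain ⟨A, hA⟩ := hM.nonempty
    obtain ⟨v, -⟩ := card_pos.1 (Nat.cast_pos.1 (hL.trans_le (hM.le_card A hA)))
    exact ⟨v⟩
  have hdisj : Pairwise (Function.onFun Disjoint ((↑) : M → Finset V)) := fun A B hAB =>
    hM.pairwiseDisjoint A.2 B.2 (Subtype.coe_injective.ne hAB)
  have hreg (A B : M) (hAB : (clusterGraph G η γ).Adj A B) :
      IsLowerRegular G (γ - η) (2 * η * L) (A : Finset V) B := by
    have hsmall (A : M) : #(A : Finset V) * η ≤ 2 * η * L := by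
      linarith [mul_le_mul_of_nonneg_right (hM.card_le A A.2) hη.le]
    exact isLowerRegular_of_isUniform hAB.2.1 hAB.2.2 (hsmall A) (hsmall B)
  have hroom : Fintype.card W * (2 * η * L) ≤ ((γ - η) / 2) ^ Fintype.card W * (r * L) := calc
    Fintype.card W * (2 * η * L) = Fintype.card W * (2 * η) * L := by ring
    _ ≤ (γ / 4) ^ Fintype.card W * r * L := by gcongr
    _ = (γ / 4) ^ Fintype.card W * (r * L) := mul_assoc ..
    _ ≤ ((γ - η) / 2) ^ Fintype.card W * (r * L) := by
      have hd : γ / 4 ≤ (γ - η) / 2 := by linarith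
      gcongr
  obtain ⟨𝒯, h𝒯, hcard⟩ := exists_isTiling_of_clusters c hc
    ((clusterGraph G η γ).comap ((↑) : M → Finset V)) (δ := 10 * γ) (by positivity)
    (hγr.trans_lt hr1)
    (fun A => by rw [degree_comap_coe, Fintype.card_coe]; exact hdegree A A.2)
    hdisj (by linarith) (by linarith) hM.one_le hr1.le hL.le (fun A => hM.le_card A A.2) hroom hreg
  refine ⟨𝒯, h𝒯, le_trans ?_ hcard⟩
  rw [Fintype.card_coe]
  gcongr

theorem exists_isTiling_le_card (c : H.Coloring (Fin (p + 1))) (hc : ∃ w, c w = Fin.last p)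
    {ε : ℝ} (hε : 0 < ε) :
    ∃ n₀ : ℕ, ∀ (V : Type u) [Fintype V] (G : SimpleGraph V) [DecidableRel G.Adj],
      n₀ ≤ Fintype.card V → (∀ v, degreeThreshold c * Fintype.card V ≤ G.degree v) →
      ∃ 𝒯 : Finset (W → V), IsTiling H G 𝒯 ∧
        (1 - ε) * Fintype.card V ≤ Fintype.card W * #𝒯 := by
  have : Nonempty W := ⟨hc.choose⟩
  obtain ⟨r, hr, hr1, hrε⟩ : ∃ r > 0, r ≤ 1 / 5 ∧ 5 * r ≤ ε :=
    ⟨min ε 1 / 5, by positivity, by linarith [min_le_right ε 1], by linarith [min_le_left ε 1]⟩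
  obtain ⟨γ, hγ, hγr, hpγ, η, hη, hηγ2, hηγ, hηr⟩ :=
    exists_regularity_parameters (h := Fintype.card W) p hr hr1
  obtain ⟨K₀, n₀, hclusters⟩ :=
    exists_isClusterFamily.{u} hη hηγ2 hγ (by linarith) (degreeThreshold_mem_Icc c)
  obtain ⟨n₁, hn₁⟩ := exists_nat_ge (Fintype.card W * K₀ ^ Fintype.card W / r)
  refine ⟨max n₀ n₁, fun V _ G _ hn hG => ?_⟩
  obtain ⟨hn₀V, hn₁V⟩ := max_le_iff.1 hn
  replace hn₁ := (div_le_iff₀' hr).1 (hn₁.trans (Nat.cast_le.2 hn₁V))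
  obtain ⟨M, L, hM, hMK₀, hML, hdegree⟩ := hclusters V G hn₀V hG
  obtain ⟨𝒯, h𝒯, hcard⟩ := exists_isTiling_of_clusterGraph c hc hM hdegree hγ
    (by linarith) (by linarith) hpγ hη hηγ hηr
  refine ⟨𝒯, h𝒯, ?_⟩
  have hloss : 1 - 4 * r ≤ (1 - r) * (1 - r) * (1 - 2 * γ) := by
    nlinarith [sq_nonneg r, mul_nonneg (mul_nonneg hr.le hγ.le) (show 0 ≤ 2 - r by linarith)]
  calc (1 - ε) * Fintype.card V ≤ (1 - 5 * r) * Fintype.card V := by gcongr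
    _ = (1 - 4 * r) * Fintype.card V - r * Fintype.card V := by ring
    _ ≤ (1 - r) * (1 - r) * (1 - 2 * γ) * Fintype.card V -
        Fintype.card W * K₀ ^ Fintype.card W := by gcongr
    _ ≤ (1 - r) * (1 - r) * (#M * L) - Fintype.card W * #M ^ Fintype.card W := by
      rw [mul_assoc _ (1 - 2 * γ)]
      gcongr
      exact mul_self_nonneg _
    _ ≤ Fintype.card W * #𝒯 := hcard

end Assembly

end Komlos

open Finset SimpleGraph Komlos in
theorem komlos_tiling_general {W : Type*} [Fintype W] {H : SimpleGraph W} {k : ℕ} (hk : 2 ≤ k)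
    (c : H.Coloring (Fin k)) {i : Fin k} (hi : ∃ w, c w = i) {ε : ℝ} (hε : 0 < ε) :
    ∃ n₀ : ℕ, ∀ (V : Type u) [Fintype V] (G : SimpleGraph V) [DecidableRel G.Adj],
      n₀ ≤ Fintype.card V →
      (∀ v : V, (1 - 1 / (((k : ℝ) - 1) * (Fintype.card W) /
          ((Fintype.card W : ℝ) - #{w | c w = i}))) * (Fintype.card V) ≤ (G.degree v : ℝ)) →
      ∃ 𝒯 : Finset (W → V), IsTiling H G 𝒯 ∧
        ((untiled 𝒯).ncard : ℝ) ≤ ε * (Fintype.card V) := by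
  obtain ⟨p, rfl⟩ : ∃ p, k = p + 1 := ⟨k - 1, by omega⟩
  have : NeZero p := ⟨by omega⟩
  let swap := Equiv.swap i (Fin.last p)
  let c' : H.Coloring (Fin (p + 1)) := (Iso.completeGraph swap).toHom.comp c
  have hc' (w : W) : c' w = Fin.last p ↔ c w = i := by
    rw [← swap.apply_eq_iff_eq (x := c w), Equiv.swap_apply_left]
    rfl
  obtain ⟨n₀, htiling⟩ := exists_isTiling_le_card.{u} c' (hi.imp fun w => (hc' w).2) hε
  refine ⟨n₀, fun V _ G _ hn hG => ?_⟩
  obtain ⟨𝒯, h𝒯, hcard⟩ := htiling V G hn fun v => by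
    simpa [hc', degreeThreshold, one_div_div] using hG v
  have huntiled : ((untiled 𝒯).ncard : ℝ) + Fintype.card W * #𝒯 = Fintype.card V := by
    exact_mod_cast card_untiled h𝒯
  exact ⟨𝒯, h𝒯, by linarith⟩

/-- **Theorem (Komlós).** For every graph `H` with at least one edge and every `ε > 0`
there is `n₀` such that every graph `G` on `n ≥ n₀` vertices with
`δ(G) ≥ (1 - 1/χ_cr(H))n` has an `H`-tiling covering all but at most `εn` vertices. -/
theorem komlos_tiling
    {W : Type} [Fintype W] (H : SimpleGraph W) (hedge : ∃ a b : W, H.Adj a b)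
    (k σ : ℕ) (hk : H.chromaticNumber = (k : ℕ∞)) (hσ : IsMinColorClassSize H k σ)
    (ε : ℝ) (hε : 0 < ε) :
    ∃ n₀ : ℕ, ∀ (V : Type) [Fintype V] (G : SimpleGraph V) [DecidableRel G.Adj],
      n₀ ≤ Fintype.card V →
      (∀ v : V, (1 - 1 / (((k : ℝ) - 1) * (Fintype.card W) /
          ((Fintype.card W : ℝ) - σ))) * (Fintype.card V) ≤ (G.degree v : ℝ)) →
      ∃ 𝒯 : Finset (W → V), IsTiling H G 𝒯 ∧
        ((untiled 𝒯).ncard : ℝ) ≤ ε * (Fintype.card V) := by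
  obtain ⟨⟨c, i, rfl⟩, -⟩ := hσ
  obtain ⟨a, b, hab⟩ := hedge
  have hk2 : 2 ≤ k := by exact_mod_cast hk ▸ SimpleGraph.two_le_chromaticNumber_of_adj hab
  have hsurj := (SimpleGraph.chromaticNumber_eq_iff_forall_surjective ⟨c⟩).1 hk
  exact komlos_tiling_general hk2 c (hsurj c i) hε
end

section
/- (Hajnal–Szemerédi.) Let r ≥ 1 and let G be a graph on n vertices with r dividing n. If the minimum degree satisfies δ(G) ≥ (1 − 1/r)·n, then G has a K_r-factor, i.e., a collection of pairwise vertex-disjoint complete subgraphs on r vertices covering every vertex of G. -/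
/-!
Colour the complement of `G` equitably: it has maximum degree less than `k = n / r`, and the classes
of a proper `k`-colouring with all classes of size `r` are the cliques we want.

The argument is that of Kierstead and Kostochka. Restoring the edges of the complement vertex by
vertex, we have to place a single vertex `x` in a colouring in which only the class `v` is one
vertex short. A colour is accessible if vertices can be moved along a path of classes from it to
`v`. If `x` fits into an accessible class, shifting along the path finishes. If not, let `A` be the
union of the accessible classes and `B` the rest. Call `z` in `A` a solo neighbour of `y` in `B` if
it is the only neighbour of `y` in its class. Take a terminal set of accessible colours: none of
them is needed by the other accessible colours to reach `v`. A discharging argument over the solo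
edges yields a `z` in a terminal class which either can be moved inside `A`, or cannot but is a solo
neighbour of two nonadjacent `y₁, y₂` in `B`. Let `y₁` take the place of `z`, and recolour `B - y₁`
equitably by induction on the number of vertices. In the first case `z` fits into `A`; in the second
it is the new vertex to place, and the class of `y₂` has become accessible, which can happen only
finitely often.
-/

namespace HajnalSzemeredi

open Finset Relation
open scoped Classical

section Reachability

variable {κ : Type*} {Q Q' : κ → κ → Prop} {A D D' : Finset κ} {a b c v W X : κ}

/-- `ReachesIn Q D a b`: the digraph `Q` has a path from `a` to `b` all of whose arcs join elements
of `D`. The trivial path from `a` to `a` is admitted even when `a ∉ D`. -/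
def ReachesIn (Q : κ → κ → Prop) (D : Finset κ) : κ → κ → Prop :=
  ReflTransGen fun a b => Q a b ∧ a ∈ D ∧ b ∈ D

lemma ReachesIn.mono (h : ReachesIn Q D a b) (hD : D ⊆ D')
    (hQ : ∀ x ∈ D, ∀ y ∈ D, Q x y → Q' x y) : ReachesIn Q' D' a b :=
  ReflTransGen.mono (fun x y ⟨hxy, hx, hy⟩ => ⟨hQ x hx y hy hxy, hD hx, hD hy⟩) _ _ h

lemma ReachesIn.head (hab : Q a b) (ha : a ∈ D) (hb : b ∈ D) (h : ReachesIn Q D b v) :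
    ReachesIn Q D a v :=
  ReflTransGen.head ⟨hab, ha, hb⟩ h

lemma ReachesIn.erase_or_exists_step (h : ReachesIn Q D a v) (hcv : c ≠ v) :
    (a ≠ c ∧ ReachesIn Q (D.erase c) a v) ∨
      ∃ b ∈ D.erase c, Q c b ∧ ReachesIn Q (D.erase c) b v := by
  induction h using ReflTransGen.head_induction_on with
  | refl => exact Or.inl ⟨hcv.symm, ReflTransGen.refl⟩
  | @head x y hxy _ ih =>
    obtain ⟨hQ, hx, hy⟩ := hxy
    rcases ih with ⟨hyc, hyv⟩ | hstep
    · have hy' : y ∈ D.erase c := mem_erase.2 ⟨hyc, hy⟩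
      rcases eq_or_ne x c with rfl | hxc
      · exact Or.inr ⟨y, hy', hQ, hyv⟩
      · exact Or.inl ⟨hxc, hyv.head hQ (mem_erase.2 ⟨hxc, hx⟩) hy'⟩
    · exact Or.inr hstep

lemma ReachesIn.exists_step (h : ReachesIn Q D c v) (hcv : c ≠ v) :
    ∃ b ∈ D.erase c, Q c b ∧ ReachesIn Q (D.erase c) b v :=
  (h.erase_or_exists_step hcv).resolve_left fun h => h.1 rfl

/-- The elements of `D` from which `v` can be reached inside `D`. -/
noncomputable def accessible (Q : κ → κ → Prop) (D : Finset κ) (v : κ) : Finset κ :=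
  {c ∈ D | ReachesIn Q D c v}

lemma mem_accessible : c ∈ accessible Q D v ↔ c ∈ D ∧ ReachesIn Q D c v :=
  mem_filter

lemma accessible_subset : accessible Q D v ⊆ D :=
  filter_subset _ _

lemma self_mem_accessible (hv : v ∈ D) : v ∈ accessible Q D v :=
  mem_accessible.2 ⟨hv, ReflTransGen.refl⟩

lemma mem_accessible_of_step (hab : Q a b) (ha : a ∈ D) (hb : b ∈ accessible Q D v) :
    a ∈ accessible Q D v :=
  mem_accessible.2 ⟨ha, (mem_accessible.1 hb).2.head hab ha (mem_accessible.1 hb).1⟩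

lemma reachesIn_accessible (hc : c ∈ accessible Q D v) : ReachesIn Q (accessible Q D v) c v := by
  obtain ⟨-, h⟩ := mem_accessible.1 hc
  clear hc
  induction h using ReflTransGen.head_induction_on with
  | refl => exact ReflTransGen.refl
  | @head x y hxy hyv ih =>
    have hy : y ∈ accessible Q D v := mem_accessible.2 ⟨hxy.2.2, hyv⟩
    exact ih.head hxy.1 (mem_accessible_of_step hxy.1 hxy.2.1 hy) hy

/-- The elements of `A` other than `W` that are cut off from `v` when `W` is deleted. -/
noncomputable def separated (Q : κ → κ → Prop) (A : Finset κ) (v W : κ) : Finset κ :=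
  A.erase W \ accessible Q (A.erase W) v

lemma mem_separated :
    X ∈ separated Q A v W ↔ X ∈ A.erase W ∧ ¬ ReachesIn Q (A.erase W) X v := by
  rw [separated, mem_sdiff, mem_accessible]
  tauto

lemma ReachesIn.erase_of_mem_separated (h : ReachesIn Q (A.erase W) a v)
    (hX : X ∈ separated Q A v W) : ReachesIn Q (A.erase X) a v := by
  have hXv := (mem_separated.1 hX).2
  induction h using ReflTransGen.head_induction_on with
  | refl => exact ReflTransGen.refl
  | @head x y hxy hyv ih =>
    refine ih.head hxy.1 (mem_erase.2 ⟨?_, mem_of_mem_erase hxy.2.1⟩)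
      (mem_erase.2 ⟨?_, mem_of_mem_erase hxy.2.2⟩)
    · rintro rfl
      exact hXv (ReflTransGen.head hxy hyv)
    · rintro rfl
      exact hXv hyv

lemma separated_ssubset_separated (hreach : ∀ c ∈ A, ReachesIn Q A c v)
    (hX : X ∈ separated Q A v W) : separated Q A v X ⊂ separated Q A v W := by
  obtain ⟨hXA, hXv⟩ := mem_separated.1 hX
  refine ssubset_iff_of_subset (fun Y hY => ?_) |>.2
    ⟨X, hX, fun h => notMem_erase X A (mem_separated.1 h).1⟩
  obtain ⟨hYA, hYv⟩ := mem_separated.1 hY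
  obtain ⟨hYX, hYA⟩ := mem_erase.1 hYA
  have hYW : Y ≠ W := by
    rintro rfl
    obtain ⟨e, heA, hYe, hev⟩ := (hreach Y hYA).exists_step (c := Y)
      fun h => hYv (h ▸ ReflTransGen.refl)
    have heX : e ≠ X := by
      rintro rfl
      exact hXv hev
    exact hYv ((hev.erase_of_mem_separated hX).head hYe (mem_erase.2 ⟨hYX, hYA⟩)
      (mem_erase.2 ⟨heX, mem_of_mem_erase heA⟩))
  exact mem_separated.2 ⟨mem_erase.2 ⟨hYW, hYA⟩, fun h => hYv (h.erase_of_mem_separated hX)⟩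

/-- A set `T` of elements of `A` none of which is needed by another element of `A` to reach `v`,
and whose out-neighbours in `A` lie in `T` or equal the single element `X₀`. -/
structure IsTerminal (Q : κ → κ → Prop) (A : Finset κ) (v X₀ : κ) (T : Finset κ) : Prop where
  subset : T ⊆ A
  nonempty : T.Nonempty
  exit_mem : X₀ ∈ A
  exit_notMem : X₀ ∉ T
  root_notMem : v ∉ T
  reachesIn_erase : ∀ W ∈ T, ∀ X ∈ A.erase W, ReachesIn Q (A.erase W) X v
  not_arc : ∀ W ∈ T, ∀ X ∈ A.erase X₀ \ T, ¬ Q W X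

lemma exists_isTerminal (hv : v ∈ A) (hreach : ∀ c ∈ A, ReachesIn Q A c v)
    (hne : ∃ c ∈ A, c ≠ v) : ∃ X₀ T, IsTerminal Q A v X₀ T := by
  obtain ⟨c, hc, hcv⟩ := hne
  have hsep : c ∈ separated Q A v v := by
    refine mem_separated.2 ⟨mem_erase.2 ⟨hcv, hc⟩, fun h => ?_⟩
    rcases ReflTransGen.cases_tail h with h | ⟨b, -, hb⟩
    · exact hcv h.symm
    · exact notMem_erase v A hb.2.2
  obtain ⟨X₀, hX₀, hmin⟩ := exists_min_image {W ∈ A | (separated Q A v W).Nonempty}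
    (fun W => #(separated Q A v W)) ⟨v, mem_filter.2 ⟨hv, c, hsep⟩⟩
  obtain ⟨hX₀A, hX₀ne⟩ := mem_filter.1 hX₀
  have hTA : separated Q A v X₀ ⊆ A := sdiff_subset.trans (erase_subset _ _)
  refine ⟨X₀, separated Q A v X₀, hTA, hX₀ne, hX₀A, fun h => notMem_erase X₀ A
    (mem_separated.1 h).1, fun h => (mem_separated.1 h).2 ReflTransGen.refl, ?_, ?_⟩
  · intro W hW X hX
    by_contra hXv
    have hle := hmin W (mem_filter.2 ⟨hTA hW, X, mem_separated.2 ⟨hX, hXv⟩⟩)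
    exact hle.not_gt (card_lt_card (separated_ssubset_separated hreach hW))
  · intro W hW X hX hWX
    obtain ⟨hXA, hXT⟩ := mem_sdiff.1 hX
    obtain ⟨hWA, hWv⟩ := mem_separated.1 hW
    exact hWv (.head hWX hWA hXA (by_contra fun h => hXT (mem_separated.2 ⟨hXA, h⟩)))

end Reachability

section Coloring

variable {V κ : Type*} {G : SimpleGraph V} {U U₁ U₂ S : Finset V} {C C₁ C₂ D K : Finset κ}
  {s : ℕ} {d : κ → ℕ} {f g : V → κ} {x y : V} {a b c v : κ}

/-- The number of neighbours of `x` in `S`. -/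
noncomputable def degOn (G : SimpleGraph V) (S : Finset V) (x : V) : ℕ :=
  #{y ∈ S | G.Adj x y}

lemma degOn_mono {H : SimpleGraph V} (hG : G ≤ H) (hU : U₁ ⊆ U₂) :
    degOn G U₁ x ≤ degOn H U₂ x :=
  card_le_card fun _ hy => mem_filter.2 ⟨hU (mem_filter.1 hy).1, hG (mem_filter.1 hy).2⟩

lemma degOn_union (h : Disjoint U₁ U₂) : degOn G (U₁ ∪ U₂) x = degOn G U₁ x + degOn G U₂ x := by
  rw [degOn, filter_union, card_union_of_disjoint (disjoint_filter_filter h), degOn, degOn]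

/-- The vertices of `U` to which `f` gives the colour `c`. -/
noncomputable def colorClass (U : Finset V) (f : V → κ) (c : κ) : Finset V :=
  {w ∈ U | f w = c}

@[simp]
lemma mem_colorClass : x ∈ colorClass U f c ↔ x ∈ U ∧ f x = c :=
  mem_filter

/-- `f` restricts to a proper colouring of `G[U]` with colours in `C`, in which the class of colour
`c` is `d c` vertices short of the size `s`. Equitable colourings are the case `d = 0`; the nearly
equitable ones of the argument, with one class `v` short of one vertex, are `d = Pi.single v 1`. -/
structure IsDeficientColoring (G : SimpleGraph V) (U : Finset V) (C : Finset κ) (s : ℕ)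
    (d : κ → ℕ) (f : V → κ) : Prop where
  mem : ∀ w ∈ U, f w ∈ C
  ne_of_adj : ∀ u ∈ U, ∀ w ∈ U, G.Adj u w → f u ≠ f w
  card_colorClass_add : ∀ c ∈ C, #(colorClass U f c) + d c = s

/-- `x` has no neighbour of colour `c` in `U`, so that it could be recoloured with `c`. -/
def Movable (G : SimpleGraph V) (U : Finset V) (f : V → κ) (x : V) (c : κ) : Prop :=
  ∀ w ∈ U, f w = c → ¬ G.Adj x w

lemma Movable.of_filter (h : Movable G {w ∈ U | f w ∈ K} f x c) (hc : c ∈ K) :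
    Movable G U f x c :=
  fun w hw hwc => h w (mem_filter.2 ⟨hw, hwc ▸ hc⟩) hwc

lemma Movable.mono (h : Movable G U₂ f x c) (hU : U₁ ⊆ U₂) : Movable G U₁ f x c :=
  fun w hw => h w (hU hw)

/-- The auxiliary digraph on the colours: some vertex of class `a` can be moved to class `b`. -/
def MoveArc (G : SimpleGraph V) (U : Finset V) (f : V → κ) (a b : κ) : Prop :=
  ∃ w ∈ U, f w = a ∧ Movable G U f w b

lemma card_le_degOn (h : ∀ c ∈ K, ¬ Movable G S f x c) : #K ≤ degOn G S x := by
  refine (card_le_card (t := ({w ∈ S | G.Adj x w} : Finset V).image f) fun c hc => ?_).trans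
    card_image_le
  obtain ⟨w, hw, hwc, hxw⟩ : ∃ w ∈ S, f w = c ∧ G.Adj x w := by
    simpa only [Movable, not_forall, not_not, exists_prop] using h c hc
  exact mem_image.2 ⟨w, mem_filter.2 ⟨hw, hxw⟩, hwc⟩

namespace IsDeficientColoring

lemma congr_deficit {d' : κ → ℕ} (hf : IsDeficientColoring G U C s d f)
    (hd : ∀ c ∈ C, d c = d' c) : IsDeficientColoring G U C s d' f :=
  ⟨hf.mem, hf.ne_of_adj, fun c hc => hd c hc ▸ hf.card_colorClass_add c hc⟩

lemma mono_graph {H : SimpleGraph V} (hf : IsDeficientColoring H U C s d f)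
    (hGH : ∀ u ∈ U, ∀ w ∈ U, G.Adj u w → H.Adj u w) : IsDeficientColoring G U C s d f :=
  ⟨hf.mem, fun u hu w hw huw => hf.ne_of_adj u hu w hw (hGH u hu w hw huw),
    hf.card_colorClass_add⟩

lemma card_add_sum (hf : IsDeficientColoring G U C s d f) : #U + ∑ c ∈ C, d c = #C * s := by
  have hsum : ∑ c ∈ C, (#(colorClass U f c) + d c) = #C * s := by
    rw [sum_congr rfl hf.card_colorClass_add, sum_const, smul_eq_mul]
  rw [← hsum, sum_add_distrib, card_eq_sum_card_fiberwise fun w hw => hf.mem w hw]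
  rfl

lemma restrict (hf : IsDeficientColoring G U C s d f) (hK : K ⊆ C) :
    IsDeficientColoring G {w ∈ U | f w ∈ K} K s d f := by
  refine ⟨fun w hw => (mem_filter.1 hw).2, fun u hu w hw => hf.ne_of_adj u (filter_subset _ _ hu) w
    (filter_subset _ _ hw), fun c hc => ?_⟩
  rw [← hf.card_colorClass_add c (hK hc)]
  congr 2
  ext w
  simp only [mem_colorClass, mem_filter]
  grind

lemma erase (hf : IsDeficientColoring G U C s d f) (hx : x ∈ U) :
    IsDeficientColoring G (U.erase x) C s (d + Pi.single (f x) 1) f := by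
  refine ⟨fun w hw => hf.mem w (mem_of_mem_erase hw), fun u hu w hw =>
    hf.ne_of_adj u (mem_of_mem_erase hu) w (mem_of_mem_erase hw), fun c hc => ?_⟩
  rw [← hf.card_colorClass_add c hc, colorClass, filter_erase, Pi.add_apply, add_left_comm,
    add_comm (d c)]
  rcases eq_or_ne c (f x) with rfl | hcx
  · have := card_erase_add_one (mem_colorClass.2 ⟨hx, rfl⟩ : x ∈ colorClass U f (f x))
    simp only [colorClass, Pi.single_eq_same] at this ⊢
    omega
  · rw [erase_eq_of_notMem fun h => hcx (mem_filter.1 h).2.symm, Pi.single_eq_of_ne hcx]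
    simp [colorClass]

lemma insert (hf : IsDeficientColoring G U C s (d + Pi.single c 1) f) (hx : x ∉ U) (hc : c ∈ C)
    (hm : Movable G U f x c) :
    IsDeficientColoring G (insert x U) C s d (Function.update f x c) := by
  have hne : ∀ w ∈ U, w ≠ x := fun w hw => ne_of_mem_of_not_mem hw hx
  have hclass (e : κ) : colorClass U (Function.update f x c) e = colorClass U f e :=
    filter_congr fun w hw => by rw [Function.update_of_ne (hne w hw)]
  refine ⟨?_, ?_, fun e he => ?_⟩
  · simp only [mem_insert, forall_eq_or_imp, Function.update_self]
    refine ⟨hc, fun w hw => ?_⟩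
    rw [Function.update_of_ne (hne w hw)]
    exact hf.mem w hw
  · have hxw : ∀ w ∈ U, G.Adj x w → c ≠ f w := fun w hw hadj h => hm w hw h.symm hadj
    simp only [mem_insert, forall_eq_or_imp, Function.update_self, SimpleGraph.irrefl,
      false_imp_iff, true_and]
    refine ⟨fun w hw hadj => ?_, fun u hu => ⟨fun hadj => ?_, fun w hw hadj => ?_⟩⟩
    · rw [Function.update_of_ne (hne w hw)]
      exact hxw w hw hadj
    · rw [Function.update_of_ne (hne u hu)]
      exact (hxw u hu hadj.symm).symm
    · rw [Function.update_of_ne (hne u hu), Function.update_of_ne (hne w hw)]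
      exact hf.ne_of_adj u hu w hw hadj
  · rw [← hf.card_colorClass_add e he, ← hclass e, colorClass, filter_insert, Function.update_self]
    rcases eq_or_ne e c with rfl | hec
    · rw [if_pos rfl, card_insert_of_notMem fun h => hx (filter_subset _ _ h), Pi.add_apply,
        Pi.single_eq_same, colorClass]
      ring
    · rw [if_neg hec.symm, Pi.add_apply, Pi.single_eq_of_ne hec, colorClass, add_zero]

lemma swap (hf : IsDeficientColoring G U C s d f) (hy : y ∈ U) (hx : x ∉ U)
    (hm : Movable G (U.erase y) f x (f y)) :
    IsDeficientColoring G (Insert.insert x (U.erase y)) C s d (Function.update f x (f y)) :=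
  (hf.erase hy).insert (fun h => hx (mem_of_mem_erase h)) (hf.mem y hy) hm

end IsDeficientColoring

lemma Movable.swap {w : V} (hm : Movable G U f w b) (hb : b ≠ a) :
    Movable G (insert x (U.erase y)) (Function.update f x a) w b := by
  intro u hu hub
  rcases eq_or_ne u x with rfl | hux
  · exact absurd (hub.symm.trans (Function.update_self ..)) hb
  · rw [Function.update_of_ne hux] at hub
    exact hm u (mem_of_mem_erase (mem_of_mem_insert_of_ne hu hux)) hub

lemma MoveArc.swap (h : MoveArc G U f a b) (hx : x ∉ U)
    (ha : Movable G U f y b → a ≠ f y) (hb : b ≠ f y) :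
    MoveArc G (insert x (U.erase y)) (Function.update f x (f y)) a b := by
  obtain ⟨w, hw, rfl, hm⟩ := h
  have hwy : w ≠ y := fun h => ha (h ▸ hm) (congrArg f h)
  have hwx : w ≠ x := ne_of_mem_of_not_mem hw hx
  exact ⟨w, mem_insert_of_mem (mem_erase.2 ⟨hwy, hw⟩), Function.update_of_ne hwx .., hm.swap hb⟩

lemma ReachesIn.swap (h : ReachesIn (MoveArc G U f) (D.erase (f y)) a v) (hx : x ∉ U) :
    ReachesIn (MoveArc G (insert x (U.erase y)) (Function.update f x (f y))) (D.erase (f y)) a v :=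
  h.mono subset_rfl fun _ ha _ hb hab =>
    hab.swap hx (fun _ => ne_of_mem_erase ha) (ne_of_mem_erase hb)

/- Put `x` into class `e`, move a vertex of `e` on to the next class of the path, and so on until
the deficient class `v` receives a vertex. Restricting the rest of the path to `D.erase e` keeps it
valid after class `e` has changed. -/
lemma IsDeficientColoring.exists_insert {e : κ}
    (hf : IsDeficientColoring G U C s (d + Pi.single v 1) f) (hx : x ∉ U) (hD : D ⊆ C)
    (he : e ∈ D) (hm : Movable G U f x e) (hev : ReachesIn (MoveArc G U f) D e v) :
    ∃ f', IsDeficientColoring G (Insert.insert x U) C s d f' := by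
  induction D using Finset.strongInduction generalizing U f x e with
  | H D ih =>
    rcases eq_or_ne e v with rfl | hne
    · exact ⟨_, hf.insert hx (hD he) hm⟩
    · obtain ⟨e', he', ⟨y, hy, rfl, hmy⟩, he'v⟩ := hev.exists_step hne
      have hyx : y ≠ x := ne_of_mem_of_not_mem hy hx
      obtain ⟨f', hf'⟩ := ih (D.erase (f y)) (erase_ssubset he)
        (hf.swap hy hx (hm.mono (erase_subset _ _))) (by simp [hyx])
        ((erase_subset _ _).trans hD) he' (hmy.swap (ne_of_mem_erase he')) (he'v.swap hx)
      rw [Finset.insert_comm, insert_erase hy] at hf'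
      exact ⟨f', hf'⟩

lemma colorClass_union_piecewise_left (hg : ∀ w ∈ U₂, g w ≠ c) :
    colorClass (U₁ ∪ U₂) (U₁.piecewise f g) c = colorClass U₁ f c := by
  ext w
  by_cases hw : w ∈ U₁
  · simp [hw]
  · simpa [hw] using hg w

lemma colorClass_union_piecewise_right (hU : Disjoint U₁ U₂) (hf : ∀ w ∈ U₁, f w ≠ c) :
    colorClass (U₁ ∪ U₂) (U₁.piecewise f g) c = colorClass U₂ g c := by
  ext w
  by_cases hw : w ∈ U₁
  · simpa [hw, disjoint_left.1 hU hw] using hf w hw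
  · simp [hw]

lemma IsDeficientColoring.union (hf : IsDeficientColoring G U₁ C₁ s d f)
    (hg : IsDeficientColoring G U₂ C₂ s d g) (hU : Disjoint U₁ U₂) (hC : Disjoint C₁ C₂) :
    IsDeficientColoring G (U₁ ∪ U₂) (C₁ ∪ C₂) s d (U₁.piecewise f g) := by
  have hfg : ∀ u ∈ U₁, ∀ w ∈ U₂, f u ≠ g w := fun u hu w hw h =>
    disjoint_left.1 hC (hf.mem u hu) (h ▸ hg.mem w hw)
  have hpf : ∀ u ∈ U₁, U₁.piecewise f g u = f u := fun u hu => piecewise_eq_of_mem _ _ _ hu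
  have hpg : ∀ w ∈ U₂, U₁.piecewise f g w = g w := fun w hw =>
    piecewise_eq_of_notMem _ _ _ (disjoint_right.1 hU hw)
  refine ⟨fun w hw => ?_, fun u hu w hw huw => ?_, fun c hc => ?_⟩
  · rcases mem_union.1 hw with hw | hw
    · exact mem_union_left _ (hpf w hw ▸ hf.mem w hw)
    · exact mem_union_right _ (hpg w hw ▸ hg.mem w hw)
  · rcases mem_union.1 hu with hu | hu <;> rcases mem_union.1 hw with hw | hw
    · rw [hpf u hu, hpf w hw]
      exact hf.ne_of_adj u hu w hw huw
    · rw [hpf u hu, hpg w hw]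
      exact hfg u hu w hw
    · rw [hpg u hu, hpf w hw]
      exact (hfg w hw u hu).symm
    · rw [hpg u hu, hpg w hw]
      exact hg.ne_of_adj u hu w hw huw
  · rcases mem_union.1 hc with hc | hc
    · rw [colorClass_union_piecewise_left fun w hw =>
        (ne_of_mem_of_not_mem hc (disjoint_right.1 hC (hg.mem w hw))).symm]
      exact hf.card_colorClass_add c hc
    · rw [colorClass_union_piecewise_right hU
        fun w hw => (ne_of_mem_of_not_mem hc (disjoint_left.1 hC (hf.mem w hw))).symm]
      exact hg.card_colorClass_add c hc

lemma Movable.union_piecewise (h : Movable G U₁ f x c) (hg : ∀ w ∈ U₂, g w ≠ c) :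
    Movable G (U₁ ∪ U₂) (U₁.piecewise f g) x c := by
  intro w hw hwc
  have hw' : w ∈ colorClass (U₁ ∪ U₂) (U₁.piecewise f g) c := mem_colorClass.2 ⟨hw, hwc⟩
  rw [colorClass_union_piecewise_left hg, mem_colorClass] at hw'
  exact h w hw'.1 hw'.2

lemma MoveArc.union_piecewise (h : MoveArc G U₁ f a b) (hg : ∀ w ∈ U₂, g w ≠ b) :
    MoveArc G (U₁ ∪ U₂) (U₁.piecewise f g) a b := by
  obtain ⟨w, hw, rfl, hm⟩ := h
  exact ⟨w, mem_union_left _ hw, piecewise_eq_of_mem _ _ _ hw, hm.union_piecewise hg⟩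

lemma exists_isDeficientColoring_of_not_adj [Nonempty κ] (hU : #U = #C * s)
    (hG : ∀ u ∈ U, ∀ w ∈ U, ¬ G.Adj u w) : ∃ f : V → κ, IsDeficientColoring G U C s 0 f := by
  induction C using Finset.induction_on generalizing U with
  | empty =>
    obtain rfl : U = ∅ := by simpa using hU
    exact ⟨fun _ => Classical.arbitrary κ, by simp, by simp, by simp⟩
  | insert c C hc ih =>
    rw [card_insert_of_notMem hc, add_mul, one_mul] at hU
    obtain ⟨S, hS, hSs⟩ := exists_subset_card_eq (show s ≤ #U by omega)
    obtain ⟨f, hf⟩ := ih (U := U \ S) (by rw [card_sdiff_of_subset hS]; omega)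
      fun u hu w hw => hG u (sdiff_subset hu) w (sdiff_subset hw)
    have hconst : IsDeficientColoring G S {c} s 0 fun _ => c :=
      ⟨by simp, fun u hu w hw huw => absurd huw (hG u (hS hu) w (hS hw)), by simp [colorClass, hSs]⟩
    have := hconst.union hf disjoint_sdiff (disjoint_singleton_left.2 hc)
    rw [union_sdiff_of_subset hS, ← insert_eq] at this
    exact ⟨_, this⟩

end Coloring

section Counting

variable {V κ : Type*} {G : SimpleGraph V} {A B S T : Finset V} {𝒜 K 𝒯 : Finset κ}
  {s b : ℕ} {f : V → κ} {x y z : V} {c v X₀ : κ}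

lemma sum_degOn_comm : ∑ x ∈ S, degOn G T x = ∑ y ∈ T, degOn G S y := by
  simp only [degOn, fun y => filter_congr fun x (_ : x ∈ S) => G.adj_comm y x]
  exact sum_card_bipartiteAbove_eq_sum_card_bipartiteBelow G.Adj

lemma card_filter_mem_and (P : V → Prop) :
    #{z ∈ A | f z ∈ K ∧ P z} = ∑ c ∈ K, #{z ∈ colorClass A f c | P z} := by
  rw [card_eq_sum_card_fiberwise (f := f) (t := K) fun z hz => (mem_filter.1 hz).2.1]
  refine sum_congr rfl fun c hc => congrArg card ?_
  ext z
  simp only [mem_filter, mem_colorClass]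
  grind

/-- `z` is the only neighbour of `y` in its own colour class: once `z` leaves, `y` can take its
place. -/
def IsSolo (G : SimpleGraph V) (A : Finset V) (f : V → κ) (z y : V) : Prop :=
  G.Adj z y ∧ Movable G (A.erase z) f y (f z)

lemma two_le_degOn_add_card_isSolo (h : ¬ Movable G A f y c) :
    2 ≤ degOn G (colorClass A f c) y + #{z ∈ colorClass A f c | IsSolo G A f z y} := by
  obtain ⟨z, hzA, rfl, hyz⟩ : ∃ z ∈ A, f z = c ∧ G.Adj y z := by
    simpa only [Movable, not_forall, not_not, exists_prop] using h
  have hz : z ∈ ({w ∈ colorClass A f (f z) | G.Adj y w} : Finset V) := by simp [hzA, hyz]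
  by_cases hsolo : Movable G (A.erase z) f y (f z)
  · have hzsolo : z ∈ ({w ∈ colorClass A f (f z) | IsSolo G A f w y} : Finset V) := by
      exact mem_filter.2 ⟨mem_colorClass.2 ⟨hzA, rfl⟩, hyz.symm, hsolo⟩
    exact Nat.add_le_add (card_pos.2 ⟨z, hz⟩) (card_pos.2 ⟨z, hzsolo⟩)
  · obtain ⟨w, hw, hwz, hyw⟩ : ∃ w ∈ A.erase z, f w = f z ∧ G.Adj y w := by
      simpa only [Movable, not_forall, not_not, exists_prop] using hsolo
    have hw' : w ∈ ({w ∈ colorClass A f (f z) | G.Adj y w} : Finset V) := by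
      simp [mem_of_mem_erase hw, hwz, hyw]
    exact le_add_right (one_lt_card.2 ⟨w, hw', z, hz, ne_of_mem_erase hw⟩)

lemma card_le_degOn_add_one (hS : S ⊆ T) (hy : y ∈ S) (h : ∀ x ∈ S, x ≠ y → G.Adj y x) :
    #S ≤ degOn G T y + 1 := by
  rw [← card_erase_add_one hy]
  refine Nat.succ_le_succ (card_le_card fun x hx => mem_filter.2 ?_)
  obtain ⟨hxy, hxS⟩ := mem_erase.1 hx
  exact ⟨hS hxS, h x hxS hxy⟩

/-- The situation of a vertex that cannot be placed: `A` consists of the classes of the accessible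
colours `𝒜`, with class `v` one vertex short, and no vertex of the remainder `B`, which is one too
large for `b` further classes of size `s`, can be moved to a class in `A`. -/
structure IsSplit (G : SimpleGraph V) (A B : Finset V) (𝒜 : Finset κ) (s b : ℕ) (v : κ)
    (f : V → κ) : Prop where
  disjoint : Disjoint A B
  coloring : IsDeficientColoring G A 𝒜 s (Pi.single v 1) f
  root_mem : v ∈ 𝒜
  reachesIn : ∀ c ∈ 𝒜, ReachesIn (MoveArc G A f) 𝒜 c v
  not_movable : ∀ y ∈ B, ∀ c ∈ 𝒜, ¬ Movable G A f y c
  card_right : #B = b * s + 1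
  degree_lt : ∀ w ∈ A ∪ B, degOn G A w + degOn G B w < #𝒜 + b

namespace IsSplit

lemma degOn_right_add_card_lt (h : IsSplit G A B 𝒜 s b v f) (hx : x ∈ A ∪ B)
    (hK : ∀ c ∈ K, ¬ Movable G A f x c) : degOn G B x + #K < #𝒜 + b := by
  have := card_le_degOn hK
  have := h.degree_lt x hx
  omega

lemma exists_ne_root (h : IsSplit G A B 𝒜 s b v f) : ∃ c ∈ 𝒜, c ≠ v := by
  by_contra! hv
  have h𝒜 : 𝒜 = {v} := eq_singleton_iff_unique_mem.2 ⟨h.root_mem, hv⟩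
  have hA : #A + 1 = s := by simpa [h𝒜] using h.coloring.card_add_sum
  have hlower : #B ≤ ∑ y ∈ B, degOn G A y := by
    rw [card_eq_sum_ones]
    refine sum_le_sum fun y hy => ?_
    simpa [h𝒜] using card_le_degOn (h.not_movable y hy)
  have hupper : ∑ x ∈ A, degOn G B x ≤ #A * b := by
    refine sum_le_card_nsmul _ _ _ fun x hx => ?_
    have := h.degree_lt x (mem_union_left _ hx)
    rw [h𝒜, card_singleton] at this
    omega
  rw [sum_degOn_comm, h.card_right, ← hA] at hlower
  linarith

lemma card_colorClass (h : IsSplit G A B 𝒜 s b v f) (hc : c ∈ 𝒜) (hcv : c ≠ v) :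
    #(colorClass A f c) = s := by
  simpa [hcv] using h.coloring.card_colorClass_add c hc

lemma card_filter_mem (h : IsSplit G A B 𝒜 s b v f) (h𝒯 : 𝒯 ⊆ 𝒜) (hv : v ∉ 𝒯) :
    #{z ∈ A | f z ∈ 𝒯} = #𝒯 * s := by
  simpa [hv] using (h.coloring.restrict h𝒯).card_add_sum

lemma card_add_degOn_lt (h : IsSplit G A B 𝒜 s b v f) (h𝒯 : 𝒯 ⊆ 𝒜) (hy : y ∈ B) :
    #𝒯 + degOn G B y < #{z ∈ A | f z ∈ 𝒯 ∧ IsSolo G A f z y} + b := by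
  have hone : ∀ c ∈ 𝒜 \ 𝒯, 1 ≤ degOn G (colorClass A f c) y := fun c hc => by
    have htwo := two_le_degOn_add_card_isSolo (h.not_movable y hy c (sdiff_subset hc))
    have hle : #{z ∈ colorClass A f c | IsSolo G A f z y} ≤ degOn G (colorClass A f c) y :=
      card_le_card (monotone_filter_right _ fun z _ hz => hz.1.symm)
    omega
  have hdeg : ∑ c ∈ 𝒜, degOn G (colorClass A f c) y = degOn G A y := by
    simp only [degOn, ← card_filter_mem_and]
    exact congrArg card (filter_congr fun z hz => and_iff_right (h.coloring.mem z hz))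
  have htwo : #𝒯 * 2 ≤ ∑ c ∈ 𝒯, degOn G (colorClass A f c) y +
      #{z ∈ A | f z ∈ 𝒯 ∧ IsSolo G A f z y} := by
    rw [card_filter_mem_and, ← sum_add_distrib]
    exact card_nsmul_le_sum _ _ _ fun c hc =>
      two_le_degOn_add_card_isSolo (h.not_movable y hy c (h𝒯 hc))
  have hsdiff := card_nsmul_le_sum _ _ _ hone
  have hsum := sum_sdiff h𝒯 (f := fun c => degOn G (colorClass A f c) y)
  have hcard := card_sdiff_add_card_eq_card h𝒯
  have hlt := h.degree_lt y (mem_union_right _ hy)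
  rw [smul_eq_mul] at hsdiff
  omega

/- Count, over `y ∈ B`, the neighbours of `y` in a terminal class with the solo ones taken twice:
there are at least two for each `y`. A vertex of the class is counted at most `2 * b` times if
`#𝒯 ≤ b`, since it has at most `b` neighbours in `B` if it is solo and at most `b + #𝒯` if not. -/
lemma lt_card_of_isTerminal (h : IsSplit G A B 𝒜 s b v f)
    (h𝒯 : IsTerminal (MoveArc G A f) 𝒜 v X₀ 𝒯)
    (hstuck : ∀ z ∈ A, f z ∈ 𝒯 → ∀ y ∈ B, IsSolo G A f z y →
      ∀ c ∈ 𝒜.erase (f z), ¬ Movable G A f z c) : b < #𝒯 := by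
  by_contra! hb
  obtain ⟨c, hc⟩ := h𝒯.nonempty
  have hlower : #B * 2 ≤
      ∑ y ∈ B, (degOn G (colorClass A f c) y + #{z ∈ colorClass A f c | IsSolo G A f z y}) :=
    card_nsmul_le_sum _ _ _ fun y hy =>
      two_le_degOn_add_card_isSolo (h.not_movable y hy c (h𝒯.subset hc))
  have hupper : ∑ z ∈ colorClass A f c, (degOn G B z + #{y ∈ B | IsSolo G A f z y}) ≤
      #(colorClass A f c) * (2 * b) := by
    refine sum_le_card_nsmul _ _ _ fun z hz => ?_
    obtain ⟨hzA, rfl⟩ := mem_colorClass.1 hz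
    have hzAB := mem_union_left B hzA
    rcases ({y ∈ B | IsSolo G A f z y} : Finset V).eq_empty_or_nonempty with hempty | ⟨y, hy⟩
    · have hlt := h.degOn_right_add_card_lt hzAB (K := 𝒜.erase X₀ \ 𝒯) fun X hX hm =>
        h𝒯.not_arc (f z) hc X hX ⟨z, hzA, rfl, hm⟩
      have h𝒯' : 𝒯 ⊆ 𝒜.erase X₀ := subset_erase.2 ⟨h𝒯.subset, h𝒯.exit_notMem⟩
      have := card_sdiff_add_card_eq_card h𝒯'
      have := card_erase_add_one h𝒯.exit_mem
      rw [hempty, card_empty]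
      omega
    · have hsolo : #{y ∈ B | IsSolo G A f z y} ≤ degOn G B z :=
        card_le_card (monotone_filter_right _ fun y _ hy => hy.1)
      have hlt := h.degOn_right_add_card_lt hzAB
        (hstuck z hzA hc y (mem_filter.1 hy).1 (mem_filter.1 hy).2)
      have := card_erase_add_one (h𝒯.subset hc)
      omega
  have hswap : ∑ y ∈ B, #{z ∈ colorClass A f c | IsSolo G A f z y} =
      ∑ z ∈ colorClass A f c, #{y ∈ B | IsSolo G A f z y} :=
    (sum_card_bipartiteAbove_eq_sum_card_bipartiteBelow (IsSolo G A f)).symm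
  rw [sum_add_distrib, sum_degOn_comm, hswap, ← sum_add_distrib, h.card_right] at hlower
  rw [h.card_colorClass (h𝒯.subset hc) (ne_of_mem_of_not_mem hc h𝒯.root_notMem)] at hupper
  linarith

lemma card_le_sum_div_card_isSolo (h : IsSplit G A B 𝒜 s b v f) (h𝒯 : 𝒯 ⊆ 𝒜) (hb : b < #𝒯)
    (hy : y ∈ B) (hclique : ∀ z ∈ A, f z ∈ 𝒯 → IsSolo G A f z y →
      ∀ y' ∈ B, IsSolo G A f z y' → y' ≠ y → G.Adj y y') :
    (#𝒯 : ℚ) ≤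
      ∑ z ∈ A with f z ∈ 𝒯 ∧ IsSolo G A f z y, (b : ℚ) / #{y' ∈ B | IsSolo G A f z y'} := by
  have hcard : (#𝒯 : ℚ) + degOn G B y + 1 ≤ #{z ∈ A | f z ∈ 𝒯 ∧ IsSolo G A f z y} + b := by
    exact_mod_cast h.card_add_degOn_lt h𝒯 hy
  have hdeg : (degOn G B y : ℚ) + 1 ≤ b := by
    have := h.degOn_right_add_card_lt (mem_union_right _ hy) (h.not_movable y hy)
    norm_cast
    omega
  have hbT : (b : ℚ) + 1 ≤ #𝒯 := by exact_mod_cast hb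
  have hweight : ∀ z ∈ ({z ∈ A | f z ∈ 𝒯 ∧ IsSolo G A f z y} : Finset V),
      (b : ℚ) / (degOn G B y + 1) ≤ b / #{y' ∈ B | IsSolo G A f z y'} := by
    intro z hz
    obtain ⟨hzA, hz𝒯, hzy⟩ := mem_filter.1 hz
    have hyS : y ∈ ({y' ∈ B | IsSolo G A f z y'} : Finset V) := mem_filter.2 ⟨hy, hzy⟩
    have hle := card_le_degOn_add_one (G := G) (filter_subset _ _) hyS fun y' hy' =>
      hclique z hzA hz𝒯 hzy y' (mem_filter.1 hy').1 (mem_filter.1 hy').2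
    exact div_le_div_of_nonneg_left b.cast_nonneg (mod_cast card_pos.2 ⟨y, hyS⟩)
      (mod_cast hle)
  refine le_trans ?_ (card_nsmul_le_sum _ _ _ hweight)
  rw [nsmul_eq_mul, mul_div_assoc', le_div_iff₀ (by positivity)]
  nlinarith

/- Otherwise let every `z` with solo neighbours distribute the weight `b` evenly among them. As
these form a clique, `y` receives at least `b / (degOn G B y + 1)` from each, hence at least `#𝒯`
altogether; but the total weight is only `#𝒯 * s * b`. -/
lemma exists_not_adj_of_lt_card (h : IsSplit G A B 𝒜 s b v f) (h𝒯 : 𝒯 ⊆ 𝒜) (hv : v ∉ 𝒯)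
    (hb : b < #𝒯) : ∃ z ∈ A, f z ∈ 𝒯 ∧ ∃ y₁ ∈ B, ∃ y₂ ∈ B,
      IsSolo G A f z y₁ ∧ IsSolo G A f z y₂ ∧ y₂ ≠ y₁ ∧ ¬ G.Adj y₁ y₂ := by
  by_contra! hclique
  let w : V → ℚ := fun z => b / #{y ∈ B | IsSolo G A f z y}
  have hlower : ∀ y ∈ B, (#𝒯 : ℚ) ≤ ∑ z ∈ A with f z ∈ 𝒯 ∧ IsSolo G A f z y, w z := fun y hy =>
    h.card_le_sum_div_card_isSolo h𝒯 hb hy fun z hz hz𝒯 hzy y' hy' =>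
      hclique z hz hz𝒯 y hy y' hy' hzy
  have hupper : ∀ z, ∑ y ∈ B with IsSolo G A f z y, w z ≤ b := by
    intro z
    rw [sum_const, nsmul_eq_mul, mul_div_left_comm]
    exact mul_le_of_le_one_right b.cast_nonneg (div_self_le_one _)
  have hswap : ∑ y ∈ B, ∑ z ∈ A with f z ∈ 𝒯 ∧ IsSolo G A f z y, w z =
      ∑ z ∈ A with f z ∈ 𝒯, ∑ y ∈ B with IsSolo G A f z y, w z :=
    sum_comm' fun y z => by simp only [mem_filter]; tauto
  have hle : (#B : ℚ) * #𝒯 ≤ (#𝒯 * s : ℕ) * b := by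
    rw [← h.card_filter_mem h𝒯 hv, ← nsmul_eq_mul, ← nsmul_eq_mul]
    exact (card_nsmul_le_sum _ _ _ hlower).trans
      (hswap.trans_le (sum_le_card_nsmul _ _ _ fun z _ => hupper z))
  have h𝒯pos : 0 < #𝒯 := by omega
  rw [h.card_right] at hle
  norm_cast at hle
  nlinarith

lemma exists_isSolo (h : IsSplit G A B 𝒜 s b v f) : ∃ z ∈ A, ∃ y₁ ∈ B,
    f z ≠ v ∧ IsSolo G A f z y₁ ∧
    (∀ c ∈ 𝒜.erase (f z), ReachesIn (MoveArc G A f) (𝒜.erase (f z)) c v) ∧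
    ((∃ c ∈ 𝒜.erase (f z), Movable G A f z c) ∨
      (∀ c ∈ 𝒜.erase (f z), ¬ Movable G A f z c) ∧
        ∃ y₂ ∈ B, IsSolo G A f z y₂ ∧ y₂ ≠ y₁ ∧ ¬ G.Adj y₁ y₂) := by
  obtain ⟨X₀, 𝒯, h𝒯⟩ := exists_isTerminal h.root_mem h.reachesIn h.exists_ne_root
  have hne : ∀ z, f z ∈ 𝒯 → f z ≠ v := fun z hz => ne_of_mem_of_not_mem hz h𝒯.root_notMem
  by_cases hstuck : ∀ z ∈ A, f z ∈ 𝒯 → ∀ y ∈ B, IsSolo G A f z y →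
      ∀ c ∈ 𝒜.erase (f z), ¬ Movable G A f z c
  · obtain ⟨z, hz, hz𝒯, y₁, hy₁, y₂, hy₂, hzy₁, hzy₂, hy⟩ := h.exists_not_adj_of_lt_card
      h𝒯.subset h𝒯.root_notMem (h.lt_card_of_isTerminal h𝒯 hstuck)
    exact ⟨z, hz, y₁, hy₁, hne z hz𝒯, hzy₁, h𝒯.reachesIn_erase _ hz𝒯,
      .inr ⟨hstuck z hz hz𝒯 y₁ hy₁ hzy₁, y₂, hy₂, hzy₂, hy⟩⟩
  · push Not at hstuck
    obtain ⟨z, hz, hz𝒯, y₁, hy₁, hzy₁, hmov⟩ := hstuck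
    exact ⟨z, hz, y₁, hy₁, hne z hz𝒯, hzy₁, h𝒯.reachesIn_erase _ hz𝒯, .inl hmov⟩

end IsSplit

end Counting

section Improvement

variable {V κ : Type*} {G : SimpleGraph V} {U A B : Finset V} {C 𝒜 ℬ : Finset κ} {s b : ℕ}
  {f g : V → κ} {x y z y₁ y₂ : V} {c v : κ}

lemma IsSolo.movable_swap (h : IsSolo G A f z y₂) (hy₁ : y₁ ∉ A) (hadj : ¬ G.Adj y₁ y₂) :
    Movable G (insert y₁ (A.erase z)) (Function.update f y₁ (f z)) y₂ (f z) := by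
  intro w hw hwz hy₂w
  rcases mem_insert.1 hw with rfl | hw
  · exact hadj hy₂w.symm
  · rw [Function.update_of_ne (ne_of_mem_of_not_mem (mem_of_mem_erase hw) hy₁)] at hwz
    exact h.2 w hw hwz hy₂w

namespace IsSplit

lemma exists_equitable_insert (h : IsSplit G A B 𝒜 s b v f) (hz : z ∈ A) (hy₁ : y₁ ∈ B)
    (hsolo : IsSolo G A f z y₁)
    (hreach : ∀ c ∈ 𝒜.erase (f z), ReachesIn (MoveArc G A f) (𝒜.erase (f z)) c v)
    (hmov : ∃ c ∈ 𝒜.erase (f z), Movable G A f z c) :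
    ∃ f', IsDeficientColoring G (insert y₁ A) 𝒜 s 0 f' := by
  obtain ⟨c, hc, hm⟩ := hmov
  have hy₁A : y₁ ∉ A := disjoint_right.1 h.disjoint hy₁
  have hzy₁ : z ≠ y₁ := ne_of_mem_of_not_mem hz hy₁A
  have hf := h.coloring.swap hz hy₁A hsolo.2
  rw [← zero_add (Pi.single v 1)] at hf
  obtain ⟨f', hf'⟩ := hf.exists_insert (by simp [hzy₁]) (erase_subset _ _) hc
    (hm.swap (ne_of_mem_erase hc)) ((hreach c hc).swap hy₁A)
  rw [insert_comm, insert_erase hz] at hf'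
  exact ⟨f', hf'⟩

lemma reachesIn_swap (h : IsSplit G A B 𝒜 s b v f) (hzv : f z ≠ v) (hy : y ∉ A)
    (hreach : ∀ c ∈ 𝒜.erase (f z), ReachesIn (MoveArc G A f) (𝒜.erase (f z)) c v)
    (hstuck : ∀ c ∈ 𝒜.erase (f z), ¬ Movable G A f z c) (hc : c ∈ 𝒜) :
    ReachesIn (MoveArc G (insert y (A.erase z)) (Function.update f y (f z))) 𝒜 c v := by
  have hrest : ∀ c ∈ 𝒜.erase (f z),
      ReachesIn (MoveArc G (insert y (A.erase z)) (Function.update f y (f z))) 𝒜 c v :=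
    fun c hc => ((hreach c hc).swap hy).mono (erase_subset _ _) fun _ _ _ _ => id
  rcases eq_or_ne c (f z) with rfl | hcz
  · obtain ⟨e, he, hze, -⟩ := (h.reachesIn (f z) hc).exists_step hzv
    have harc := hze.swap (y := z) hy (fun hm => absurd hm (hstuck e he)) (ne_of_mem_erase he)
    exact (hrest e he).head harc hc (mem_of_mem_erase he)
  · exact hrest c (mem_erase.2 ⟨hcz, hc⟩)

/- Swapping `y₁` for `z` leaves every colour of `𝒜` accessible, and the colour of `y₂` becomes
accessible, because `y₂` can now be moved to the former class of `z`. -/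
lemma exists_accessible_ssuperset (h : IsSplit G A B 𝒜 s b v f) (hℬ : Disjoint 𝒜 ℬ)
    (hg : IsDeficientColoring G (B.erase y₁) ℬ s 0 g) (hz : z ∈ A) (hzv : f z ≠ v)
    (hreach : ∀ c ∈ 𝒜.erase (f z), ReachesIn (MoveArc G A f) (𝒜.erase (f z)) c v)
    (hstuck : ∀ c ∈ 𝒜.erase (f z), ¬ Movable G A f z c)
    (hy₁ : y₁ ∈ B) (hsolo₁ : IsSolo G A f z y₁) (hy₂ : y₂ ∈ B) (hsolo₂ : IsSolo G A f z y₂)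
    (hne : y₂ ≠ y₁) (hadj : ¬ G.Adj y₁ y₂) :
    ∃ f', IsDeficientColoring G ((A ∪ B).erase z) (𝒜 ∪ ℬ) s (Pi.single v 1) f' ∧
      𝒜 ⊂ accessible (MoveArc G ((A ∪ B).erase z) f') (𝒜 ∪ ℬ) v := by
  have hy₁A : y₁ ∉ A := disjoint_right.1 h.disjoint hy₁
  have hunion : insert y₁ (A.erase z) ∪ B.erase y₁ = (A ∪ B).erase z := by
    have := disjoint_left.1 h.disjoint hz
    grind
  have hdisj : Disjoint (insert y₁ (A.erase z)) (B.erase y₁) := by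
    have := h.disjoint
    grind [disjoint_left]
  have hg𝒜 : ∀ c ∈ 𝒜, ∀ w ∈ B.erase y₁, g w ≠ c := fun c hc w hw =>
    (ne_of_mem_of_not_mem hc (disjoint_right.1 hℬ (hg.mem w hw))).symm
  have hg' : IsDeficientColoring G (B.erase y₁) ℬ s (Pi.single v 1) g :=
    hg.congr_deficit fun c hc => by
      rw [Pi.single_eq_of_ne (ne_of_mem_of_not_mem h.root_mem (disjoint_right.1 hℬ hc)).symm,
        Pi.zero_apply]
  refine ⟨_, hunion ▸ (h.coloring.swap hz hy₁A hsolo₁.2).union hg' hdisj hℬ, ?_⟩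
  rw [← hunion]
  set f' := (insert y₁ (A.erase z)).piecewise (Function.update f y₁ (f z)) g
  have hmem : ∀ c ∈ 𝒜, c ∈ accessible
      (MoveArc G (insert y₁ (A.erase z) ∪ B.erase y₁) f') (𝒜 ∪ ℬ) v := fun c hc =>
    mem_accessible.2 ⟨mem_union_left _ hc, (h.reachesIn_swap hzv hy₁A hreach hstuck hc).mono
      subset_union_left fun a _ b hb hab => hab.union_piecewise (hg𝒜 b hb)⟩
  have hfz : f z ∈ 𝒜 := h.coloring.mem z hz
  have hy₂B : y₂ ∈ B.erase y₁ := mem_erase.2 ⟨hne, hy₂⟩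
  have hgy₂ : g y₂ ∈ ℬ := hg.mem y₂ hy₂B
  have harc : MoveArc G (insert y₁ (A.erase z) ∪ B.erase y₁) f' (g y₂) (f z) :=
    ⟨y₂, mem_union_right _ hy₂B, piecewise_eq_of_notMem _ _ _ (disjoint_right.1 hdisj hy₂B),
      (hsolo₂.movable_swap hy₁A hadj).union_piecewise (hg𝒜 _ hfz)⟩
  exact ssubset_iff_of_subset hmem |>.2 ⟨g y₂, mem_accessible_of_step harc
    (mem_union_right _ hgy₂) (hmem _ hfz), disjoint_right.1 hℬ hgy₂⟩

lemma exists_equitable_or_accessible_ssuperset (h : IsSplit G A B 𝒜 s b v f) (hℬ : Disjoint 𝒜 ℬ)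
    (hB : ∀ y ∈ B, ∃ g, IsDeficientColoring G (B.erase y) ℬ s 0 g) :
    (∃ f', IsDeficientColoring G (A ∪ B) (𝒜 ∪ ℬ) s 0 f') ∨
      ∃ z ∈ A, ∃ f', IsDeficientColoring G ((A ∪ B).erase z) (𝒜 ∪ ℬ) s (Pi.single v 1) f' ∧
        𝒜 ⊂ accessible (MoveArc G ((A ∪ B).erase z) f') (𝒜 ∪ ℬ) v := by
  obtain ⟨z, hz, y₁, hy₁, hzv, hsolo₁, hreach, hmov⟩ := h.exists_isSolo
  obtain ⟨g, hg⟩ := hB y₁ hy₁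
  rcases hmov with hmov | ⟨hstuck, y₂, hy₂, hsolo₂, hne, hadj⟩
  · obtain ⟨f', hf'⟩ := h.exists_equitable_insert hz hy₁ hsolo₁ hreach hmov
    have hdisj : Disjoint (insert y₁ A) (B.erase y₁) := by
      have := h.disjoint
      grind [disjoint_left]
    have hunion : insert y₁ A ∪ B.erase y₁ = A ∪ B := by grind
    exact .inl ⟨_, hunion ▸ hf'.union hg hdisj hℬ⟩
  · exact .inr ⟨z, hz, h.exists_accessible_ssuperset hℬ hg hz hzv hreach hstuck hy₁ hsolo₁ hy₂
      hsolo₂ hne hadj⟩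

end IsSplit

lemma IsDeficientColoring.isSplit (hf : IsDeficientColoring G (U.erase x) C s (Pi.single v 1) f)
    (hv : v ∈ C) (hU : #U = #C * s) (hdeg : ∀ w ∈ U, degOn G U w < #C)
    (h𝒜 : accessible (MoveArc G (U.erase x) f) C v = 𝒜)
    (hx : ∀ c ∈ 𝒜, ¬ Movable G (U.erase x) f x c) :
    IsSplit G {w ∈ U.erase x | f w ∈ 𝒜} (U \ {w ∈ U.erase x | f w ∈ 𝒜}) 𝒜 s #(C \ 𝒜) v f := by
  have h𝒜C : 𝒜 ⊆ C := h𝒜 ▸ accessible_subset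
  have hcard𝒜 := card_sdiff_add_card_eq_card h𝒜C
  have hv𝒜 : v ∈ 𝒜 := h𝒜 ▸ self_mem_accessible hv
  have hcol := hf.restrict h𝒜C
  have hAU : {w ∈ U.erase x | f w ∈ 𝒜} ⊆ U := (filter_subset _ _).trans (erase_subset _ _)
  refine ⟨disjoint_sdiff, hcol, hv𝒜, fun c hc => ?_, fun y hy c hc hm => ?_, ?_, fun w hw => ?_⟩
  · have hreach : ReachesIn (MoveArc G (U.erase x) f) 𝒜 c v := by
      subst h𝒜
      exact reachesIn_accessible hc
    refine hreach.mono subset_rfl fun a ha e _ ⟨w, hw, hwa, hm⟩ => ?_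
    exact ⟨w, mem_filter.2 ⟨hw, hwa ▸ ha⟩, hwa, hm.mono (filter_subset _ _)⟩
  · obtain ⟨hyU, hyA⟩ := mem_sdiff.1 hy
    have hm' : Movable G (U.erase x) f y c := hm.of_filter hc
    have hyx : y ≠ x := fun h => hx c hc (h ▸ hm')
    have hy' : y ∈ U.erase x := mem_erase.2 ⟨hyx, hyU⟩
    refine hyA (mem_filter.2 ⟨hy', ?_⟩)
    rw [← h𝒜] at hc ⊢
    exact mem_accessible_of_step ⟨y, hy', rfl, hm'⟩ (hf.mem y hy') hc
  · have hcardA := hcol.card_add_sum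
    have hcardU := card_sdiff_add_card_eq_card hAU
    rw [sum_pi_single', if_pos hv𝒜] at hcardA
    rw [← hcard𝒜, add_mul] at hU
    omega
  · rw [union_sdiff_of_subset hAU] at hw
    rw [← degOn_union disjoint_sdiff, union_sdiff_of_subset hAU, add_comm, hcard𝒜]
    exact hdeg w hw

lemma IsDeficientColoring.exists_equitable_or_accessible_ssuperset
    (hf : IsDeficientColoring G (U.erase x) C s (Pi.single v 1) f) (hx : x ∈ U) (hv : v ∈ C)
    (hU : #U = #C * s) (hdeg : ∀ w ∈ U, degOn G U w < #C)
    (ih : ∀ U' ⊂ U, ∀ C' : Finset κ, #U' = #C' * s → (∀ w ∈ U', degOn G U' w < #C') →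
      ∃ g, IsDeficientColoring G U' C' s 0 g) :
    (∃ f', IsDeficientColoring G U C s 0 f') ∨
      ∃ z ∈ U, ∃ f', IsDeficientColoring G (U.erase z) C s (Pi.single v 1) f' ∧
        accessible (MoveArc G (U.erase x) f) C v ⊂
          accessible (MoveArc G (U.erase z) f') C v := by
  set 𝒜 := accessible (MoveArc G (U.erase x) f) C v with h𝒜
  have h𝒜C : 𝒜 ⊆ C := accessible_subset
  by_cases hmov : ∃ c ∈ 𝒜, Movable G (U.erase x) f x c
  · obtain ⟨c, hc, hm⟩ := hmov
    rw [← zero_add (Pi.single v 1)] at hf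
    obtain ⟨f', hf'⟩ :=
      hf.exists_insert (notMem_erase x U) h𝒜C hc hm (reachesIn_accessible hc)
    exact .inl ⟨f', insert_erase hx ▸ hf'⟩
  · push Not at hmov
    have hsplit := hf.isSplit hv hU hdeg h𝒜.symm hmov
    have hAU : {w ∈ U.erase x | f w ∈ 𝒜} ⊆ U := (filter_subset _ _).trans (erase_subset _ _)
    set A : Finset V := {w ∈ U.erase x | f w ∈ 𝒜}
    have hstep := hsplit.exists_equitable_or_accessible_ssuperset disjoint_sdiff fun y hy => by
      refine ih _ ((erase_ssubset hy).trans_subset sdiff_subset) _ ?_ fun w hw => ?_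
      · rw [card_erase_of_mem hy, hsplit.card_right, Nat.add_sub_cancel]
      · have hwB : w ∈ U \ A := mem_of_mem_erase hw
        have hlt := hsplit.degOn_right_add_card_lt (mem_union_right _ hwB)
          (hsplit.not_movable w hwB)
        have hmono : degOn G ((U \ A).erase y) w ≤ degOn G (U \ A) w :=
          degOn_mono le_rfl (erase_subset _ _)
        omega
    rw [union_sdiff_of_subset hAU, union_sdiff_of_subset h𝒜C] at hstep
    exact hstep.imp_right fun ⟨z, hz, hz'⟩ => ⟨z, hAU hz, hz'⟩

lemma IsDeficientColoring.exists_equitable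
    (hf : IsDeficientColoring G (U.erase x) C s (Pi.single v 1) f) (hx : x ∈ U) (hv : v ∈ C)
    (hU : #U = #C * s) (hdeg : ∀ w ∈ U, degOn G U w < #C)
    (ih : ∀ U' ⊂ U, ∀ C' : Finset κ, #U' = #C' * s → (∀ w ∈ U', degOn G U' w < #C') →
      ∃ g, IsDeficientColoring G U' C' s 0 g) :
    ∃ f', IsDeficientColoring G U C s 0 f' := by
  induction hn : #C - #(accessible (MoveArc G (U.erase x) f) C v) using Nat.strong_induction_on
    generalizing x f with
  | h n ihn =>
    obtain hequitable | ⟨z, hz, f', hf', hssub⟩ :=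
      hf.exists_equitable_or_accessible_ssuperset hx hv hU hdeg ih
    · exact hequitable
    · have hlt := card_lt_card hssub
      have hle := card_le_card
        (accessible_subset : accessible (MoveArc G (U.erase z) f') C v ⊆ C)
      exact ihn _ (by omega) hf' hz rfl

/- Induction on `U`, and for fixed `U` on the number of vertices with which edges are incident:
delete the edges at `u`, colour, take `u` out of the colouring and put the edges back. -/
theorem exists_isDeficientColoring [Nonempty κ] (hU : #U = #C * s)
    (hdeg : ∀ w ∈ U, degOn G U w < #C) : ∃ f : V → κ, IsDeficientColoring G U C s 0 f := by
  induction U using Finset.strongInduction generalizing G C with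
  | H U ih =>
    suffices hT : ∀ T : Finset V, ∀ H ≤ G, (∀ u ∈ U, ∀ w ∈ U, H.Adj u w → u ∈ T) →
        ∃ f : V → κ, IsDeficientColoring H U C s 0 f from
      hT U G le_rfl fun u hu _ _ _ => hu
    intro T
    induction T using Finset.induction_on with
    | empty =>
      exact fun H _ hH => exists_isDeficientColoring_of_not_adj hU fun u hu w hw huw =>
        notMem_empty u (hH u hu w hw huw)
    | insert u T _ ihT =>
      intro H hHG hH
      have hdel : ∀ x y, (H.deleteIncidenceSet u).Adj x y ↔ H.Adj x y ∧ x ≠ u ∧ y ≠ u :=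
        fun x y => H.deleteIncidenceSet_adj
      obtain ⟨f, hf⟩ := ihT (H.deleteIncidenceSet u) ((H.deleteIncidenceSet_le u).trans hHG)
        fun x hx y hy hxy => mem_of_mem_insert_of_ne (hH x hx y hy ((hdel x y).1 hxy).1)
          ((hdel x y).1 hxy).2.1
      have hHdeg : ∀ w ∈ U, degOn H U w < #C := fun w hw =>
        (degOn_mono hHG subset_rfl).trans_lt (hdeg w hw)
      by_cases huU : u ∈ U
      · have hf' := (hf.erase huU).mono_graph (G := H) fun x hx y hy hxy =>
          (hdel x y).2 ⟨hxy, ne_of_mem_erase hx, ne_of_mem_erase hy⟩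
        rw [zero_add] at hf'
        exact hf'.exists_equitable huU (hf.mem u huU) hU hHdeg fun U' hU' C' => ih U' hU'
      · refine ⟨f, hf.mono_graph fun x hx y hy hxy => (hdel x y).2 ⟨hxy, ?_, ?_⟩⟩
        · exact ne_of_mem_of_not_mem hx huU
        · exact ne_of_mem_of_not_mem hy huU

end Improvement

section Factor

variable {V ι : Type*} [Fintype V] {G : SimpleGraph V}

theorem exists_equitable_coloring [Fintype ι] [G.LocallyFinite] {s : ℕ}
    (hcard : Fintype.card V = Fintype.card ι * s) (hdeg : ∀ v, G.degree v < Fintype.card ι) :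
    ∃ f : G.Coloring ι, ∀ c, #{v | f v = c} = s := by
  rcases isEmpty_or_nonempty ι with hι | hι
  · have hV : IsEmpty V := Fintype.card_eq_zero_iff.1 (by simpa using hcard)
    exact ⟨.ofIsEmpty, isEmptyElim⟩
  · have hdegOn : ∀ v, degOn G univ v = G.degree v := fun v => by
      rw [degOn, ← G.card_neighborFinset_eq_degree]
      congr 1
      ext w
      simp
    obtain ⟨f, hf⟩ := exists_isDeficientColoring (G := G) (U := univ) (C := (univ : Finset ι))
      (by simpa using hcard) fun v _ => by simpa [hdegOn] using hdeg v
    exact ⟨.mk f fun {u w} huw => hf.ne_of_adj u (mem_univ u) w (mem_univ w) huw,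
      fun c => hf.card_colorClass_add c (mem_univ c)⟩

theorem exists_clique_factor_of_coloring_compl {r : ℕ} (f : Gᶜ.Coloring ι)
    (hf : ∀ c, #{v | f v = c} = r) :
    ∃ 𝒯 : Finset (Finset V), (∀ S ∈ 𝒯, #S = r ∧ G.IsClique (S : Set V)) ∧
      ((𝒯 : Set (Finset V)).Pairwise fun S T => Disjoint S T) ∧ ∀ v : V, ∃ S ∈ 𝒯, v ∈ S := by
  refine ⟨univ.image fun u => ({v | f v = f u} : Finset V), ?_, ?_, fun v => ?_⟩
  · simp only [forall_mem_image, mem_univ, true_imp_iff]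
    refine fun u => ⟨hf (f u), ?_⟩
    have hclique := (SimpleGraph.isIndepSet_compl _).1 (f.isIndepSet_colorClass (f u))
    simpa [SimpleGraph.Coloring.colorClass] using hclique
  · rw [coe_image]
    rintro _ ⟨u, -, rfl⟩ _ ⟨w, -, rfl⟩ hne
    refine disjoint_filter.2 fun v _ hu hw => hne ?_
    simp only [← hu, hw]
  · exact ⟨_, mem_image_of_mem _ (mem_univ v), by simp⟩

lemma degree_compl_lt [DecidableRel G.Adj] {r k : ℕ} (hr : 0 < r) (hcard : Fintype.card V = r * k)
    {v : V} (hmin : (1 - 1 / (r : ℝ)) * Fintype.card V ≤ G.degree v) : Gᶜ.degree v < k := by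
  have hbound : (r * k : ℝ) - k ≤ G.degree v := by
    convert hmin using 1
    rw [hcard]
    push_cast
    field_simp
  have hle : r * k ≤ G.degree v + k := by
    exact_mod_cast sub_le_iff_le_add.1 hbound
  have hlt := G.degree_lt_card_verts v
  rw [G.degree_compl]
  omega

end Factor

end HajnalSzemeredi

/-- **Theorem (Hajnal–Szemerédi).** If `r ∣ n` and `δ(G) ≥ (1 - 1/r)n` for an
`n`-vertex graph `G`, then `G` has a `K_r`-factor: pairwise vertex-disjoint complete
subgraphs on `r` vertices covering every vertex. -/
theorem hajnal_szemeredi {V : Type*} [Fintype V]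
    (G : SimpleGraph V) [DecidableRel G.Adj]
    (r : ℕ) (hr : 1 ≤ r) (hdvd : r ∣ Fintype.card V)
    (hmin : ∀ v : V, (1 - 1 / (r : ℝ)) * (Fintype.card V) ≤ (G.degree v : ℝ)) :
    ∃ 𝒯 : Finset (Finset V),
      (∀ S ∈ 𝒯, S.card = r ∧ G.IsClique (S : Set V)) ∧
      ((𝒯 : Set (Finset V)).Pairwise fun S T => Disjoint S T) ∧
      ∀ v : V, ∃ S ∈ 𝒯, v ∈ S := by
  classical
  obtain ⟨k, hk⟩ := hdvd
  obtain ⟨f, hf⟩ := HajnalSzemeredi.exists_equitable_coloring (ι := Fin k) (G := Gᶜ) (s := r)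
    (by rw [hk, Fintype.card_fin, mul_comm])
    fun v => (Fintype.card_fin k).symm ▸ HajnalSzemeredi.degree_compl_lt hr hk (hmin v)
  exact HajnalSzemeredi.exists_clique_factor_of_coloring_compl f hf
end
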